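/- arXiv:1103.5519 — 2 statements merged into one kernel-verified Lean document; each statement's English description precedes it below -/
import Mathlib

section
/- Let L be an odd unimodular lattice in dimension 36 having minimum norm at least 3. Then there exist nonnegative integers α and β such that: the number of vectors of L of norm 3 equals 960 − α, the number of vectors of L of norm 4 equals 42840 + 4096β, the number of vectors of the shadow S(L) of norm 1 equals β, and the number of vectors of S(L) of norm 3 equals α − 60β. -/
open scoped RealInnerProductSpace

noncomputable section

/-- The norm `(x, x)` of a vector `x ∈ ℝⁿ` (squared Euclidean length). -/
def normOf {n : ℕ} (x : EuclideanSpace ℝ (Fin n)) : ℝ := ⟪x, x⟫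

/-- The dual `L* = {x ∈ ℝⁿ : (x,y) ∈ ℤ for all y ∈ L}` of a set of vectors. -/
def dualSet {n : ℕ} (L : Set (EuclideanSpace ℝ (Fin n))) : Set (EuclideanSpace ℝ (Fin n)) :=
  {x | ∀ y ∈ L, ∃ m : ℤ, ⟪x, y⟫ = (m : ℝ)}

/-- `L` is a unimodular lattice: `L = L*`. -/
def IsUnimodularLattice {n : ℕ} (L : Set (EuclideanSpace ℝ (Fin n))) : Prop :=
  L = dualSet L

/-- `L` is odd: some vector of `L` has odd (integral) norm. -/
def IsOddLattice {n : ℕ} (L : Set (EuclideanSpace ℝ (Fin n))) : Prop :=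
  ∃ x ∈ L, ∃ m : ℤ, Odd m ∧ normOf x = (m : ℝ)

/-- The even sublattice `L₀ = {x ∈ L : (x,x) even}`. -/
def evenSublattice {n : ℕ} (L : Set (EuclideanSpace ℝ (Fin n))) :
    Set (EuclideanSpace ℝ (Fin n)) :=
  {x | x ∈ L ∧ ∃ m : ℤ, normOf x = 2 * (m : ℝ)}

/-- The shadow `S(L) = L₀* \ L`. -/
def shadow {n : ℕ} (L : Set (EuclideanSpace ℝ (Fin n))) : Set (EuclideanSpace ℝ (Fin n)) :=
  dualSet (evenSublattice L) \ L

/-- `L` has minimum norm `r`: `r` is the least norm among nonzero vectors of `L`. -/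
def HasMinNorm {n : ℕ} (L : Set (EuclideanSpace ℝ (Fin n))) (r : ℝ) : Prop :=
  IsLeast {s : ℝ | ∃ x ∈ L, x ≠ 0 ∧ normOf x = s} r

/-- The shadow `S(L)` has minimum norm `r`. -/
def HasShadowMinNorm {n : ℕ} (L : Set (EuclideanSpace ℝ (Fin n))) (r : ℝ) : Prop :=
  IsLeast {s : ℝ | ∃ x ∈ shadow L, normOf x = s} r

/-- `σ(L) = r`, i.e. `4 · min(S(L)) = r`. -/
def HasSigma {n : ℕ} (L : Set (EuclideanSpace ℝ (Fin n))) (r : ℝ) : Prop :=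
  ∃ s : ℝ, HasShadowMinNorm L s ∧ r = 4 * s

/-- The number of vectors of norm `r` in `L`; when `L` has minimum norm `r`,
this is the kissing number of `L`. -/
def numVecsOfNorm {n : ℕ} (L : Set (EuclideanSpace ℝ (Fin n))) (r : ℝ) : ℕ :=
  Set.ncard {x ∈ L | normOf x = r}

section

open UpperHalfPlane ModularForm SlashInvariantForm ModularFormClass MatrixGroups EisensteinSeries

lemma e4c2 : (qExpansion 1 E₄).coeff 2 = 2160 := by
  norm_num [E_qExpansion_coeff _ ⟨2, rfl⟩, show bernoulli 4 = -1 / 30 by decide +kernel,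
    show ArithmeticFunction.sigma 3 2 = 9 by decide +kernel]

lemma e6c2 : (qExpansion 1 E₆).coeff 2 = -16632 := by
  norm_num [E_qExpansion_coeff _ ⟨3, rfl⟩, show bernoulli 6 = 1 / 42 by decide +kernel,
    show ArithmeticFunction.sigma 5 2 = 33 by decide +kernel]

/-- product expansions up to order two -/
lemma ps_mul {p r : PowerSeries ℂ} {a b c a' b' c' : ℂ}
    (hp : p.coeff 0 = a ∧ p.coeff 1 = b ∧ p.coeff 2 = c)
    (hr : r.coeff 0 = a' ∧ r.coeff 1 = b' ∧ r.coeff 2 = c') :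
    (p * r).coeff 0 = a * a' ∧ (p * r).coeff 1 = a * b' + b * a' ∧
      (p * r).coeff 2 = a * c' + b * b' + c * a' := by
  obtain ⟨h0, h1, h2⟩ := hp
  obtain ⟨k0, k1, k2⟩ := hr
  refine ⟨?_, ?_, ?_⟩ <;>
  simp only [PowerSeries.coeff_mul, Finset.Nat.antidiagonal_succ, Finset.Nat.antidiagonal_zero,
    Finset.sum_cons, Finset.map_cons, Finset.map_singleton, Finset.sum_singleton,
    Function.Embedding.prodMap, Function.Embedding.coeFn_mk, Prod.map, h0, h1, h2, k0, k1, k2,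
    Function.Embedding.refl_apply] <;>
  (try simp [h0, h1, h2, k0, k1, k2, ← PowerSeries.coeff_zero_eq_constantCoeff_apply]) <;> (try ring)

lemma rel_aux {k : ℕ} (hk : k / 12 = 1) (G F₁ F₂ : ModularForm 𝒮ℒ (k : ℤ)) {b₁ c₁ b₂ c₂ : ℂ}
    (h₁ : (qExpansion 1 F₁).coeff 0 = 1 ∧ (qExpansion 1 F₁).coeff 1 = b₁ ∧
      (qExpansion 1 F₁).coeff 2 = c₁)
    (h₂ : (qExpansion 1 F₂).coeff 0 = 1 ∧ (qExpansion 1 F₂).coeff 1 = b₂ ∧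
      (qExpansion 1 F₂).coeff 2 = c₂) (hb : b₁ ≠ b₂) {g₀ g₁ g₂ : ℂ}
    (hG : (qExpansion 1 G).coeff 0 = g₀ ∧ (qExpansion 1 G).coeff 1 = g₁ ∧
      (qExpansion 1 G).coeff 2 = g₂) :
    g₂ = (g₁ - b₁ * g₀) / (b₂ - b₁) * (c₂ - c₁) + g₀ * c₁ := by
  have hb' : b₂ - b₁ ≠ 0 := sub_ne_zero.mpr hb.symm
  set d := (g₁ - b₁ * g₀) / (b₂ - b₁) with hd
  have hd' : d * (b₂ - b₁) = g₁ - b₁ * g₀ := by rw [hd]; field_simp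
  let H : ModularForm 𝒮ℒ (k : ℤ) := G - ((g₀ - d) • F₁ + d • F₂)
  have hq : qExpansion 1 H = qExpansion 1 G -
      ((g₀ - d) • qExpansion 1 F₁ + d • qExpansion 1 F₂) := by
    rw [← ModularForm.qExpansion_smul one_pos one_mem_strictPeriods_SL,
      ← ModularForm.qExpansion_smul one_pos one_mem_strictPeriods_SL]
    have e1 := ModularForm.qExpansion_add one_pos one_mem_strictPeriods_SL ((g₀ - d) • F₁) (d • F₂)
    have e2 := ModularForm.qExpansion_sub one_pos one_mem_strictPeriods_SL G
      ((g₀ - d) • F₁ + d • F₂)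
    simp only [FunLike.coe_sub, FunLike.coe_add, FunLike.coe_smul, H] at *
    rw [e2, e1]
  obtain ⟨h10, h11, h12⟩ := h₁
  obtain ⟨h20, h21, h22⟩ := h₂
  obtain ⟨hg0, hg1, hg2⟩ := hG
  have hH : H = 0 := by
    apply sturm_bound_levelOne_nat
    rw [hk]
    refine lt_of_lt_of_le (b := ((2 : ℕ) : ℕ∞)) (by norm_num) ?_
    apply PowerSeries.nat_le_order
    intro i hi
    rw [hq]
    interval_cases i
    · simp only [map_sub, map_add, PowerSeries.coeff_smul, h10, h20, hg0, smul_eq_mul]; ring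
    · simp only [map_sub, map_add, PowerSeries.coeff_smul, h11, h21, hg1, smul_eq_mul]
      linear_combination -hd'
  have h2 : (qExpansion 1 H).coeff 2 = 0 := by
    rw [hH]
    simp [qExpansion_zero]
  rw [hq] at h2
  simp only [map_sub, map_add, PowerSeries.coeff_smul, h12, h22, hg2, smul_eq_mul] at h2
  linear_combination h2

lemma e4c : (qExpansion 1 E₄).coeff 0 = 1 ∧ (qExpansion 1 E₄).coeff 1 = 240 ∧
    (qExpansion 1 E₄).coeff 2 = 2160 :=
  ⟨E_qExpansion_coeff_zero _ ⟨2, rfl⟩, E₄_qExpansion_coeff_one, e4c2⟩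

lemma e6c : (qExpansion 1 E₆).coeff 0 = 1 ∧ (qExpansion 1 E₆).coeff 1 = -504 ∧
    (qExpansion 1 E₆).coeff 2 = -16632 :=
  ⟨E_qExpansion_coeff_zero _ ⟨3, rfl⟩, E₆_qExpansion_coeff_one, e6c2⟩

lemma mf_mul {k₁ k₂ : ℤ} (f : ModularForm 𝒮ℒ k₁) (g : ModularForm 𝒮ℒ k₂) {a b c a' b' c' : ℂ}
    (hp : (qExpansion 1 f).coeff 0 = a ∧ (qExpansion 1 f).coeff 1 = b ∧
      (qExpansion 1 f).coeff 2 = c)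
    (hr : (qExpansion 1 g).coeff 0 = a' ∧ (qExpansion 1 g).coeff 1 = b' ∧
      (qExpansion 1 g).coeff 2 = c') :
    (qExpansion 1 (f.mul g)).coeff 0 = a * a' ∧
    (qExpansion 1 (f.mul g)).coeff 1 = a * b' + b * a' ∧
      (qExpansion 1 (f.mul g)).coeff 2 = a * c' + b * b' + c * a' := by
  rw [ModularForm.qExpansion_mul one_pos one_mem_strictPeriods_SL f g]
  exact ps_mul hp hr

lemma rel20 (G : ModularForm 𝒮ℒ (20 : ℤ)) {g₀ g₁ g₂ : ℂ}
    (hG : (qExpansion 1 G).coeff 0 = g₀ ∧ (qExpansion 1 G).coeff 1 = g₁ ∧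
      (qExpansion 1 G).coeff 2 = g₂) : g₂ = 456 * g₁ + 39600 * g₀ := by
  have A := mf_mul _ _ e4c e4c
  have B := mf_mul _ _ (mf_mul _ _ A A) e4c
  have C := mf_mul _ _ A (mf_mul _ _ e6c e6c)
  have := rel_aux (k := 20) rfl G (((E₄.mul E₄).mul (E₄.mul E₄)).mul E₄)
    ((E₄.mul E₄).mul (E₆.mul E₆)) (by simpa using B) (by simpa using C) (by norm_num) hG
  rw [this]; ring

lemma rel22 (G : ModularForm 𝒮ℒ (22 : ℤ)) {g₀ g₁ g₂ : ℂ}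
    (hG : (qExpansion 1 G).coeff 0 = g₀ ∧ (qExpansion 1 G).coeff 1 = g₁ ∧
      (qExpansion 1 G).coeff 2 = g₂) : g₂ = -288 * g₁ - 14904 * g₀ := by
  have A := mf_mul _ _ e4c e4c
  have B := mf_mul _ _ (mf_mul _ _ A A) e6c
  have C := mf_mul _ _ (mf_mul _ _ e4c e6c) (mf_mul _ _ e6c e6c)
  have := rel_aux (k := 22) rfl G (((E₄.mul E₄).mul (E₄.mul E₄)).mul E₆)
    ((E₄.mul E₆).mul (E₆.mul E₆)) (by simpa using B) (by simpa using C) (by norm_num) hG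
  rw [this]; ring

end

section

open UpperHalfPlane ModularForm SlashInvariantForm ModularFormClass MatrixGroups EisensteinSeries
open Filter Asymptotics Topology

/-- The local parameter `exp (π i τ)`. -/
def sPar (τ : ℂ) : ℂ := Complex.exp (Real.pi * Complex.I * τ)

/-- The filter of neighbourhoods of `i ∞`. -/
def imInf : Filter ℂ := Filter.comap Complex.im Filter.atTop

/-- `f` has expansion `a₀ + a₁ s + … + a₄ s⁴ + O(s⁵)`. -/
def HasE (f : ℂ → ℂ) (a₀ a₁ a₂ a₃ a₄ : ℂ) : Prop :=
  (fun τ => f τ - (a₀ + a₁ * sPar τ + a₂ * sPar τ ^ 2 + a₃ * sPar τ ^ 3 + a₄ * sPar τ ^ 4))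
    =O[imInf] (fun τ => sPar τ ^ 5)

lemma norm_sPar (τ : ℂ) : ‖sPar τ‖ = Real.exp (-(Real.pi * τ.im)) := by
  rw [sPar, Complex.norm_exp]; simp

lemma sPar_tendsto : Tendsto sPar imInf (𝓝 0) := by
  rw [tendsto_zero_iff_norm_tendsto_zero]
  simp_rw [norm_sPar]
  refine Real.tendsto_exp_atBot.comp ?_
  refine tendsto_neg_atTop_atBot.comp ?_
  exact (tendsto_comap).const_mul_atTop Real.pi_pos

lemma sPar_ne (τ : ℂ) : sPar τ ≠ 0 := Complex.exp_ne_zero _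

instance imInf_neBot : imInf.NeBot := by
  refine Filter.comap_neBot fun t ht => ?_
  obtain ⟨a, ha⟩ := mem_atTop_sets.mp ht
  exact ⟨⟨0, a⟩, ha a le_rfl⟩

lemma poly_bdd {p : ℂ → ℂ} (hp : Continuous p) :
    (fun τ => p (sPar τ)) =O[imInf] (fun _ => (1 : ℂ)) :=
  ((hp.tendsto 0).comp sPar_tendsto).isBigO_one ℂ

lemma HasE.bdd {f : ℂ → ℂ} {a₀ a₁ a₂ a₃ a₄ : ℂ} (h : HasE f a₀ a₁ a₂ a₃ a₄) :
    f =O[imInf] (fun _ => (1 : ℂ)) := by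
  have h1 := IsBigO.trans h (poly_bdd (p := fun s => s ^ 5) (by fun_prop))
  have h2 := poly_bdd (p := fun s => a₀ + a₁ * s + a₂ * s ^ 2 + a₃ * s ^ 3 + a₄ * s ^ 4)
    (by fun_prop)
  simpa using h1.add h2

lemma HasE.add {f g : ℂ → ℂ} {a₀ a₁ a₂ a₃ a₄ b₀ b₁ b₂ b₃ b₄ : ℂ}
    (hf : HasE f a₀ a₁ a₂ a₃ a₄) (hg : HasE g b₀ b₁ b₂ b₃ b₄) :
    HasE (fun τ => f τ + g τ) (a₀ + b₀) (a₁ + b₁) (a₂ + b₂) (a₃ + b₃) (a₄ + b₄) := by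
  refine (IsBigO.add hf hg).congr_left fun τ => ?_
  ring

lemma HasE.sub {f g : ℂ → ℂ} {a₀ a₁ a₂ a₃ a₄ b₀ b₁ b₂ b₃ b₄ : ℂ}
    (hf : HasE f a₀ a₁ a₂ a₃ a₄) (hg : HasE g b₀ b₁ b₂ b₃ b₄) :
    HasE (fun τ => f τ - g τ) (a₀ - b₀) (a₁ - b₁) (a₂ - b₂) (a₃ - b₃) (a₄ - b₄) := by
  refine (IsBigO.sub hf hg).congr_left fun τ => ?_
  ring

lemma HasE.mul {f g : ℂ → ℂ} {a₀ a₁ a₂ a₃ a₄ b₀ b₁ b₂ b₃ b₄ : ℂ}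
    (hf : HasE f a₀ a₁ a₂ a₃ a₄) (hg : HasE g b₀ b₁ b₂ b₃ b₄) :
    HasE (fun τ => f τ * g τ) (a₀ * b₀) (a₀ * b₁ + a₁ * b₀) (a₀ * b₂ + a₁ * b₁ + a₂ * b₀)
      (a₀ * b₃ + a₁ * b₂ + a₂ * b₁ + a₃ * b₀)
      (a₀ * b₄ + a₁ * b₃ + a₂ * b₂ + a₃ * b₁ + a₄ * b₀) := by
  have h1 := IsBigO.mul hf hg.bdd
  have h2 := (poly_bdd (p := fun s => a₀ + a₁ * s + a₂ * s ^ 2 + a₃ * s ^ 3 + a₄ * s ^ 4)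
    (by fun_prop)).mul hg
  have h3 := (isBigO_refl (fun τ => sPar τ ^ 5) imInf).mul (poly_bdd (p := fun s =>
    (a₁ * b₄ + a₂ * b₃ + a₃ * b₂ + a₄ * b₁) + (a₂ * b₄ + a₃ * b₃ + a₄ * b₂) * s +
    (a₃ * b₄ + a₄ * b₃) * s ^ 2 + a₄ * b₄ * s ^ 3) (by fun_prop))
  simp only [mul_one, one_mul] at h1 h2 h3
  refine ((h1.add h2).add h3).congr_left fun τ => ?_
  ring

lemma HasE.cast {f : ℂ → ℂ} {a₀ a₁ a₂ a₃ a₄ b₀ b₁ b₂ b₃ b₄ : ℂ}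
    (hf : HasE f a₀ a₁ a₂ a₃ a₄) (h₀ : a₀ = b₀) (h₁ : a₁ = b₁) (h₂ : a₂ = b₂) (h₃ : a₃ = b₃)
    (h₄ : a₄ = b₄) : HasE f b₀ b₁ b₂ b₃ b₄ := by
  subst h₀ h₁ h₂ h₃ h₄; exact hf

lemma HasE.congr {f g : ℂ → ℂ} {a₀ a₁ a₂ a₃ a₄ : ℂ}
    (hf : HasE f a₀ a₁ a₂ a₃ a₄) (h : ∀ τ : ℂ, 0 < τ.im → f τ = g τ) :
    HasE g a₀ a₁ a₂ a₃ a₄ := by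
  refine IsBigO.congr' hf ?_ EventuallyEq.rfl
  have : ∀ᶠ τ in imInf, 0 < τ.im := tendsto_comap.eventually (eventually_gt_atTop 0)
  filter_upwards [this] with τ hτ
  rw [h τ hτ]

lemma hasE_sPar : HasE sPar 0 1 0 0 0 := by
  refine (isBigO_zero (fun τ => sPar τ ^ 5) imInf).congr_left fun τ => ?_
  ring

/-- one step of uniqueness -/
lemma step_zero {b : ℂ → ℂ} {n : ℕ} {c : ℂ} (hb : Continuous b)
    (h : (fun τ => sPar τ ^ n * (c + sPar τ * b (sPar τ))) =O[imInf] (fun τ => sPar τ ^ (n + 1))) :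
    c = 0 := by
  have h1 : (fun τ => c + sPar τ * b (sPar τ)) =O[imInf] sPar := by
    refine (h.mul (isBigO_refl (fun τ => (sPar τ ^ n)⁻¹) imInf)).congr (fun τ => ?_) (fun τ => ?_)
    · have := sPar_ne τ
      field_simp
    · have := sPar_ne τ
      field_simp
      try ring
  have h2 := h1.trans_tendsto sPar_tendsto
  have h3 : Tendsto (fun τ => c + sPar τ * b (sPar τ)) imInf (𝓝 (c + 0 * b 0)) :=
    tendsto_const_nhds.add (sPar_tendsto.mul ((hb.tendsto 0).comp sPar_tendsto))
  simpa using tendsto_nhds_unique h3 h2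

lemma pow_bigO {m n : ℕ} (h : m ≤ n) :
    (fun τ => sPar τ ^ n) =O[imInf] (fun τ => sPar τ ^ m) := by
  obtain ⟨k, rfl⟩ := Nat.exists_eq_add_of_le h
  have := (isBigO_refl (fun τ => sPar τ ^ m) imInf).mul (poly_bdd (p := fun s => s ^ k)
    (by fun_prop))
  simpa [pow_add] using this

lemma HasE.eq_zero {a₀ a₁ a₂ a₃ a₄ : ℂ} (h : HasE (fun _ => 0) a₀ a₁ a₂ a₃ a₄) :
    a₀ = 0 ∧ a₁ = 0 ∧ a₂ = 0 ∧ a₃ = 0 ∧ a₄ = 0 := by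
  have h := IsBigO.neg_left h
  have e0 : a₀ = 0 := by
    refine step_zero (n := 0)
      (b := fun s => a₁ + a₂ * s + a₃ * s ^ 2 + a₄ * s ^ 3) (by fun_prop)
      ((h.trans (pow_bigO (m := 1) (by norm_num))).congr_left fun τ => ?_)
    ring
  subst e0
  have e1 : a₁ = 0 := by
    refine step_zero (n := 1)
      (b := fun s => a₂ + a₃ * s + a₄ * s ^ 2) (by fun_prop)
      ((h.trans (pow_bigO (m := 2) (by norm_num))).congr_left fun τ => ?_)
    ring
  subst e1
  have e2 : a₂ = 0 := by
    refine step_zero (n := 2)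
      (b := fun s => a₃ + a₄ * s) (by fun_prop)
      ((h.trans (pow_bigO (m := 3) (by norm_num))).congr_left fun τ => ?_)
    ring
  subst e2
  have e3 : a₃ = 0 := by
    refine step_zero (n := 3)
      (b := fun s => a₄) (by fun_prop)
      ((h.trans (pow_bigO (m := 4) (by norm_num))).congr_left fun τ => ?_)
    ring
  subst e3
  have e4 : a₄ = 0 := by
    refine step_zero (n := 4)
      (b := fun s => 0) (by fun_prop)
      ((h.trans (pow_bigO (m := 5) (by norm_num))).congr_left fun τ => ?_)
    ring
  exact ⟨rfl, rfl, rfl, rfl, e4⟩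

lemma HasE.unique {f : ℂ → ℂ} {a₀ a₁ a₂ a₃ a₄ b₀ b₁ b₂ b₃ b₄ : ℂ}
    (hf : HasE f a₀ a₁ a₂ a₃ a₄) (hg : HasE f b₀ b₁ b₂ b₃ b₄) :
    a₀ = b₀ ∧ a₁ = b₁ ∧ a₂ = b₂ ∧ a₃ = b₃ ∧ a₄ = b₄ := by
  have h := hf.sub hg
  simp only [sub_self] at h
  obtain ⟨h0, h1, h2, h3, h4⟩ := h.eq_zero
  exact ⟨sub_eq_zero.mp h0, sub_eq_zero.mp h1, sub_eq_zero.mp h2, sub_eq_zero.mp h3,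
    sub_eq_zero.mp h4⟩

/-- Expansion of a series `∑ c i * s ^ N i`. -/
lemma hasE_of_hasSum {ι : Type*} {f : ℂ → ℂ} (c : ι → ℂ) (N : ι → ℕ) (U : Finset ι)
    (hU : ∀ i, N i < 5 → i ∈ U)
    (h : ∀ τ : ℂ, 0 < τ.im → HasSum (fun i => c i * sPar τ ^ N i) (f τ)) :
    HasE f (∑ i ∈ U with N i = 0, c i) (∑ i ∈ U with N i = 1, c i) (∑ i ∈ U with N i = 2, c i)
      (∑ i ∈ U with N i = 3, c i) (∑ i ∈ U with N i = 4, c i) := by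
  classical
  set r : ℝ := ‖sPar Complex.I‖ with hr
  have hr0 : 0 < r := norm_pos_iff.mpr (sPar_ne _)
  have hs0 : Summable (fun i => ‖c i‖ * r ^ N i) := by
    simpa [norm_mul, norm_pow] using (h Complex.I (by simp)).summable.norm
  set M : ℝ := ∑' i, ‖c i‖ * r ^ N i with hM
  refine IsBigO.of_bound (M * (r ^ 5)⁻¹) ?_
  have ev : ∀ᶠ τ in imInf, 1 ≤ τ.im := tendsto_comap.eventually (eventually_ge_atTop 1)
  filter_upwards [ev] with τ hτ
  have hle : ‖sPar τ‖ ≤ r := by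
    rw [hr, norm_sPar, norm_sPar]
    apply Real.exp_le_exp.mpr
    have := Real.pi_pos
    simp only [Complex.I_im]
    nlinarith
  have hsum := h τ (by linarith)
  -- the finite part
  have hfin : HasSum (fun i => if N i < 5 then c i * sPar τ ^ N i else 0)
      (∑ i ∈ U, if N i < 5 then c i * sPar τ ^ N i else 0) := by
    refine hasSum_sum_of_ne_finset_zero fun i hi => ?_
    rw [if_neg]
    exact fun h => hi (hU i h)
  have hsub := hsum.sub hfin
  have hpoly : (∑ i ∈ U, if N i < 5 then c i * sPar τ ^ N i else 0) =
      (∑ i ∈ U with N i = 0, c i) + (∑ i ∈ U with N i = 1, c i) * sPar τ +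
      (∑ i ∈ U with N i = 2, c i) * sPar τ ^ 2 +
      (∑ i ∈ U with N i = 3, c i) * sPar τ ^ 3 + (∑ i ∈ U with N i = 4, c i) * sPar τ ^ 4 := by
    simp only [Finset.sum_filter, Finset.sum_mul, ← Finset.sum_add_distrib]
    refine Finset.sum_congr rfl fun i _ => ?_
    by_cases h5 : N i < 5
    · rw [if_pos h5]
      interval_cases N i <;> simp
    · have : ∀ k < 5, N i ≠ k := fun k hk => by omega
      simp [h5, this]
  rw [← hpoly, ← hsub.tsum_eq]
  have hterm : ∀ i, ‖c i * sPar τ ^ N i - (if N i < 5 then c i * sPar τ ^ N i else 0)‖ ≤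
      (‖c i‖ * r ^ N i) * ((r ^ 5)⁻¹ * ‖sPar τ‖ ^ 5) := by
    intro i
    by_cases h5 : N i < 5
    · rw [if_pos h5]; simp; positivity
    · rw [if_neg h5]
      obtain ⟨k, hk⟩ := Nat.exists_eq_add_of_le (not_lt.mp h5)
      rw [hk, sub_zero, norm_mul, norm_pow, pow_add, pow_add]
      have h6 : ‖sPar τ‖ ^ k ≤ r ^ k := pow_le_pow_left₀ (norm_nonneg _) hle k
      calc ‖c i‖ * (‖sPar τ‖ ^ 5 * ‖sPar τ‖ ^ k) ≤ ‖c i‖ * (‖sPar τ‖ ^ 5 * r ^ k) := by gcongr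
        _ = _ := by field_simp
  have := tsum_of_norm_bounded ((hs0.hasSum).mul_right ((r ^ 5)⁻¹ * ‖sPar τ‖ ^ 5)) hterm
  rw [norm_pow]
  calc _ ≤ _ := this
    _ = _ := by rw [← hM]; ring

/-- Build a level one form from transformation laws and read off its coefficients. -/
lemma exists_form {g : ℂ → ℂ} (k : ℕ)
    (hT : ∀ τ : ℂ, 0 < τ.im → g (τ + 1) = g τ)
    (hS : ∀ τ : ℂ, 0 < τ.im → g (-1 / τ) = τ ^ k * g τ)
    (hd : DifferentiableOn ℂ g {τ | 0 < τ.im})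
    {a₀ a₁ a₂ a₃ a₄ : ℂ} (hE : HasE g a₀ a₁ a₂ a₃ a₄) :
    ∃ G : ModularForm 𝒮ℒ (k : ℤ), (qExpansion 1 G).coeff 0 = a₀ ∧ (qExpansion 1 G).coeff 1 = a₂ ∧
      (qExpansion 1 G).coeff 2 = a₄ := by
  have sS : (fun z : ℍ => g z) ∣[(k : ℤ)] ModularGroup.S = fun z : ℍ => g z := by
    ext z
    have hz := hS z z.im_pos
    rw [SL_slash_apply, UpperHalfPlane.modular_S_smul]
    have hz0 : (z : ℂ) ≠ 0 := z.ne_zero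
    rw [ModularGroup.denom_S]
    simp only [UpperHalfPlane.coe_mk]
    rw [show (-(z : ℂ))⁻¹ = -1 / z by field_simp, hz, zpow_neg, zpow_natCast]
    field_simp
  have sT : (fun z : ℍ => g z) ∣[(k : ℤ)] ModularGroup.T = fun z : ℍ => g z := by
    ext z
    have hz := hT z z.im_pos
    have hden : denom (ModularGroup.T : GL (Fin 2) ℝ) z = 1 := by
      rw [ModularGroup.denom_apply]
      simp [ModularGroup.T]
    rw [SL_slash_apply, modular_T_smul, hden]
    simp [add_comm (1 : ℂ), hz]
  have hb : IsBoundedAtImInfty (fun z : ℍ => g z) := by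
    have h1 := hE.bdd
    rw [IsBoundedAtImInfty, BoundedAtFilter]
    have h2 : Tendsto (fun z : ℍ => (z : ℂ)) atImInfty imInf := by
      rw [imInf, tendsto_comap_iff]
      exact tendsto_comap
    have h3 := h1.comp_tendsto h2
    exact (h3.trans (isBigO_of_le _ (by simp)))
  let G : ModularForm 𝒮ℒ (k : ℤ) :=
    { toFun := fun z : ℍ => g z
      slash_action_eq' := fun A hA => by
        obtain ⟨A, rfl⟩ := hA
        exact slash_action_generators_SL2Z sS sT A
      holo' := by
        rw [UpperHalfPlane.mdifferentiable_iff]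
        refine hd.congr fun z hz => ?_
        simp [ofComplex_apply_of_im_pos hz]
      bdd_at_cusps' := fun hc => by
        rw [Subgroup.IsArithmetic.isCusp_iff_isCusp_SL2Z] at hc
        rw [OnePoint.isBoundedAt_iff_forall_SL2Z hc]
        intro γ _
        rw [slash_action_generators_SL2Z sS sT]
        exact hb }
  have hG : ∀ z : ℍ, G z = g z := fun _ => rfl
  refine ⟨G, ?_⟩
  have hsum : ∀ τ : ℂ, 0 < τ.im →
      HasSum (fun m : ℕ => (qExpansion 1 G).coeff m * sPar τ ^ (2 * m)) (g τ) := by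
    intro τ hτ
    have := ModularForm.hasSum_qExpansion G one_pos one_mem_strictPeriods_SL ⟨τ, hτ⟩
    rw [hG] at this
    convert this using 1
    ext m
    rw [pow_mul]
    congr 2
    rw [sPar, Function.Periodic.qParam, ← Complex.exp_nat_mul]
    congr 1
    push_cast
    ring_nf
  have hE2 := hasE_of_hasSum _ _ (Finset.range 3) (fun i hi => by simp; omega) hsum
  obtain ⟨h0, -, h2, -, h4⟩ := hE2.unique hE
  rw [← h0, ← h2, ← h4]
  simp only [Finset.sum_filter]
  simp [Finset.sum_range_succ]

end

section

open Filter Asymptotics Topology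

/-- fourth power of the theta constant `θ₃` -/
def zT (τ : ℂ) : ℂ := jacobiTheta₂ 0 τ ^ 4
/-- fourth power of the theta constant `θ₄` -/
def yT (τ : ℂ) : ℂ := jacobiTheta₂ (1 / 2) τ ^ 4
/-- fourth power of the theta constant `θ₂` -/
def xT (τ : ℂ) : ℂ := sPar τ * jacobiTheta₂ (τ / 2) τ ^ 4

lemma sPar_add_one (τ : ℂ) : sPar (τ + 1) = - sPar τ := by
  rw [sPar, sPar, mul_add, Complex.exp_add, mul_one, Complex.exp_pi_mul_I]; ring

lemma exp_pi_int_sq (n : ℤ) : Complex.exp (Real.pi * Complex.I * n ^ 2) =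
    Complex.exp (2 * Real.pi * Complex.I * n * (1 / 2)) := by
  rw [Complex.exp_eq_exp_iff_exists_int]
  obtain ⟨k, hk⟩ := Int.even_mul_pred_self n
  refine ⟨k, ?_⟩
  have : (n : ℂ) * (n - 1) = k + k := by exact_mod_cast hk
  linear_combination (Real.pi * Complex.I) * this

lemma jt_add_one (w τ : ℂ) : jacobiTheta₂ w (τ + 1) = jacobiTheta₂ (w + 1 / 2) τ := by
  refine tsum_congr fun n => ?_
  simp only [jacobiTheta₂_term]
  rw [show 2 * (Real.pi : ℂ) * Complex.I * n * w + Real.pi * Complex.I * n ^ 2 * (τ + 1) =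
    (2 * (Real.pi : ℂ) * Complex.I * n * w + Real.pi * Complex.I * n ^ 2 * τ) +
      Real.pi * Complex.I * n ^ 2 by ring, Complex.exp_add, exp_pi_int_sq, ← Complex.exp_add]
  congr 1; ring

lemma zT_T (τ : ℂ) : zT (τ + 1) = yT τ := by
  rw [zT, yT, jt_add_one, zero_add]

lemma yT_T (τ : ℂ) : yT (τ + 1) = zT τ := by
  rw [zT, yT, jt_add_one, show (1 / 2 + 1 / 2 : ℂ) = 0 + 1 by norm_num, jacobiTheta₂_add_left]

lemma xT_T (τ : ℂ) : xT (τ + 1) = - xT τ := by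
  rw [xT, xT, jt_add_one, sPar_add_one, show (τ + 1) / 2 + 1 / 2 = τ / 2 + 1 by ring,
    jacobiTheta₂_add_left]
  ring

lemma cpow_half_four {w : ℂ} : (w ^ (1 / 2 : ℂ)) ^ 4 = w ^ 2 := by
  rw [← Complex.cpow_nat_mul]
  norm_num

lemma im_neg_inv {τ : ℂ} (hτ : 0 < τ.im) : 0 < (-1 / τ).im := by
  have h0 : τ ≠ 0 := by rintro rfl; simp at hτ
  have : 0 < Complex.normSq τ := Complex.normSq_pos.mpr h0
  rw [neg_div, one_div, Complex.neg_im, Complex.inv_im]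
  have := div_pos hτ this
  rw [neg_div, neg_neg]; exact this

lemma zT_S {τ : ℂ} (hτ : 0 < τ.im) : zT (-1 / τ) = - τ ^ 2 * zT τ := by
  have h0 : τ ≠ 0 := by rintro rfl; simp at hτ
  have h := jacobiTheta₂_functional_equation 0 τ
  rw [zT, zT, h, mul_pow, mul_pow, div_pow, cpow_half_four]
  simp
  rw [mul_pow, Complex.I_sq]
  field_simp
  try ring

lemma xT_S {τ : ℂ} (hτ : 0 < τ.im) : xT (-1 / τ) = - τ ^ 2 * yT τ := by
  have h0 : τ ≠ 0 := by rintro rfl; simp at hτ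
  have h := jacobiTheta₂_functional_equation (1 / 2) τ
  have e1 : jacobiTheta₂ (1 / 2 / τ) (-1 / τ) = jacobiTheta₂ (-1 / τ / 2) (-1 / τ) := by
    rw [← jacobiTheta₂_neg_left]; congr 1; ring
  have e2 : Complex.exp (-Real.pi * Complex.I * (1 / 2) ^ 2 / τ) ^ 4 = sPar (-1 / τ) := by
    rw [← Complex.exp_nat_mul, sPar]; congr 1; push_cast; ring
  rw [xT, yT, h, mul_pow, mul_pow, div_pow, cpow_half_four, e1, e2]
  rw [mul_pow, neg_sq, Complex.I_sq]
  field_simp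

lemma yT_S {τ : ℂ} (hτ : 0 < τ.im) : yT (-1 / τ) = - τ ^ 2 * xT τ := by
  have h0 : τ ≠ 0 := by rintro rfl; simp at hτ
  have h := xT_S (im_neg_inv hτ)
  rw [show -1 / (-1 / τ) = τ by field_simp] at h
  rw [h]; field_simp

lemma hasE_theta {w : ℂ → ℂ} (N : ℤ → ℕ) (c : ℤ → ℂ) (U : Finset ℤ)
    (hU : ∀ i, N i < 5 → i ∈ U)
    (h : ∀ τ : ℂ, ∀ n : ℤ, jacobiTheta₂_term n (w τ) τ = c n * sPar τ ^ N n) :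
    HasE (fun τ => jacobiTheta₂ (w τ) τ) (∑ i ∈ U with N i = 0, c i)
      (∑ i ∈ U with N i = 1, c i) (∑ i ∈ U with N i = 2, c i)
      (∑ i ∈ U with N i = 3, c i) (∑ i ∈ U with N i = 4, c i) := by
  refine hasE_of_hasSum c N U hU fun τ hτ => ?_
  have := hasSum_jacobiTheta₂_term (w τ) hτ
  simpa only [h] using this

lemma sq_lt_five (i : ℤ) (h : (i ^ 2).toNat < 5) : i ∈ Finset.Icc (-2 : ℤ) 2 := by
  rw [Finset.mem_Icc]
  have : i ^ 2 < 5 := by omega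
  constructor <;> nlinarith

lemma sPar_pow (τ : ℂ) (n : ℕ) : sPar τ ^ n = Complex.exp (Real.pi * Complex.I * n * τ) := by
  rw [sPar, ← Complex.exp_nat_mul]; congr 1; ring

lemma cast_toNat {m : ℤ} (h : 0 ≤ m) : ((m.toNat : ℕ) : ℂ) = (m : ℂ) := by
  exact_mod_cast congrArg (Int.cast : ℤ → ℂ) (Int.toNat_of_nonneg h)

lemma hasE_th3 : HasE (fun τ => jacobiTheta₂ 0 τ) 1 2 0 0 2 := by
  have := hasE_theta (w := fun _ => 0) (fun n => (n ^ 2).toNat) (fun _ => 1) (Finset.Icc (-2) 2)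
    sq_lt_five (fun τ n => by
      rw [jacobiTheta₂_term, one_mul, sPar_pow, cast_toNat (sq_nonneg n)]
      push_cast; congr 1; ring)
  have e : Finset.Icc (-2 : ℤ) 2 = {-2, -1, 0, 1, 2} := by decide
  rw [e] at this
  refine this.cast ?_ ?_ ?_ ?_ ?_ <;>
    (simp only [Finset.sum_filter]; repeat rw [Finset.sum_insert (by decide)]
     rw [Finset.sum_singleton]
     norm_num [show Int.toNat 4 = 4 from rfl, show Int.toNat 2 = 2 from rfl])

lemma hasE_th4 : HasE (fun τ => jacobiTheta₂ (1 / 2) τ) 1 (-2) 0 0 2 := by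
  have := hasE_theta (w := fun _ => 1 / 2) (fun n => (n ^ 2).toNat)
    (fun n => if Even n then 1 else -1) (Finset.Icc (-2) 2)
    sq_lt_five (fun τ n => by
      rw [jacobiTheta₂_term, sPar_pow, cast_toNat (sq_nonneg n), Complex.exp_add]
      push_cast; congr 1
      rw [show 2 * (Real.pi : ℂ) * Complex.I * n * (1 / 2) = n * (Real.pi * Complex.I) by ring,
        Complex.exp_int_mul, Complex.exp_pi_mul_I]
      split_ifs with hn
      · exact hn.neg_one_zpow
      · exact (Int.not_even_iff_odd.mp hn).neg_one_zpow)
  have e : Finset.Icc (-2 : ℤ) 2 = {-2, -1, 0, 1, 2} := by decide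
  rw [e] at this
  refine this.cast ?_ ?_ ?_ ?_ ?_ <;>
    (simp only [Finset.sum_filter]; repeat rw [Finset.sum_insert (by decide)]
     rw [Finset.sum_singleton]
     norm_num [show Int.toNat 4 = 4 from rfl, show Int.toNat 2 = 2 from rfl])

lemma hasE_th2 : HasE (fun τ => jacobiTheta₂ (τ / 2) τ) 2 0 2 0 0 := by
  have nn : ∀ n : ℤ, 0 ≤ n ^ 2 + n := fun n => by
    rcases le_or_gt 0 n with h | h <;> nlinarith
  have := hasE_theta (w := fun τ => τ / 2) (fun n => (n ^ 2 + n).toNat)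
    (fun n => 1) (Finset.Icc (-2) 1)
    (fun i hi => by
      rw [Finset.mem_Icc]
      have h1 := nn i
      have : i ^ 2 + i < 5 := by omega
      constructor <;> nlinarith)
    (fun τ n => by
      rw [jacobiTheta₂_term, one_mul, sPar_pow, cast_toNat (nn n)]
      push_cast; congr 1; ring)
  have e : Finset.Icc (-2 : ℤ) 1 = {-2, -1, 0, 1} := by decide
  rw [e] at this
  refine this.cast ?_ ?_ ?_ ?_ ?_ <;>
    (simp only [Finset.sum_filter]; repeat rw [Finset.sum_insert (by decide)]
     rw [Finset.sum_singleton]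
     norm_num [show Int.toNat 4 = 4 from rfl, show Int.toNat 2 = 2 from rfl])

lemma hasE_z : HasE zT 1 8 24 32 24 := by
  refine (((hasE_th3.mul hasE_th3).mul (hasE_th3.mul hasE_th3)).congr (g := zT)
    (fun τ _ => by simp only [zT]; ring)).cast ?_ ?_ ?_ ?_ ?_ <;> norm_num

lemma hasE_y : HasE yT 1 (-8) 24 (-32) 24 := by
  refine (((hasE_th4.mul hasE_th4).mul (hasE_th4.mul hasE_th4)).congr (g := yT)
    (fun τ _ => by simp only [yT]; ring)).cast ?_ ?_ ?_ ?_ ?_ <;> norm_num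

lemma hasE_x : HasE xT 0 16 0 64 0 := by
  refine ((hasE_sPar.mul ((hasE_th2.mul hasE_th2).mul (hasE_th2.mul hasE_th2))).congr (g := xT)
    (fun τ _ => by simp only [xT]; ring)).cast ?_ ?_ ?_ ?_ ?_ <;> norm_num

lemma diff_sPar : Differentiable ℂ sPar := by
  unfold sPar; fun_prop

lemma diff_z : DifferentiableOn ℂ zT {τ | 0 < τ.im} := fun τ hτ =>
  ((differentiableAt_jacobiTheta₂_snd 0 hτ).pow 4).differentiableWithinAt

lemma diff_y : DifferentiableOn ℂ yT {τ | 0 < τ.im} := fun τ hτ =>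
  ((differentiableAt_jacobiTheta₂_snd (1 / 2) hτ).pow 4).differentiableWithinAt

lemma diff_x : DifferentiableOn ℂ xT {τ | 0 < τ.im} := fun τ hτ => by
  have h1 := (hasFDerivAt_jacobiTheta₂ (τ / 2) hτ).differentiableAt
  have h2 : DifferentiableAt ℂ (fun τ : ℂ => ((τ / 2, τ) : ℂ × ℂ)) τ := by fun_prop
  have h3 : DifferentiableAt ℂ (fun τ : ℂ => jacobiTheta₂ (τ / 2) τ) τ :=
    DifferentiableAt.comp (f := fun τ : ℂ => ((τ / 2, τ) : ℂ × ℂ)) τ h1 h2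
  exact ((diff_sPar τ).mul (h3.pow 4)).differentiableWithinAt

end

section

open Filter Topology MeasureTheory

/-- the real vector of an integer vector -/
def zc {n : ℕ} (m : Fin n → ℤ) : Fin n → ℝ := fun i => (m i : ℝ)

/-- integer vectors are the points of the standard lattice -/
def zEquiv (n : ℕ) : (Fin n → ℤ) ≃ Submodule.span ℤ (Set.range (Pi.basisFun ℝ (Fin n))) :=
  ((Pi.basisFun ℝ (Fin n)).restrictScalars ℤ).equivFun.symm.toEquiv

lemma coe_zEquiv {n : ℕ} (m : Fin n → ℤ) : ((zEquiv n m : _) : Fin n → ℝ) = zc m := by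
  simp only [zEquiv, LinearEquiv.coe_toEquiv, Module.Basis.equivFun_symm_apply]
  ext i
  simp [zc, Finset.sum_apply, Pi.single_apply]

lemma summable_gauss {n : ℕ} {E : Type*} [NormedAddCommGroup E] [NormedSpace ℝ E]
    (ψ : (Fin n → ℝ) ≃L[ℝ] E) {a : ℝ} (ha : 0 < a) :
    Summable fun m : Fin n → ℤ => Real.exp (-a * ‖ψ (zc m)‖ ^ 2) := by
  obtain ⟨K, hK, hKb⟩ := (ψ.symm : E →L[ℝ] (Fin n → ℝ)).bound
  set M := Submodule.span ℤ (Set.range (Pi.basisFun ℝ (Fin n)))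
  set N := Module.finrank ℤ M + 1
  have h0 : Summable fun z : M => ‖z‖⁻¹ ^ (2 * N) :=
    ZLattice.summable_norm_pow_inv M (2 * N) (by omega)
  have h1 : Summable fun m : Fin n → ℤ => ‖zc m‖⁻¹ ^ (2 * N) := by
    have := (zEquiv n).summable_iff.mpr h0
    refine this.congr fun m => ?_
    simp only [Function.comp, Submodule.coe_norm, coe_zEquiv]
  refine Summable.of_norm_bounded_eventually
    (h1.mul_left ((N.factorial : ℝ) * (K ^ 2 / a) ^ N)) ?_
  have : ({0} : Set (Fin n → ℤ))ᶜ ∈ (cofinite : Filter (Fin n → ℤ)) :=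
    (Set.finite_singleton 0).compl_mem_cofinite
  filter_upwards [this] with m hm
  have hm' : zc m ≠ 0 := by
    intro h
    apply hm
    ext i
    have := congrFun h i
    simpa [zc] using this
  have hz : 0 < ‖zc m‖ := norm_pos_iff.mpr hm'
  have hb : ‖zc m‖ ≤ K * ‖ψ (zc m)‖ := by simpa using hKb (ψ (zc m))
  set y := a / K ^ 2 * ‖zc m‖ ^ 2 with hy
  have hypos : 0 < y := by positivity
  have hy2 : y ≤ a * ‖ψ (zc m)‖ ^ 2 := by
    have h2 : ‖zc m‖ ^ 2 ≤ K ^ 2 * ‖ψ (zc m)‖ ^ 2 := by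
      rw [← mul_pow]; gcongr
    calc y ≤ a / K ^ 2 * (K ^ 2 * ‖ψ (zc m)‖ ^ 2) := by rw [hy]; gcongr
      _ = _ := by field_simp
  rw [Real.norm_of_nonneg (Real.exp_pos _).le]
  calc Real.exp (-a * ‖ψ (zc m)‖ ^ 2) ≤ Real.exp (-y) := by
        apply Real.exp_le_exp.mpr; linarith
    _ ≤ (N.factorial : ℝ) / y ^ N := by
        rw [Real.exp_neg, ← one_div, div_le_div_iff₀ (Real.exp_pos _) (by positivity)]
        have := Real.pow_div_factorial_le_exp y hypos.le N
        rw [div_le_iff₀ (by positivity)] at this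
        linarith
    _ = _ := by
        rw [hy, mul_pow, div_pow, div_pow, inv_pow, ← pow_mul, ← pow_mul]; field_simp

lemma gauss_shift {E : Type*} [NormedAddCommGroup E] [InnerProductSpace ℝ E] {a : ℝ} (ha : 0 ≤ a)
    (x w : E) : Real.exp (-a * ‖x + w‖ ^ 2) ≤
      Real.exp (a * ‖x‖ ^ 2) * Real.exp (-(a / 2) * ‖w‖ ^ 2) := by
  rw [← Real.exp_add]
  apply Real.exp_le_exp.mpr
  have h1 : ‖w‖ ≤ ‖x + w‖ + ‖x‖ := by
    calc ‖w‖ = ‖(x + w) - x‖ := by congr 1; abel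
      _ ≤ _ := norm_sub_le _ _
  have h2 : ‖w‖ ^ 2 ≤ 2 * ‖x + w‖ ^ 2 + 2 * ‖x‖ ^ 2 := by
    have : ‖w‖ ^ 2 ≤ (‖x + w‖ + ‖x‖) ^ 2 := by gcongr
    nlinarith [sq_nonneg (‖x + w‖ - ‖x‖)]
  nlinarith

lemma norm_cexp_gauss {b : ℂ} {r : ℝ} :
    ‖Complex.exp (-b * (r : ℂ) ^ 2)‖ = Real.exp (-b.re * r ^ 2) := by
  rw [Complex.norm_exp, ← Complex.ofReal_pow, mul_comm, Complex.re_ofReal_mul, Complex.neg_re,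
    mul_comm]

section
variable {n : ℕ} {E : Type*} [NormedAddCommGroup E] [InnerProductSpace ℝ E]

/-- periodised Gaussian -/
def perG (φ : (Fin n → ℝ) ≃L[ℝ] E) (b : ℂ) (t : Fin n → ℝ) : ℂ :=
  ∑' m : Fin n → ℤ, Complex.exp (-b * (‖φ (t + zc m)‖ : ℂ) ^ 2)

lemma perG_bound (φ : (Fin n → ℝ) ≃L[ℝ] E) {b : ℂ} (hb : 0 < b.re) (R : ℝ) (t : Fin n → ℝ)
    (ht : ‖φ t‖ ≤ R) (m : Fin n → ℤ) :
    ‖Complex.exp (-b * (‖φ (t + zc m)‖ : ℂ) ^ 2)‖ ≤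
      Real.exp (b.re * R ^ 2) * Real.exp (-(b.re / 2) * ‖φ (zc m)‖ ^ 2) := by
  rw [norm_cexp_gauss, map_add]
  refine (gauss_shift hb.le _ _).trans ?_
  gcongr

lemma perG_bound_summable (φ : (Fin n → ℝ) ≃L[ℝ] E) {b : ℂ} (hb : 0 < b.re) (R : ℝ) :
    Summable fun m : Fin n → ℤ =>
      Real.exp (b.re * R ^ 2) * Real.exp (-(b.re / 2) * ‖φ (zc m)‖ ^ 2) :=
  (summable_gauss φ (half_pos hb)).mul_left _

lemma continuous_perG (φ : (Fin n → ℝ) ≃L[ℝ] E) {b : ℂ} (hb : 0 < b.re) :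
    Continuous (perG φ b) := by
  rw [continuous_iff_continuousAt]
  intro t
  have h1 : ContinuousOn (perG φ b) {s | ‖φ s‖ < ‖φ t‖ + 1} := by
    refine continuousOn_tsum (fun m => ?_) (perG_bound_summable φ hb (‖φ t‖ + 1))
      (fun m s hs => perG_bound φ hb _ s (le_of_lt hs) m)
    fun_prop
  refine h1.continuousAt (IsOpen.mem_nhds (isOpen_lt (by fun_prop) continuous_const) ?_)
  simp

lemma zc_add (m k : Fin n → ℤ) : zc (m + k) = zc m + zc k := by
  ext i; simp [zc]

lemma zc_neg (m : Fin n → ℤ) : zc (-m) = -zc m := by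
  ext i; simp [zc]

lemma perG_periodic (φ : (Fin n → ℝ) ≃L[ℝ] E) (b : ℂ) (t : Fin n → ℝ) (k : Fin n → ℤ) :
    perG φ b (t + zc k) = perG φ b t := by
  rw [perG, perG, ← (Equiv.addRight k).tsum_eq
    (fun m : Fin n → ℤ => Complex.exp (-b * (‖φ (t + zc m)‖ : ℂ) ^ 2))]
  refine tsum_congr fun m => ?_
  simp only [Equiv.coe_addRight, zc_add]
  rw [add_assoc, add_comm (zc k)]

/-- the projection to the torus -/
def toTorus (t : Fin n → ℝ) : UnitAddTorus (Fin n) := fun i => (t i : UnitAddCircle)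

lemma toTorus_quot : IsOpenQuotientMap (toTorus (n := n)) := by
  have : ∀ i : Fin n, IsOpenQuotientMap (fun x : ℝ => (x : UnitAddCircle)) := fun i =>
    QuotientAddGroup.isOpenQuotientMap_mk
  exact IsOpenQuotientMap.piMap this

lemma toTorus_eq {s t : Fin n → ℝ} (h : toTorus s = toTorus t) : ∃ k : Fin n → ℤ, s = t + zc k := by
  have : ∀ i, ∃ k : ℤ, s i = t i + k := by
    intro i
    have h1 := congrFun h i
    simp only [toTorus] at h1
    rw [eq_comm, QuotientAddGroup.eq, AddSubgroup.mem_zmultiples_iff] at h1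
    obtain ⟨k, hk⟩ := h1
    refine ⟨k, ?_⟩
    simp at hk
    linarith
  choose k hk using this
  exact ⟨k, funext hk⟩

/-- periodised Gaussian on the torus -/
def torG (φ : (Fin n → ℝ) ≃L[ℝ] E) (b : ℂ) (x : UnitAddTorus (Fin n)) : ℂ :=
  perG φ b (Function.surjInv toTorus_quot.surjective x)

lemma torG_apply (φ : (Fin n → ℝ) ≃L[ℝ] E) (b : ℂ) (t : Fin n → ℝ) :
    torG φ b (toTorus t) = perG φ b t := by
  obtain ⟨k, hk⟩ := toTorus_eq (Function.surjInv_eq toTorus_quot.surjective (toTorus t))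
  rw [torG, hk, perG_periodic]

lemma continuous_torG (φ : (Fin n → ℝ) ≃L[ℝ] E) {b : ℂ} (hb : 0 < b.re) :
    Continuous (torG φ b) := by
  rw [← toTorus_quot.continuous_comp_iff]
  have : torG φ b ∘ toTorus = perG φ b := funext fun t => torG_apply φ b t
  rw [this]; exact continuous_perG φ hb

lemma mFourier_toTorus (k : Fin n → ℤ) (t : Fin n → ℝ) :
    UnitAddTorus.mFourier k (toTorus t) =
      Complex.exp (2 * Real.pi * Complex.I * (∑ i, (k i : ℝ) * t i : ℝ)) := by
  simp only [UnitAddTorus.mFourier, ContinuousMap.coe_mk, toTorus, fourier_coe_apply]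
  rw [← Complex.exp_sum]
  congr 1
  push_cast
  rw [Finset.mul_sum]
  refine Finset.sum_congr rfl fun i _ => ?_
  ring

end

end

section

open Filter Topology MeasureTheory

section
variable {n : ℕ} {E : Type*} [NormedAddCommGroup E] [InnerProductSpace ℝ E]
  [FiniteDimensional ℝ E] [MeasurableSpace E] [BorelSpace E]

lemma cube_ae : {x : Fin n → ℝ | ∀ i, x i ∈ Set.Ioc ((0 : Fin n → ℝ) i) ((0 : Fin n → ℝ) i + 1)}
    =ᵐ[volume] ZSpan.fundamentalDomain (Pi.basisFun ℝ (Fin n)) := by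
  rw [ZSpan.fundamentalDomain_pi_basisFun]
  have h1 : {x : Fin n → ℝ | ∀ i, x i ∈ Set.Ioc ((0 : Fin n → ℝ) i) ((0 : Fin n → ℝ) i + 1)} =
    Set.pi Set.univ fun i => Set.Ioc ((0 : Fin n → ℝ) i) ((1 : Fin n → ℝ) i) := by
    ext x; simp
  rw [h1]
  have h2 := Measure.univ_pi_Ioc_ae_eq_Icc (μ := fun _ : Fin n => (volume : Measure ℝ))
    (f := (0 : Fin n → ℝ)) (g := (1 : Fin n → ℝ))
  have h3 := Measure.univ_pi_Ico_ae_eq_Icc (μ := fun _ : Fin n => (volume : Measure ℝ))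
    (f := (0 : Fin n → ℝ)) (g := (1 : Fin n → ℝ))
  exact h2.trans h3.symm

lemma exists_haar_const (φ : (Fin n → ℝ) ≃L[ℝ] E) :
    ∃ c : ℂ, ∀ f : E → ℂ, ∫ t, f (φ t) = c * ∫ v, f v := by
  have hmeas : MeasurableEmbedding φ := φ.toHomeomorph.measurableEmbedding
  haveI : (volume.map φ : Measure E).IsAddHaarMeasure := φ.isAddHaarMeasure_map volume
  obtain ⟨c, h⟩ : ∃ c : NNReal, (volume.map φ : Measure E) = c • volume :=
    ⟨_, Measure.isAddLeftInvariant_eq_smul (volume.map φ : Measure E) volume⟩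
  refine ⟨((c : ℝ) : ℂ), fun f => ?_⟩
  rw [← hmeas.integral_map, h, integral_smul_nnreal_measure]
  rfl

lemma exp_two_pi_int (m : ℤ) : Complex.exp (2 * Real.pi * Complex.I * m) = 1 := by
  rw [mul_comm, Complex.exp_int_mul, Complex.exp_two_pi_mul_I, one_zpow]

lemma unfold_integral (h : (Fin n → ℝ) → ℂ) (hi : Integrable h)
    {u : (Fin n → ℤ) → ℝ} (hu : Summable u) (hc : Continuous h)
    (hb : ∀ m, ∀ t ∈ ZSpan.fundamentalDomain (Pi.basisFun ℝ (Fin n)), ‖h (t + zc m)‖ ≤ u m) :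
    ∫ t in ZSpan.fundamentalDomain (Pi.basisFun ℝ (Fin n)), ∑' m, h (t + zc m) = ∫ t, h t := by
  set D := ZSpan.fundamentalDomain (Pi.basisFun ℝ (Fin n)) with hD
  have hfd := ZSpan.isAddFundamentalDomain (Pi.basisFun ℝ (Fin n)) volume
  have hvol : volume D < ⊤ :=
    (ZSpan.fundamentalDomain_isBounded (Pi.basisFun ℝ (Fin n))).measure_lt_top
  have hmeas : MeasurableSet D := ZSpan.fundamentalDomain_measurableSet _
  haveI : IsFiniteMeasure (volume.restrict D) := ⟨by simpa using hvol⟩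
  have hInt : ∀ m, Integrable (fun t => h (t + zc m)) (volume.restrict D) := fun m =>
    (hi.comp_add_right (zc m)).integrableOn
  have hnorm : Summable fun m => ∫ t in D, ‖h (t + zc m)‖ := by
    refine Summable.of_nonneg_of_le (fun m => integral_nonneg fun t => norm_nonneg _) (fun m => ?_)
      (hu.mul_right (volume.real D))
    have := setIntegral_mono_on (hInt m).norm (integrable_const (u m)) hmeas (hb m)
    refine this.trans (le_of_eq ?_)
    rw [setIntegral_const, smul_eq_mul, mul_comm]
  rw [← integral_tsum_of_summable_integral_norm hInt hnorm]
  haveI : VAddInvariantMeasure (Submodule.span ℤ (Set.range (Pi.basisFun ℝ (Fin n))))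
    (Fin n → ℝ) volume := inferInstanceAs <|
      VAddInvariantMeasure (Submodule.span ℤ (Set.range (Pi.basisFun ℝ (Fin n)))).toAddSubgroup
        (Fin n → ℝ) volume
  rw [hfd.integral_eq_tsum' h hi, ← (zEquiv n).tsum_eq, ← (Equiv.neg (Fin n → ℤ)).tsum_eq]
  refine tsum_congr fun m => ?_
  refine integral_congr_ae (ae_of_all _ fun t => ?_)
  simp only [Equiv.neg_apply]
  congr 1
  rw [Submodule.vadd_def, vadd_eq_add, add_comm]
  congr 1
  rw [NegMemClass.coe_neg, coe_zEquiv, zc_neg]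

lemma coeff_torG (φ : (Fin n → ℝ) ≃L[ℝ] E) : ∃ c : ℂ, ∀ b : ℂ, 0 < b.re → ∀ (k : Fin n → ℤ) (d : E),
    (∀ t, ⟪d, φ t⟫ = ∑ i, (k i : ℝ) * t i) →
    UnitAddTorus.mFourierCoeff (torG φ b) k =
      c * ((Real.pi / b) ^ (Module.finrank ℝ E / 2 : ℂ) *
        Complex.exp (-Real.pi ^ 2 * ‖d‖ ^ 2 / b)) := by
  obtain ⟨c, hc⟩ := exists_haar_const φ
  refine ⟨c, fun b hb k d hd => ?_⟩
  rw [UnitAddTorus.mFourierCoeff_eq_integral _ _ 0, setIntegral_congr_set cube_ae]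
  set f : E → ℂ := fun v => Complex.exp (-b * ‖v‖ ^ 2 + (-2 * Real.pi * Complex.I) * ⟪d, v⟫) with hf
  have hfi : Integrable f := GaussianFourier.integrable_cexp_neg_mul_sq_norm_add hb _ d
  have hgi := GaussianFourier.integral_cexp_neg_mul_sq_norm_add hb (-2 * Real.pi * Complex.I) d
  have hcont : Continuous f := by
    rw [hf]; fun_prop
  have hnorm : ∀ v, ‖f v‖ = ‖Complex.exp (-b * (‖v‖ : ℂ) ^ 2)‖ := fun v => by
    rw [hf]
    simp only [Complex.exp_add, norm_mul]
    rw [show -2 * (Real.pi : ℂ) * Complex.I * (⟪d, v⟫ : ℝ) = ((-2 * Real.pi * ⟪d, v⟫ : ℝ) : ℂ) * Complex.I by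
      push_cast; ring, Complex.norm_exp_ofReal_mul_I, mul_one]
  have hbd : Bornology.IsBounded (φ '' ZSpan.fundamentalDomain (Pi.basisFun ℝ (Fin n))) :=
    (φ : (Fin n → ℝ) →L[ℝ] E).lipschitz.isBounded_image
      (ZSpan.fundamentalDomain_isBounded (Pi.basisFun ℝ (Fin n)))
  obtain ⟨R, hR⟩ := hbd.exists_norm_le
  have hhi : Integrable (fun t => f (φ t)) := by
    have hmeas : MeasurableEmbedding φ := φ.toHomeomorph.measurableEmbedding
    haveI : (volume.map φ : Measure E).IsAddHaarMeasure := φ.isAddHaarMeasure_map volume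
    have h := Measure.isAddLeftInvariant_eq_smul (volume.map φ : Measure E) volume
    have h2 : Integrable f (volume.map φ) := by
      rw [h]; exact hfi.smul_measure_nnreal
    exact (hmeas.integrable_map_iff).mp h2
  have key := unfold_integral (fun t => f (φ t)) hhi (perG_bound_summable φ hb R)
    (hcont.comp φ.continuous) (fun m t ht => by
      rw [hnorm]
      exact perG_bound φ hb R t (hR _ (Set.mem_image_of_mem _ ht)) m)
  rw [hc] at key
  rw [hgi] at key
  have e1 : (-2 * (Real.pi : ℂ) * Complex.I) ^ 2 * ‖d‖ ^ 2 / (4 * b) = -Real.pi ^ 2 * ‖d‖ ^ 2 / b := by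
    rw [mul_pow, Complex.I_sq]; 
    have : b ≠ 0 := by rintro rfl; simp at hb
    field_simp; ring
  rw [e1] at key
  rw [← key]
  refine integral_congr_ae (ae_of_all _ fun t => ?_)
  change UnitAddTorus.mFourier (-k) (toTorus t) • torG φ b (toTorus t) = _
  rw [torG_apply, mFourier_toTorus, perG, smul_eq_mul, ← tsum_mul_left]
  refine tsum_congr fun m => ?_
  rw [hf]
  simp only
  rw [Complex.exp_add, mul_comm]
  congr 1
  rw [hd]
  have : (∑ i, (k i : ℝ) * (t + zc m) i) = (∑ i, (k i : ℝ) * t i) + ((∑ i, k i * m i : ℤ) : ℝ) := by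
    push_cast
    rw [← Finset.sum_add_distrib]
    refine Finset.sum_congr rfl fun i _ => ?_
    simp [zc]; ring
  rw [this]
  have e2 := exp_two_pi_int (-(∑ i, k i * m i))
  rw [Complex.ofReal_add, mul_add, Complex.exp_add, Complex.ofReal_intCast]
  rw [show -2 * (Real.pi : ℂ) * Complex.I * ((∑ i, k i * m i : ℤ) : ℂ) = 
    2 * (Real.pi : ℂ) * Complex.I * ((-(∑ i, k i * m i) : ℤ) : ℂ) by push_cast; ring, e2, mul_one]
  congr 1
  simp only [Pi.neg_apply, Int.cast_neg, neg_mul, Finset.sum_neg_distrib]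
  push_cast; ring

end

end

section

open Filter Topology MeasureTheory

section
variable {n : ℕ} {L : Set (EuclideanSpace ℝ (Fin n))}

lemma normOf_eq (x : EuclideanSpace ℝ (Fin n)) : normOf x = ‖x‖ ^ 2 :=
  real_inner_self_eq_norm_sq x

lemma mem_of_dual (h : IsUnimodularLattice L) {x : EuclideanSpace ℝ (Fin n)}
    (hx : ∀ y ∈ L, ∃ m : ℤ, ⟪x, y⟫ = (m : ℝ)) : x ∈ L := by
  rw [h]; exact hx

lemma inner_int (h : IsUnimodularLattice L) {x y : EuclideanSpace ℝ (Fin n)}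
    (hx : x ∈ L) (hy : y ∈ L) : ∃ m : ℤ, ⟪x, y⟫ = (m : ℝ) := by
  rw [h] at hx; exact hx y hy

/-- the lattice as a `ℤ`-submodule -/
def latSub (h : IsUnimodularLattice L) : Submodule ℤ (EuclideanSpace ℝ (Fin n)) where
  carrier := L
  add_mem' := fun {a b} ha hb => mem_of_dual h fun y hy => by
    obtain ⟨p, hp⟩ := inner_int h ha hy
    obtain ⟨q, hq⟩ := inner_int h hb hy
    exact ⟨p + q, by rw [inner_add_left, hp, hq]; push_cast; ring⟩
  zero_mem' := mem_of_dual h fun y _ => ⟨0, by simp⟩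
  smul_mem' := fun c x hx => mem_of_dual h fun y hy => by
    obtain ⟨p, hp⟩ := inner_int h hx hy
    exact ⟨c * p, by rw [← Int.cast_smul_eq_zsmul ℝ c x, real_inner_smul_left, hp]; push_cast; ring⟩

lemma mem_latSub (h : IsUnimodularLattice L) {x : EuclideanSpace ℝ (Fin n)} :
    x ∈ latSub h ↔ x ∈ L := Iff.rfl

lemma one_le_norm (h : IsUnimodularLattice L) {x : EuclideanSpace ℝ (Fin n)}
    (hx : x ∈ L) (h0 : x ≠ 0) : 1 ≤ ‖x‖ := by
  obtain ⟨m, hm⟩ := inner_int h hx hx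
  rw [real_inner_self_eq_norm_sq] at hm
  have hp : 0 < ‖x‖ := norm_pos_iff.mpr h0
  have : (0 : ℝ) < m := by rw [← hm]; positivity
  have h1 : (1 : ℝ) ≤ m := by exact_mod_cast this
  nlinarith

lemma latSub_discrete (h : IsUnimodularLattice L) : DiscreteTopology (latSub h) := by
  refine DiscreteTopology.of_forall_le_dist (r := 1) one_pos fun x y hxy => ?_
  change 1 ≤ dist x y
  rw [Subtype.dist_eq, dist_eq_norm]
  refine one_le_norm h (mem_latSub h |>.mp ((latSub h).sub_mem x.2 y.2)) ?_
  intro h0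
  exact hxy (Subtype.ext (sub_eq_zero.mp h0))

lemma latSub_span (h : IsUnimodularLattice L) :
    Submodule.span ℝ (latSub h : Set (EuclideanSpace ℝ (Fin n))) = ⊤ := by
  rw [← Submodule.orthogonal_eq_bot_iff]
  by_contra hne
  obtain ⟨v, hv, hv0⟩ := Submodule.exists_mem_ne_zero_of_ne_bot hne
  have hp : 0 < ‖v‖ := norm_pos_iff.mpr hv0
  have hin : (1 / (2 * ‖v‖)) • v ∈ L := mem_of_dual h fun y hy => ⟨0, by
    rw [real_inner_smul_left, real_inner_comm,
      (Submodule.mem_orthogonal _ _).mp hv y (Submodule.subset_span hy)]; simp⟩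
  have := one_le_norm h hin (smul_ne_zero (by positivity) hv0)
  rw [norm_smul, Real.norm_of_nonneg (by positivity)] at this
  have e : 1 / (2 * ‖v‖) * ‖v‖ = 1 / 2 := by field_simp
  rw [e] at this
  norm_num at this

/-- Coordinates for a unimodular lattice, and dual coordinates. -/
lemma exists_coords (h : IsUnimodularLattice L) :
    ∃ (φ : (Fin n → ℝ) ≃L[ℝ] EuclideanSpace ℝ (Fin n)) (e d : (Fin n → ℤ) ≃ latSub h),
      (∀ m, (e m : EuclideanSpace ℝ (Fin n)) = φ (zc m)) ∧
      (∀ k t, ⟪(d k : EuclideanSpace ℝ (Fin n)), φ t⟫ = ∑ i, (k i : ℝ) * t i) := by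
  haveI := latSub_discrete h
  haveI : IsZLattice ℝ (latSub h) := ⟨latSub_span h⟩
  haveI : Module.Finite ℤ (latSub h) := ZLattice.module_finite ℝ (latSub h)
  haveI : Module.Free ℤ (latSub h) := ZLattice.module_free ℝ (latSub h)
  have hrank : Module.finrank ℤ (latSub h) = n := by
    rw [ZLattice.rank ℝ (latSub h)]; simp
  let b₀ : Module.Basis (Fin n) ℤ (latSub h) := Module.finBasisOfFinrankEq ℤ _ hrank
  let b : Module.Basis (Fin n) ℝ (EuclideanSpace ℝ (Fin n)) := b₀.ofZLatticeBasis ℝ (latSub h)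
  have hb : ∀ i, b i = b₀ i := fun i => b₀.ofZLatticeBasis_apply ℝ (latSub h) i
  have hbL : ∀ i, b i ∈ L := fun i => by rw [hb]; exact (b₀ i).2
  let φ := b.equivFun.symm.toContinuousLinearEquiv
  have hφ : ∀ t, φ t = ∑ i, t i • b i := fun t => b.equivFun_symm_apply t
  have he : ∀ m, ((b₀.equivFun.symm m : latSub h) : EuclideanSpace ℝ (Fin n)) = φ (zc m) := by
    intro m
    rw [hφ, b₀.equivFun_symm_apply, Submodule.coe_sum]
    refine Finset.sum_congr rfl fun i _ => ?_
    rw [hb, Submodule.coe_smul, zc, Int.cast_smul_eq_zsmul]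
  have hInt : ∀ v : latSub h, ∀ i, ∃ k : ℤ, ⟪(v : EuclideanSpace ℝ (Fin n)), b i⟫ = (k : ℝ) :=
    fun v i => inner_int h v.2 (hbL i)
  choose κ hκ using hInt
  have hin : ∀ v : latSub h, ∀ t, ⟪(v : EuclideanSpace ℝ (Fin n)), φ t⟫ = ∑ i, (κ v i : ℝ) * t i := by
    intro v t
    rw [hφ, inner_sum]
    refine Finset.sum_congr rfl fun i _ => ?_
    rw [real_inner_smul_right, hκ, mul_comm]
  have hbij : Function.Bijective κ := by
    constructor
    · intro v w hvw
      apply Subtype.ext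
      refine ext_inner_right ℝ fun y => ?_
      rw [← φ.apply_symm_apply y, hin, hin, hvw]
    · intro k
      let F : EuclideanSpace ℝ (Fin n) →ₗ[ℝ] ℝ := b.constr ℝ fun i => (k i : ℝ)
      let d := (InnerProductSpace.toDual ℝ (EuclideanSpace ℝ (Fin n))).symm
        (LinearMap.toContinuousLinearMap F)
      have hd : ∀ y, ⟪d, y⟫ = F y := fun y => by
        simp only [d, InnerProductSpace.toDual_symm_apply]; rfl
      have hdb : ∀ i, ⟪d, b i⟫ = k i := fun i => by
        rw [hd]; simp only [F, Module.Basis.constr_basis]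
      have hdL : d ∈ L := mem_of_dual h fun y hy => by
        let m := b₀.equivFun ⟨y, hy⟩
        have hy' : y = φ (zc m) := by
          rw [← he]; simp [m]
        refine ⟨∑ i, m i * k i, ?_⟩
        rw [hy', hφ, inner_sum]
        push_cast
        refine Finset.sum_congr rfl fun i _ => ?_
        rw [real_inner_smul_right, hdb, zc]
      refine ⟨⟨d, hdL⟩, ?_⟩
      ext i
      have := hκ ⟨d, hdL⟩ i
      rw [show ((⟨d, hdL⟩ : latSub h) : EuclideanSpace ℝ (Fin n)) = d from rfl, hdb] at this
      exact_mod_cast this.symm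
  refine ⟨φ, b₀.equivFun.symm.toEquiv, (Equiv.ofBijective κ hbij).symm, he, fun k t => ?_⟩
  rw [hin]
  have : κ ((Equiv.ofBijective κ hbij).symm k) = k := (Equiv.ofBijective κ hbij).apply_symm_apply k
  rw [this]

end

end

section

open Filter Topology MeasureTheory

section
variable {n : ℕ} {L : Set (EuclideanSpace ℝ (Fin n))}

lemma lat_summable (h : IsUnimodularLattice L) {a : ℝ} (ha : 0 < a)
    (x : EuclideanSpace ℝ (Fin n)) :
    Summable fun w : latSub h => Real.exp (-a * ‖x + w‖ ^ 2) := by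
  obtain ⟨φ, e, d, he, hd⟩ := exists_coords h
  rw [← e.summable_iff]
  refine Summable.of_nonneg_of_le (fun m => (Real.exp_pos _).le) (fun m => ?_)
    ((summable_gauss φ (half_pos ha)).mul_left (Real.exp (a * ‖x‖ ^ 2)))
  simp only [Function.comp, he]
  exact gauss_shift ha.le _ _

/-- theta series with characteristics -/
def Th (h : IsUnimodularLattice L) (x y : EuclideanSpace ℝ (Fin n)) (τ : ℂ) : ℂ :=
  ∑' w : latSub h, Complex.exp (2 * Real.pi * Complex.I * (⟪(w : EuclideanSpace ℝ (Fin n)), y⟫ : ℝ)) *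
    Complex.exp (Real.pi * Complex.I * τ * (‖x + w‖ : ℂ) ^ 2)

lemma norm_unit (r : ℝ) : ‖Complex.exp (2 * Real.pi * Complex.I * (r : ℂ))‖ = 1 := by
  rw [show 2 * (Real.pi : ℂ) * Complex.I * r = ((2 * Real.pi * r : ℝ) : ℂ) * Complex.I by
    push_cast; ring, Complex.norm_exp_ofReal_mul_I]

lemma norm_term (τ : ℂ) (r : ℝ) : ‖Complex.exp (Real.pi * Complex.I * τ * (r : ℂ) ^ 2)‖ =
    Real.exp (-(Real.pi * τ.im) * r ^ 2) := by
  have := norm_cexp_gauss (b := -(Real.pi * Complex.I * τ)) (r := r)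
  rw [neg_neg] at this
  rw [this]
  congr 2
  rw [show -(Real.pi * Complex.I * τ) = (Real.pi : ℂ) * -(Complex.I * τ) by ring,
    Complex.re_ofReal_mul]
  simp

lemma Th_summable (h : IsUnimodularLattice L) (x y : EuclideanSpace ℝ (Fin n)) {τ : ℂ}
    (hτ : 0 < τ.im) : Summable fun w : latSub h =>
      Complex.exp (2 * Real.pi * Complex.I * (⟪(w : EuclideanSpace ℝ (Fin n)), y⟫ : ℝ)) *
        Complex.exp (Real.pi * Complex.I * τ * (‖x + w‖ : ℂ) ^ 2) := by
  refine Summable.of_norm ?_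
  refine (lat_summable h (mul_pos Real.pi_pos hτ) x).congr fun w => ?_
  rw [norm_mul, norm_unit, norm_term, one_mul]

lemma Th_poisson (h : IsUnimodularLattice L) : ∃ c : ℂ, ∀ τ : ℂ, 0 < τ.im → ∀ x,
    Th h x 0 τ = c * (Complex.I / τ) ^ ((n : ℂ) / 2) * Th h 0 x (-1 / τ) := by
  obtain ⟨φ, e, d, he, hd⟩ := exists_coords h
  obtain ⟨c, hc⟩ := coeff_torG φ
  refine ⟨c, fun τ hτ x => ?_⟩
  have h0 : τ ≠ 0 := by rintro rfl; simp at hτ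
  have hpi : (Real.pi : ℂ) ≠ 0 := by exact_mod_cast Real.pi_ne_zero
  set b : ℂ := -(Real.pi * Complex.I * τ) with hb
  have hbre : 0 < b.re := by
    have : b.re = Real.pi * τ.im := by
      rw [hb, show -(Real.pi * Complex.I * τ) = (Real.pi : ℂ) * -(Complex.I * τ) by ring,
        Complex.re_ofReal_mul]
      simp
    rw [this]; exact mul_pos Real.pi_pos hτ
  have e1 : (Real.pi : ℂ) / b = Complex.I / τ := by
    rw [hb]; field_simp; rw [Complex.I_sq]
  have e2 : ∀ r : ℂ, -(Real.pi : ℂ) ^ 2 * r / b = Real.pi * Complex.I * (-1 / τ) * r := by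
    intro r
    rw [hb]; field_simp; rw [Complex.I_sq]; ring
  let F : C(UnitAddTorus (Fin n), ℂ) := ⟨torG φ b, continuous_torG φ hbre⟩
  have hcoef : ∀ k, UnitAddTorus.mFourierCoeff F k = c * (Complex.I / τ) ^ ((n : ℂ) / 2) *
      Complex.exp (Real.pi * Complex.I * (-1 / τ) * (‖(d k : EuclideanSpace ℝ (Fin n))‖ : ℂ) ^ 2) := by
    intro k
    have := hc b hbre k (d k) (hd k)
    rw [e1, e2, finrank_euclideanSpace_fin] at this
    rw [mul_assoc]; exact this
  have hs0 := Th_summable h 0 0 (im_neg_inv hτ)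
  rw [← d.summable_iff] at hs0
  have hs : Summable (UnitAddTorus.mFourierCoeff F) := by
    refine (hs0.mul_left (c * (Complex.I / τ) ^ ((n : ℂ) / 2))).congr fun k => ?_
    rw [hcoef]
    simp
  have key := UnitAddTorus.hasSum_mFourier_series_apply_of_summable hs (toTorus (φ.symm x))
  have e3 : F (toTorus (φ.symm x)) = Th h x 0 τ := by
    change torG φ b _ = _
    rw [torG_apply, perG, Th, ← e.tsum_eq]
    refine tsum_congr fun m => ?_
    rw [he, map_add, φ.apply_symm_apply, hb]
    simp
  rw [e3] at key
  rw [← key.tsum_eq, Th, ← tsum_mul_left, ← d.tsum_eq]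
  refine tsum_congr fun k => ?_
  rw [hcoef, mFourier_toTorus, ← hd, φ.apply_symm_apply, smul_eq_mul, zero_add]
  ring

lemma Th_I_ne (h : IsUnimodularLattice L) : Th h 0 0 Complex.I ≠ 0 := by
  have e : Th h 0 0 Complex.I = ((∑' w : latSub h, Real.exp (-Real.pi * ‖(0 : EuclideanSpace ℝ (Fin n)) + w‖ ^ 2) : ℝ) : ℂ) := by
    rw [Th, Complex.ofReal_tsum]
    refine tsum_congr fun w => ?_
    rw [Complex.ofReal_exp]
    simp only [inner_zero_right, Complex.ofReal_zero, mul_zero, Complex.exp_zero, one_mul]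
    congr 1
    push_cast
    linear_combination (Real.pi * (‖(0 : EuclideanSpace ℝ (Fin n)) + w‖ : ℂ) ^ 2) * Complex.I_mul_I
  rw [e]
  have := (lat_summable h Real.pi_pos 0).tsum_pos (fun w => (Real.exp_pos _).le) 0 (Real.exp_pos _)
  exact_mod_cast this.ne'

lemma Th_diff (h : IsUnimodularLattice L) (x : EuclideanSpace ℝ (Fin n)) :
    DifferentiableOn ℂ (Th h x 0) {τ | 0 < τ.im} := by
  intro τ₀ hτ₀
  have hτ₀' : 0 < τ₀.im := hτ₀
  have ho : IsOpen {τ : ℂ | τ₀.im / 2 < τ.im} := isOpen_lt continuous_const Complex.continuous_im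
  have : DifferentiableOn ℂ (Th h x 0) {τ | τ₀.im / 2 < τ.im} := by
    refine Complex.differentiableOn_tsum_of_summable_norm
      (lat_summable h (mul_pos Real.pi_pos (half_pos hτ₀')) x) (fun w => ?_) ho (fun w τ hτ => ?_)
    · fun_prop
    · rw [norm_mul, norm_unit, norm_term, one_mul]
      apply Real.exp_le_exp.mpr
      have h1 : τ₀.im / 2 < τ.im := hτ
      have := Real.pi_pos
      gcongr
  exact (this.differentiableAt (ho.mem_nhds (by simpa using hτ₀'))).differentiableWithinAt

end

end

section

open Filter Topology MeasureTheory

section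
variable {n : ℕ} {L : Set (EuclideanSpace ℝ (Fin n))}

/-- `u` is half of a characteristic vector of `L` -/
def IsChar (L : Set (EuclideanSpace ℝ (Fin n))) (u : EuclideanSpace ℝ (Fin n)) : Prop :=
  ∀ w ∈ L, ∃ m : ℤ, ⟪w, u⟫ = ‖w‖ ^ 2 / 2 + m

lemma IsChar.add {u v w : EuclideanSpace ℝ (Fin n)} (h : IsUnimodularLattice L) (hv : v ∈ L)
    (hw : w ∈ L) (h1 : ∃ m : ℤ, ⟪v, u⟫ = ‖v‖ ^ 2 / 2 + m)
    (h2 : ∃ m : ℤ, ⟪w, u⟫ = ‖w‖ ^ 2 / 2 + m) : ∃ m : ℤ, ⟪v + w, u⟫ = ‖v + w‖ ^ 2 / 2 + m := by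
  obtain ⟨p, hp⟩ := h1
  obtain ⟨q, hq⟩ := h2
  obtain ⟨r, hr⟩ := inner_int h hv hw
  refine ⟨p + q - r, ?_⟩
  rw [inner_add_left, norm_add_sq_real, hp, hq, hr]
  push_cast; ring

lemma exists_char (h : IsUnimodularLattice L) : ∃ u, IsChar L u := by
  obtain ⟨φ, e, d, he, hd⟩ := exists_coords h
  have hbL : ∀ i : Fin n, φ (Pi.single i 1) ∈ L := fun i => by
    have : φ (Pi.single i 1) = e (Pi.single i 1) := by
      rw [he]; congr 1; ext j; simp only [zc, Pi.single_apply]; split_ifs <;> simp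
    rw [this]; exact (e _).2
  choose p hp using fun i => inner_int h (hbL i) (hbL i)
  refine ⟨(1 / 2 : ℝ) • (d p : EuclideanSpace ℝ (Fin n)), ?_⟩
  set u : EuclideanSpace ℝ (Fin n) := (1 / 2 : ℝ) • (d p : EuclideanSpace ℝ (Fin n)) with hu
  let P : AddSubgroup (EuclideanSpace ℝ (Fin n)) :=
    { carrier := {w | w ∈ L ∧ ∃ m : ℤ, ⟪w, u⟫ = ‖w‖ ^ 2 / 2 + m}
      add_mem' := fun {a b} ha hb => ⟨(latSub h).add_mem ha.1 hb.1, IsChar.add h ha.1 hb.1 ha.2 hb.2⟩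
      zero_mem' := ⟨(latSub h).zero_mem, 0, by simp⟩
      neg_mem' := fun {a} ha => ⟨(latSub h).neg_mem ha.1, by
        obtain ⟨m, hm⟩ := ha.2
        obtain ⟨k, hk⟩ := inner_int h ha.1 ha.1
        rw [real_inner_self_eq_norm_sq] at hk
        refine ⟨-m - k, ?_⟩
        rw [inner_neg_left, norm_neg, hm]
        push_cast; linarith⟩ }
  intro w hw
  suffices w ∈ P from this.2
  obtain ⟨m, hm⟩ := e.surjective ⟨w, hw⟩
  have hw' : w = φ (zc m) := by rw [← he, hm]
  have hsum : zc m = ∑ i, m i • (Pi.single i (1 : ℝ) : Fin n → ℝ) := by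
    ext j
    simp [zc, Finset.sum_apply, Pi.single_apply]
  rw [hw', hsum, map_sum]
  refine P.sum_mem fun i _ => ?_
  rw [map_zsmul]
  refine P.zsmul_mem ⟨hbL i, 0, ?_⟩ _
  rw [hu, real_inner_smul_right, real_inner_comm, hd]
  have : ∑ j, (p j : ℝ) * (Pi.single i 1 : Fin n → ℝ) j = p i := by
    simp [Pi.single_apply]
  rw [this, ← hp, real_inner_self_eq_norm_sq]; simp; ring

lemma shadow_iff (h : IsUnimodularLattice L) (hodd : IsOddLattice L)
    {u : EuclideanSpace ℝ (Fin n)} (hu : IsChar L u) (x : EuclideanSpace ℝ (Fin n)) :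
    x ∈ shadow L ↔ x - u ∈ L := by
  obtain ⟨v, hv, mv, hmv, hvn⟩ := hodd
  rw [normOf_eq] at hvn
  have hev : ∀ y ∈ L, ∀ m : ℤ, ‖y‖ ^ 2 = m → Even m → y ∈ evenSublattice L := by
    rintro y hy m hm ⟨k, hk⟩
    refine ⟨hy, k, ?_⟩
    rw [normOf_eq, hm, hk]; push_cast; ring
  have hnint : ∀ y ∈ L, ∃ m : ℤ, ‖y‖ ^ 2 = m := fun y hy => by
    obtain ⟨m, hm⟩ := inner_int h hy hy
    exact ⟨m, by rw [← hm, real_inner_self_eq_norm_sq]⟩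
  constructor
  · rintro ⟨hx1, hx2⟩
    refine mem_of_dual h fun y hy => ?_
    obtain ⟨m, hm⟩ := hnint y hy
    obtain ⟨r, hr⟩ := hu y hy
    rcases Int.even_or_odd m with hme | hmo
    · obtain ⟨q, hq⟩ := hx1 y (hev y hy m hm hme)
      obtain ⟨k, hk⟩ := hme
      refine ⟨q - k - r, ?_⟩
      rw [inner_sub_left, hq, real_inner_comm, hr, hm, hk]; push_cast; ring
    · -- `2 y` is even
      have h2 : (2 : ℤ) • y ∈ L := (latSub h).smul_mem 2 hy
      have h2e : (2 : ℤ) • y ∈ evenSublattice L := by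
        refine hev _ h2 (4 * m) ?_ ⟨2 * m, by ring⟩
        rw [← Int.cast_smul_eq_zsmul ℝ, norm_smul, mul_pow, hm]; norm_num
      obtain ⟨q, hq⟩ := hx1 _ h2e
      rw [← Int.cast_smul_eq_zsmul ℝ, real_inner_smul_right] at hq
      push_cast at hq
      rcases Int.even_or_odd q with ⟨k, hk⟩ | ⟨k, hk⟩
      · exfalso
        apply hx2
        have hxy : ⟪x, y⟫ = (k : ℝ) := by rw [hk] at hq; push_cast at hq; linarith
        refine mem_of_dual h fun z hz => ?_
        obtain ⟨l, hl⟩ := hnint z hz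
        rcases Int.even_or_odd l with hle | hlo
        · exact hx1 z (hev z hz l hl hle)
        · obtain ⟨s, hs⟩ := inner_int h hz hy
          have hzy : z - y ∈ evenSublattice L := by
            refine hev _ ((latSub h).sub_mem hz hy) (l - 2 * s + m) ?_ ?_
            · rw [norm_sub_sq_real, hl, hm, hs]; push_cast; ring
            · have := hlo.add_odd hmo
              rw [show l - 2 * s + m = (l + m) - 2 * s by ring]
              exact this.sub (even_two_mul s)
          obtain ⟨t, ht⟩ := hx1 _ hzy
          refine ⟨t + k, ?_⟩
          rw [inner_sub_right, hxy] at ht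
          push_cast; linarith
      · obtain ⟨j, hj⟩ := hmo
        refine ⟨k - j - r, ?_⟩
        rw [inner_sub_left, real_inner_comm y u, hr, hm, hj]
        rw [hk] at hq; push_cast at hq ⊢; linarith
  · intro hx
    constructor
    · rintro y ⟨hy, m, hm⟩
      rw [normOf_eq] at hm
      obtain ⟨q, hq⟩ := inner_int h hx hy
      obtain ⟨r, hr⟩ := hu y hy
      refine ⟨q + m + r, ?_⟩
      rw [inner_sub_left, real_inner_comm y u, hr, hm] at hq
      push_cast; linarith
    · intro hxL
      have huL : u ∈ L := by
        have := (latSub h).sub_mem hxL hx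
        rwa [sub_sub_cancel] at this
      obtain ⟨q, hq⟩ := inner_int h hv huL
      obtain ⟨r, hr⟩ := hu v hv
      obtain ⟨k, hk⟩ := hmv
      rw [hr, hvn, hk] at hq
      push_cast at hq
      have : (2 * (k + r - q) + 1 : ℝ) = 0 := by linarith
      have : (2 * (k + r - q) + 1 : ℤ) = 0 := by exact_mod_cast this
      omega

lemma Th_T_A (h : IsUnimodularLattice L) {u : EuclideanSpace ℝ (Fin n)} (hu : IsChar L u) (τ : ℂ) :
    Th h 0 0 (τ + 1) = Th h 0 u τ := by
  refine tsum_congr fun w => ?_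
  obtain ⟨m, hm⟩ := hu w w.2
  rw [hm, inner_zero_right, zero_add, Complex.ofReal_zero, mul_zero, Complex.exp_zero, one_mul,
    ← Complex.exp_add, Complex.exp_eq_exp_iff_exists_int]
  refine ⟨-m, ?_⟩
  push_cast; ring

lemma Th_T_B (h : IsUnimodularLattice L) {u : EuclideanSpace ℝ (Fin n)} (hu : IsChar L u) (τ : ℂ) :
    Th h 0 u (τ + 1) = Th h 0 0 τ := by
  refine tsum_congr fun w => ?_
  obtain ⟨m, hm⟩ := hu w w.2
  obtain ⟨k, hk⟩ := inner_int h w.2 w.2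
  rw [real_inner_self_eq_norm_sq] at hk
  have hk' : (‖(w : EuclideanSpace ℝ (Fin n))‖ : ℂ) ^ 2 = k := by exact_mod_cast hk
  rw [hm, inner_zero_right, zero_add, Complex.ofReal_zero, mul_zero, Complex.exp_zero, one_mul,
    ← Complex.exp_add, Complex.exp_eq_exp_iff_exists_int]
  refine ⟨m + k, ?_⟩
  push_cast; linear_combination (2 * Real.pi * Complex.I) * hk'

lemma Th_T_C (h : IsUnimodularLattice L) {u : EuclideanSpace ℝ (Fin n)} (hu : IsChar L u) (τ : ℂ) :
    Th h u 0 (τ + 1) = Complex.exp (Real.pi * Complex.I * (‖u‖ : ℂ) ^ 2) * Th h u 0 τ := by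
  rw [Th, Th, ← tsum_mul_left]
  refine tsum_congr fun w => ?_
  obtain ⟨m, hm⟩ := hu w w.2
  obtain ⟨k, hk⟩ := inner_int h w.2 w.2
  rw [real_inner_self_eq_norm_sq] at hk
  have hn : ‖u + w‖ ^ 2 = ‖u‖ ^ 2 + 2 * (k + m) := by
    rw [norm_add_sq_real, real_inner_comm, hm, hk]; ring
  have hn' : (‖u + w‖ : ℂ) ^ 2 = (‖u‖ : ℂ) ^ 2 + 2 * (k + m) := by exact_mod_cast hn
  rw [inner_zero_right, Complex.ofReal_zero, mul_zero, Complex.exp_zero, one_mul, one_mul,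
    ← Complex.exp_add, Complex.exp_eq_exp_iff_exists_int]
  refine ⟨m + k, ?_⟩
  push_cast; linear_combination (Real.pi * Complex.I) * hn'

end

section
variable {L : Set (EuclideanSpace ℝ (Fin 36))}

lemma Th_S (h : IsUnimodularLattice L) {τ : ℂ} (hτ : 0 < τ.im) (x : EuclideanSpace ℝ (Fin 36)) :
    Th h 0 x (-1 / τ) = - τ ^ 18 * Th h x 0 τ := by
  obtain ⟨c, hc⟩ := Th_poisson h
  have hpow : ∀ z : ℂ, z ^ (((36 : ℕ) : ℂ) / 2) = z ^ 18 := fun z => by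
    rw [show ((36 : ℕ) : ℂ) / 2 = ((18 : ℕ) : ℂ) by norm_num, Complex.cpow_natCast]
  have I18 : Complex.I ^ 18 = -1 := by
    rw [show (18 : ℕ) = 2 * 9 by norm_num, pow_mul, Complex.I_sq]; norm_num
  have h1 := hc Complex.I (by simp) 0
  rw [hpow, show (-1 : ℂ) / Complex.I = Complex.I by
    rw [div_eq_iff Complex.I_ne_zero, Complex.I_mul_I], div_self Complex.I_ne_zero, one_pow,
    mul_one] at h1
  have hc1 : c = 1 := by
    have := Th_I_ne h
    exact mul_right_cancel₀ this (by rw [one_mul]; exact h1.symm)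
  have h2 := hc τ hτ x
  have h0 : τ ≠ 0 := by rintro rfl; simp at hτ
  rw [hpow, hc1, div_pow, I18, one_mul] at h2
  rw [h2]
  field_simp

lemma Th_S' (h : IsUnimodularLattice L) {τ : ℂ} (hτ : 0 < τ.im) (x : EuclideanSpace ℝ (Fin 36)) :
    Th h x 0 (-1 / τ) = - τ ^ 18 * Th h 0 x τ := by
  have h0 : τ ≠ 0 := by rintro rfl; simp at hτ
  have h1 := Th_S h (im_neg_inv hτ) x
  rw [show -1 / (-1 / τ) = τ by field_simp] at h1
  rw [h1, div_pow]
  field_simp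

lemma char_eps (h : IsUnimodularLattice L) {u : EuclideanSpace ℝ (Fin 36)} (hu : IsChar L u) :
    Complex.exp (Real.pi * Complex.I * (‖u‖ : ℂ) ^ 2) = -1 := by
  set ε := Complex.exp (Real.pi * Complex.I * (‖u‖ : ℂ) ^ 2) with hε
  have hI : 0 < Complex.I.im := by simp
  have hI1 : 0 < (Complex.I - 1).im := by simp
  have a1 : Complex.I ≠ 0 := Complex.I_ne_zero
  have a2 : Complex.I - 1 ≠ 0 := by
    intro h0; rw [h0] at hI1; simp at hI1
  have hσ : 0 < (-1 / Complex.I + 1).im := by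
    have := im_neg_inv hI
    simpa using this
  have e1 : -1 / (-1 / Complex.I + 1) + 1 = -1 / (Complex.I - 1) := by
    have : -1 / Complex.I + 1 = (Complex.I - 1) / Complex.I := by field_simp; ring
    rw [this]; field_simp; ring
  have t1 := Th_T_C h hu (-1 / (-1 / Complex.I + 1))
  rw [e1, Th_S' h hI1, Th_S' h hσ, Th_T_B h hu, Th_S h hI] at t1
  have t2 := Th_T_B h hu (Complex.I - 1)
  rw [sub_add_cancel] at t2
  have t3 := Th_T_A h hu (Complex.I - 1)
  rw [sub_add_cancel] at t3
  rw [← t3] at t1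
  have e2 : (-1 / Complex.I + 1) = (Complex.I - 1) / Complex.I := by field_simp; ring
  rw [e2, div_pow] at t1
  have hA := Th_I_ne h
  have h18 : (Complex.I - 1) ^ 18 ≠ 0 := pow_ne_zero _ a2
  field_simp at t1
  rw [hε, t1]
  congr 1
  ring

lemma char_norm (h : IsUnimodularLattice L) {u : EuclideanSpace ℝ (Fin 36)} (hu : IsChar L u)
    {w : EuclideanSpace ℝ (Fin 36)} (hw : w ∈ L) : ∃ k : ℕ, ‖u + w‖ ^ 2 = 2 * k + 1 := by
  have h1 := char_eps h hu
  rw [← Complex.exp_pi_mul_I, Complex.exp_eq_exp_iff_exists_int] at h1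
  obtain ⟨k, hk⟩ := h1
  have hpi : (Real.pi : ℂ) ≠ 0 := by exact_mod_cast Real.pi_ne_zero
  have hu2 : (‖u‖ : ℂ) ^ 2 = 1 + 2 * k := by
    have hne : (Real.pi : ℂ) * Complex.I ≠ 0 := mul_ne_zero hpi Complex.I_ne_zero
    apply mul_left_cancel₀ hne
    linear_combination hk
  have hu3 : ‖u‖ ^ 2 = 1 + 2 * k := by exact_mod_cast hu2
  obtain ⟨m, hm⟩ := hu w hw
  obtain ⟨l, hl⟩ := inner_int h hw hw
  rw [real_inner_self_eq_norm_sq] at hl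
  have hn : ‖u + w‖ ^ 2 = 2 * ((k + l + m : ℤ) : ℝ) + 1 := by
    rw [norm_add_sq_real, real_inner_comm, hm, hl, hu3]; push_cast; ring
  have hnn : (0 : ℝ) ≤ 2 * ((k + l + m : ℤ) : ℝ) + 1 := by rw [← hn]; positivity
  have hnn' : 0 ≤ 2 * (k + l + m) + 1 := by exact_mod_cast hnn
  have h0 : 0 ≤ k + l + m := by omega
  refine ⟨(k + l + m).toNat, ?_⟩
  rw [hn]
  have : (((k + l + m).toNat : ℕ) : ℤ) = k + l + m := Int.toNat_of_nonneg h0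
  have h3 : (((k + l + m).toNat : ℕ) : ℝ) = ((k + l + m : ℤ) : ℝ) := by
    exact_mod_cast congrArg (Int.cast : ℤ → ℝ) this
  rw [h3]

end

end

section

open Filter Topology Asymptotics

section
variable {L : Set (EuclideanSpace ℝ (Fin 36))}

lemma hasE_Th (h : IsUnimodularLattice L) (x : EuclideanSpace ℝ (Fin 36)) (N : latSub h → ℕ)
    (hN : ∀ w : latSub h, ‖x + w‖ ^ 2 = (N w : ℝ)) (cnt : ℕ → ℕ)
    (hcnt : ∀ k, cnt k = Set.ncard {y | y - x ∈ L ∧ normOf y = (k : ℝ)}) :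
    HasE (Th h x 0) (cnt 0) (cnt 1) (cnt 2) (cnt 3) (cnt 4) := by
  classical
  have hfin : {w : latSub h | N w < 5}.Finite := by
    have h1 := (lat_summable h one_pos x).tendsto_cofinite_zero
    have h2 : ∀ᶠ w in cofinite, Real.exp (-1 * ‖x + (w : latSub h)‖ ^ 2) < Real.exp (-5) :=
      h1.eventually (gt_mem_nhds (Real.exp_pos _))
    rw [Filter.eventually_cofinite] at h2
    refine h2.subset fun w hw => ?_
    have hw' : N w < 5 := hw
    change ¬ _
    rw [hN, Real.exp_lt_exp, not_lt]
    have : (N w : ℝ) < 5 := by exact_mod_cast hw'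
    linarith
  have key := hasE_of_hasSum (f := Th h x 0) (fun _ : latSub h => (1 : ℂ)) N hfin.toFinset
    (fun i hi => by simpa using hi) (fun τ hτ => by
      have e : (fun i : latSub h => (1 : ℂ) * sPar τ ^ N i) = fun w : latSub h =>
          Complex.exp (2 * Real.pi * Complex.I *
            (⟪(w : EuclideanSpace ℝ (Fin 36)), (0 : EuclideanSpace ℝ (Fin 36))⟫ : ℝ)) *
            Complex.exp (Real.pi * Complex.I * τ * (‖x + w‖ : ℂ) ^ 2) := by
        funext w
        have hw : (‖x + w‖ : ℂ) ^ 2 = (N w : ℂ) := by exact_mod_cast congrArg (fun t : ℝ => (t : ℂ)) (hN w)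
        rw [hw, sPar_pow, inner_zero_right, Complex.ofReal_zero, mul_zero, Complex.exp_zero]
        congr 2
        ring
      rw [e]
      exact (Th_summable h x 0 hτ).hasSum)
  have hc : ∀ k, k < 5 → (∑ i ∈ hfin.toFinset with N i = k, (1 : ℂ)) = cnt k := by
    intro k hk
    rw [Finset.sum_const, nsmul_eq_mul, mul_one, hcnt]
    congr 1
    rw [← Set.ncard_coe_finset]
    refine Set.ncard_congr (fun w _ => x + w) ?_ ?_ ?_
    · intro w hw
      have hw' : N w = k := by simp at hw; exact hw.2
      refine ⟨?_, ?_⟩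
      · rw [add_sub_cancel_left]; exact w.2
      · rw [normOf_eq, hN, hw']
    · intro a b _ _ hab
      exact Subtype.ext (add_left_cancel hab)
    · rintro y ⟨hy, hn⟩
      refine ⟨⟨y - x, hy⟩, ?_, by simp⟩
      have : N ⟨y - x, hy⟩ = k := by
        have := hN ⟨y - x, hy⟩
        rw [add_sub_cancel, ← normOf_eq, hn] at this
        exact_mod_cast this.symm
      simp [this, hk]
  exact key.cast (hc 0 (by norm_num)) (hc 1 (by norm_num)) (hc 2 (by norm_num))
    (hc 3 (by norm_num)) (hc 4 (by norm_num))

lemma HasE.shift {f : ℂ → ℂ} {a₀ a₁ a₂ a₃ a₄ : ℂ} (hf : HasE f a₀ a₁ a₂ a₃ a₄) :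
    HasE (fun τ => f (τ + 1)) a₀ (-a₁) a₂ (-a₃) a₄ := by
  have ht : Tendsto (fun τ : ℂ => τ + 1) imInf imInf := by
    refine tendsto_comap_iff.mpr ?_
    have : Complex.im ∘ (fun τ : ℂ => τ + 1) = Complex.im := by ext; simp
    rw [this]; exact tendsto_comap
  have := (IsBigO.comp_tendsto hf ht).neg_right
  refine this.congr (fun τ => ?_) (fun τ => ?_)
  · simp only [Function.comp, sPar_add_one]; ring
  · simp only [Function.comp, sPar_add_one]; ring

lemma hasE_A (h : IsUnimodularLattice L) (hmin : ∀ x ∈ L, x ≠ 0 → 3 ≤ normOf x) :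
    HasE (Th h 0 0) 1 0 0 (numVecsOfNorm L 3) (numVecsOfNorm L 4) := by
  have hN : ∀ w : latSub h, ∃ k : ℕ, ‖(0 : EuclideanSpace ℝ (Fin 36)) + w‖ ^ 2 = (k : ℝ) := by
    intro w
    obtain ⟨m, hm⟩ := inner_int h w.2 w.2
    rw [real_inner_self_eq_norm_sq] at hm
    have h0 : (0 : ℝ) ≤ m := by rw [← hm]; positivity
    have h0' : 0 ≤ m := by exact_mod_cast h0
    obtain ⟨k, rfl⟩ := Int.eq_ofNat_of_zero_le h0'
    exact ⟨k, by rw [zero_add, hm]; simp⟩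
  choose N hN using hN
  have h0L : (0 : EuclideanSpace ℝ (Fin 36)) ∈ L := (latSub h).zero_mem
  have key := hasE_Th h 0 N hN _ (fun k => rfl)
  have hz : ∀ k : ℕ, 0 < k → k < 3 →
      {y | y - 0 ∈ L ∧ normOf y = (k : ℝ)} = (∅ : Set (EuclideanSpace ℝ (Fin 36))) := by
    intro k hk hk3
    ext y
    simp only [sub_zero, Set.mem_ofPred_eq, Set.mem_empty_iff_false, iff_false]
    rintro ⟨hy, hn⟩
    have hy0 : y ≠ 0 := by
      rintro rfl
      rw [normOf_eq] at hn
      rw [norm_zero, zero_pow two_ne_zero] at hn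
      have hk0 : 0 = k := by exact_mod_cast hn
      omega
    have := hmin y hy hy0
    rw [hn] at this
    have : 3 ≤ k := by exact_mod_cast this
    omega
  refine key.cast ?_ ?_ ?_ ?_ ?_
  · have : {y | y - 0 ∈ L ∧ normOf y = ((0 : ℕ) : ℝ)} = ({0} : Set (EuclideanSpace ℝ (Fin 36))) := by
      ext y
      simp only [sub_zero, Set.mem_ofPred_eq, Set.mem_singleton_iff, normOf_eq]
      constructor
      · rintro ⟨_, hn⟩; simpa using hn
      · rintro rfl; exact ⟨h0L, by simp⟩
    rw [this]; simp
  · rw [hz 1 (by norm_num) (by norm_num)]; simp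
  · rw [hz 2 (by norm_num) (by norm_num)]; simp
  · simp [numVecsOfNorm]
  · simp [numVecsOfNorm]

lemma hasE_C (h : IsUnimodularLattice L) (hodd : IsOddLattice L)
    {u : EuclideanSpace ℝ (Fin 36)} (hu : IsChar L u) :
    HasE (Th h u 0) 0 (numVecsOfNorm (shadow L) 1) 0 (numVecsOfNorm (shadow L) 3) 0 := by
  have hN : ∀ w : latSub h, ∃ k : ℕ, ‖u + w‖ ^ 2 = (k : ℝ) := by
    intro w
    obtain ⟨k, hk⟩ := char_norm h hu w.2
    exact ⟨2 * k + 1, by rw [hk]; push_cast; ring⟩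
  choose N hN using hN
  have key := hasE_Th h u N hN _ (fun k => rfl)
  have hz : ∀ k : ℕ, Even k →
      {y | y - u ∈ L ∧ normOf y = (k : ℝ)} = (∅ : Set (EuclideanSpace ℝ (Fin 36))) := by
    intro k hk
    ext y
    simp only [Set.mem_ofPred_eq, Set.mem_empty_iff_false, iff_false]
    rintro ⟨hy, hn⟩
    obtain ⟨l, hl⟩ := char_norm h hu hy
    rw [add_sub_cancel, ← normOf_eq, hn] at hl
    have : k = 2 * l + 1 := by exact_mod_cast hl
    rw [this] at hk
    exact (Nat.not_even_iff_odd.mpr (odd_two_mul_add_one l)) hk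
  refine key.cast ?_ ?_ ?_ ?_ ?_
  · rw [hz 0 (by decide)]; simp
  · simp [numVecsOfNorm, shadow_iff h hodd hu]
  · rw [hz 2 (by decide)]; simp
  · simp [numVecsOfNorm, shadow_iff h hodd hu]
  · rw [hz 4 (by decide)]; simp

end

end

section

section
variable {L : Set (EuclideanSpace ℝ (Fin 36))}

lemma diff_B (h : IsUnimodularLattice L) {u : EuclideanSpace ℝ (Fin 36)} (hu : IsChar L u) :
    DifferentiableOn ℂ (Th h 0 u) {τ | 0 < τ.im} := by
  have h1 : DifferentiableOn ℂ (fun τ : ℂ => Th h 0 0 (τ + 1)) {τ | 0 < τ.im} := by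
    refine DifferentiableOn.comp (t := {τ : ℂ | 0 < τ.im}) (g := Th h 0 0) (Th_diff h 0) (by fun_prop) ?_
    intro τ hτ
    simpa using hτ
  exact h1.congr fun τ _ => (Th_T_A h hu τ).symm

lemma two_rel (h : IsUnimodularLattice L) (hodd : IsOddLattice L)
    (hmin : ∀ x ∈ L, x ≠ 0 → 3 ≤ normOf x) :
    (numVecsOfNorm L 4 : ℂ) = 42840 + 4096 * numVecsOfNorm (shadow L) 1 ∧
    (numVecsOfNorm L 3 : ℂ) + numVecsOfNorm (shadow L) 3 + 60 * numVecsOfNorm (shadow L) 1 = 960 := by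
  obtain ⟨u, hu⟩ := exists_char h
  have hA := hasE_A h hmin
  have hB := hA.shift.congr (g := Th h 0 u) fun τ _ => Th_T_A h hu τ
  have hC := hasE_C h hodd hu
  have dA := Th_diff h 0
  have dB := diff_B h hu
  have dC := Th_diff h u
  have hTC : ∀ τ, Th h u 0 (τ + 1) = - Th h u 0 τ := fun τ => by
    rw [Th_T_C h hu, char_eps h hu, neg_one_mul]
  generalize (numVecsOfNorm L 3 : ℂ) = N3 at *
  generalize (numVecsOfNorm L 4 : ℂ) = N4 at *
  generalize (numVecsOfNorm (shadow L) 1 : ℂ) = S1 at *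
  generalize (numVecsOfNorm (shadow L) 3 : ℂ) = S3 at *
  have E1 := ((hA.mul hasE_z).add (hB.mul hasE_y)).add (hC.mul hasE_x)
  have E2 := ((hA.mul (hasE_z.mul (hasE_y.sub hasE_x))).add
    (hB.mul (hasE_y.mul (hasE_z.add hasE_x)))).sub (hC.mul (hasE_x.mul (hasE_z.add hasE_y)))
  obtain ⟨G1, hG1⟩ := exists_form 20 (fun τ _ => by
      simp only [Pi.add_apply, Pi.sub_apply, Pi.mul_apply]
      rw [Th_T_A h hu, Th_T_B h hu, hTC, zT_T, yT_T, xT_T]; ring)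
    (fun τ hτ => by
      simp only [Pi.add_apply, Pi.sub_apply, Pi.mul_apply]
      rw [Th_S h hτ, Th_S h hτ, Th_S' h hτ, zT_S hτ, yT_S hτ, xT_S hτ]; ring)
    (((dA.mul diff_z).add (dB.mul diff_y)).add (dC.mul diff_x)) E1
  obtain ⟨G2, hG2⟩ := exists_form 22 (fun τ _ => by
      simp only [Pi.add_apply, Pi.sub_apply, Pi.mul_apply]
      rw [Th_T_A h hu, Th_T_B h hu, hTC, zT_T, yT_T, xT_T]; ring)
    (fun τ hτ => by
      simp only [Pi.add_apply, Pi.sub_apply, Pi.mul_apply]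
      rw [Th_S h hτ, Th_S h hτ, Th_S' h hτ, zT_S hτ, yT_S hτ, xT_S hτ]; ring)
    (((dA.mul (diff_z.mul (diff_y.sub diff_x))).add (dB.mul (diff_y.mul (diff_z.add diff_x)))).sub
      (dC.mul (diff_x.mul (diff_z.add diff_y)))) E2
  have r1 := rel20 G1 hG1
  have r2 := rel22 G2 hG2
  ring_nf at r1 r2
  constructor
  · linear_combination (1 / 3) * r1 + (1 / 6) * r2
  · linear_combination (1 / 48) * r1 - (1 / 48) * r2

end

end

theorem theta_series_dim36 {L : Set (EuclideanSpace ℝ (Fin 36))}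
    (huni : IsUnimodularLattice L) (hodd : IsOddLattice L)
    (hmin : ∀ x ∈ L, x ≠ 0 → 3 ≤ normOf x) :
    ∃ α β : ℕ,
      (numVecsOfNorm L 3 : ℤ) = 960 - (α : ℤ) ∧
      (numVecsOfNorm L 4 : ℤ) = 42840 + 4096 * (β : ℤ) ∧
      numVecsOfNorm (shadow L) 1 = β ∧
      (numVecsOfNorm (shadow L) 3 : ℤ) = (α : ℤ) - 60 * (β : ℤ) := by
  obtain ⟨h1, h2⟩ := two_rel huni hodd hmin
  have h1' : numVecsOfNorm L 4 = 42840 + 4096 * numVecsOfNorm (shadow L) 1 := by exact_mod_cast h1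
  have h2' : numVecsOfNorm L 3 + numVecsOfNorm (shadow L) 3 + 60 * numVecsOfNorm (shadow L) 1
      = 960 := by exact_mod_cast h2
  refine ⟨numVecsOfNorm (shadow L) 3 + 60 * numVecsOfNorm (shadow L) 1,
    numVecsOfNorm (shadow L) 1, ?_, ?_, rfl, ?_⟩
  · push_cast; omega
  · rw [h1']; push_cast; ring
  · push_cast; ring
end
end

section
/- Let L be an odd unimodular lattice in dimension 44 having minimum norm 4. Then there exist nonnegative integers α and β such that: the number of vectors of L of norm 4 equals 6600 + 16α, the number of vectors of L of norm 5 equals 811008 − 128α − 65536β, the number of vectors of the shadow S(L) of norm 1 equals β, and the number of vectors of S(L) of norm 3 equals α − 76β. -/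
open scoped RealInnerProductSpace

noncomputable section

noncomputable section
namespace Th44
section LevelOneRel
open UpperHalfPlane ModularForm ModularFormClass MatrixGroups EisensteinSeries PowerSeries

lemma E4c0 : (qExpansion 1 E₄).coeff 0 = 1 := E_qExpansion_coeff_zero _ ⟨2, rfl⟩
lemma E4c1 : (qExpansion 1 E₄).coeff 1 = 240 := E₄_qExpansion_coeff_one
lemma sig (k m : ℕ) (s : ℕ) (h : ∑ d ∈ m.divisors, d ^ k = s) :
    ArithmeticFunction.sigma k m = s := by
  rw [ArithmeticFunction.sigma_apply, h]
lemma E4c2 : (qExpansion 1 E₄).coeff 2 = 2160 := by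
  rw [E_qExpansion_coeff _ ⟨2, rfl⟩, sig _ 2 9 (by decide +kernel)]
  norm_num [show bernoulli 4 = -1 / 30 by decide +kernel]
lemma E4c3 : (qExpansion 1 E₄).coeff 3 = 6720 := by
  rw [E_qExpansion_coeff _ ⟨2, rfl⟩, sig _ 3 28 (by decide +kernel)]
  norm_num [show bernoulli 4 = -1 / 30 by decide +kernel]
lemma E6c0 : (qExpansion 1 E₆).coeff 0 = 1 := E_qExpansion_coeff_zero _ ⟨3, rfl⟩
lemma E6c1 : (qExpansion 1 E₆).coeff 1 = -504 := E₆_qExpansion_coeff_one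
lemma E6c2 : (qExpansion 1 E₆).coeff 2 = -16632 := by
  rw [E_qExpansion_coeff _ ⟨3, rfl⟩, sig _ 2 33 (by decide +kernel)]
  norm_num [show bernoulli 6 = 1 / 42 by decide +kernel]
lemma E6c3 : (qExpansion 1 E₆).coeff 3 = -122976 := by
  rw [E_qExpansion_coeff _ ⟨3, rfl⟩, sig _ 3 244 (by decide +kernel)]
  norm_num [show bernoulli 6 = 1 / 42 by decide +kernel]

lemma cm0 (f g : ℂ⟦X⟧) : (f * g).coeff 0 = f.coeff 0 * g.coeff 0 := by
  simp [coeff_mul, -coeff_zero_eq_constantCoeff]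
lemma cm1 (f g : ℂ⟦X⟧) : (f * g).coeff 1 = f.coeff 0 * g.coeff 1 + f.coeff 1 * g.coeff 0 := by
  simp [coeff_mul, Finset.Nat.antidiagonal_succ, -coeff_zero_eq_constantCoeff]
lemma cm2 (f g : ℂ⟦X⟧) : (f * g).coeff 2 =
    f.coeff 0 * g.coeff 2 + f.coeff 1 * g.coeff 1 + f.coeff 2 * g.coeff 0 := by
  simp [coeff_mul, Finset.Nat.antidiagonal_succ, -coeff_zero_eq_constantCoeff]; ring
lemma cm3 (f g : ℂ⟦X⟧) : (f * g).coeff 3 =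
    f.coeff 0 * g.coeff 3 + f.coeff 1 * g.coeff 2 + f.coeff 2 * g.coeff 1 + f.coeff 3 * g.coeff 0 := by
  simp [coeff_mul, Finset.Nat.antidiagonal_succ, -coeff_zero_eq_constantCoeff]; ring

lemma qDelta : (1728 : ℂ) • qExpansion 1 CuspForm.discriminant =
    qExpansion 1 E₄ * qExpansion 1 E₄ * qExpansion 1 E₄ - qExpansion 1 E₆ * qExpansion 1 E₆ := by
  have e : (⇑((1728 : ℂ) • CuspForm.discriminant) : ℍ → ℂ) =
      ⇑((ModularForm.mcast (by decide) (E₄.pow 3) -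
        ModularForm.mcast (by decide) (E₆.pow 2) : ModularForm 𝒮ℒ 12)) := by
    ext z
    have := discriminant_eq_E₄_cube_sub_E₆_sq z
    simp only [coe_mcast, ModularForm.coe_pow, sub_apply, Pi.pow_apply]
    change (1728 : ℂ) * discriminant z = _
    rw [this]; ring
  have := congrArg (qExpansion 1) e
  have h2 := ModularForm.qExpansion_smul one_pos one_mem_strictPeriods_SL (1728 : ℂ) CuspForm.discriminant
  have h3 : (⇑((1728 : ℂ) • CuspForm.discriminant) : ℍ → ℂ) = (1728 : ℂ) • ⇑CuspForm.discriminant := rfl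
  rw [h3, h2] at this
  rw [this]
  simp only [FunLike.coe_sub, coe_mcast,
    ModularForm.qExpansion_sub one_pos one_mem_strictPeriods_SL,
    ModularForm.qExpansion_pow one_pos one_mem_strictPeriods_SL]
  ring

lemma Dc0 : (qExpansion 1 CuspForm.discriminant).coeff 0 = 0 := by
  have := congrArg (fun φ => φ.coeff 0) qDelta
  simp only [map_smul, map_sub, cm0, E4c0, E6c0, smul_eq_mul] at this
  linear_combination this / 1728
lemma Dc1 : (qExpansion 1 CuspForm.discriminant).coeff 1 = 1 := by
  have := congrArg (fun φ => φ.coeff 1) qDelta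
  simp only [map_smul, map_sub, cm0, cm1, E4c0, E6c0, E4c1, E6c1, smul_eq_mul] at this
  linear_combination this / 1728
lemma Dc2 : (qExpansion 1 CuspForm.discriminant).coeff 2 = -24 := by
  have := congrArg (fun φ => φ.coeff 2) qDelta
  simp only [map_smul, map_sub, cm0, cm1, cm2, E4c0, E6c0, E4c1, E6c1, E4c2, E6c2, smul_eq_mul] at this
  linear_combination this / 1728
lemma Dc3 : (qExpansion 1 CuspForm.discriminant).coeff 3 = 252 := by
  have := congrArg (fun φ => φ.coeff 3) qDelta
  simp only [map_smul, map_sub, cm0, cm1, cm2, cm3, E4c0, E6c0, E4c1, E6c1, E4c2, E6c2,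
    E4c3, E6c3, smul_eq_mul] at this
  linear_combination this / 1728

/-- the weight 14 form `E₄² E₆` -/
def E14 : ModularForm 𝒮ℒ 14 := ModularForm.mcast (by decide) ((E₄.mul E₄).mul E₆)

lemma qE14 : qExpansion 1 E14 = qExpansion 1 E₄ * qExpansion 1 E₄ * qExpansion 1 E₆ := by
  rw [E14, ModularForm.qExpansion_mcast, ModularForm.qExpansion_mul one_pos one_mem_strictPeriods_SL,
    ModularForm.qExpansion_mul one_pos one_mem_strictPeriods_SL]

lemma wt14 (f : ModularForm 𝒮ℒ 14) : ∃ c : ℂ, qExpansion 1 f = c • qExpansion 1 E14 := by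
  have hr : Module.rank ℂ (ModularForm 𝒮ℒ 14) = 1 := by
    have := dimension_level_one 14 (by decide)
    simpa [Nat.ModEq] using this
  have hne : E14 ≠ 0 := by
    intro h
    have h1 := qE14
    rw [h] at h1
    have := congrArg (fun φ => φ.coeff 0) h1
    simp [cm0, E4c0, E6c0, qExpansion_zero, -coeff_zero_eq_constantCoeff] at this
  obtain ⟨c, hc⟩ := (finrank_eq_one_iff_of_nonzero' E14 hne).mp
      (Module.rank_eq_one_iff_finrank_eq_one.mp hr) f
  refine ⟨c, ?_⟩
  rw [← ModularForm.qExpansion_smul one_pos one_mem_strictPeriods_SL c E14, ← hc]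
  rfl

/-- the weight 26 form `E₄⁵ E₆` -/
def E26 : ModularForm 𝒮ℒ 26 :=
  ModularForm.mcast (by decide) (E14.mul ((E₄.mul E₄).mul E₄))

lemma qE26 : qExpansion 1 E26 =
    qExpansion 1 E14 * (qExpansion 1 E₄ * qExpansion 1 E₄ * qExpansion 1 E₄) := by
  rw [E26, ModularForm.qExpansion_mcast, ModularForm.qExpansion_mul one_pos one_mem_strictPeriods_SL,
    ModularForm.qExpansion_mul one_pos one_mem_strictPeriods_SL,
    ModularForm.qExpansion_mul one_pos one_mem_strictPeriods_SL]

lemma rel26 (f : ModularForm 𝒮ℒ 26) :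
    (qExpansion 1 f).coeff 2 + 48 * (qExpansion 1 f).coeff 1 + 1224 * (qExpansion 1 f).coeff 0 = 0 := by
  set c := (qExpansion 1 f).coeff 0 with hc
  let g : ModularForm 𝒮ℒ 26 := f - c • E26
  have hg : qExpansion 1 g = qExpansion 1 f - c • qExpansion 1 E26 := by
    rw [← ModularForm.qExpansion_smul one_pos one_mem_strictPeriods_SL c E26]
    exact ModularForm.qExpansion_sub one_pos one_mem_strictPeriods_SL f (c • E26)
  have h0 : (qExpansion 1 g).coeff 0 = 0 := by
    rw [hg]
    simp only [map_sub, map_smul, qE26, qE14, cm0, E4c0, E6c0, ← hc, smul_eq_mul]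
    ring
  have h1 := qExpansion_eq_qExpansion_discriminant_mul g h0
  obtain ⟨d, hd⟩ := wt14 (ModularForm.mcast (by decide) (CuspForm.discriminantEquiv (toCuspForm g h0)))
  rw [ModularForm.qExpansion_mcast] at hd
  have hD : qExpansion 1 ModularForm.discriminant = qExpansion 1 CuspForm.discriminant := rfl
  rw [hd, hg, hD] at h1
  have k1 := congrArg (fun φ => φ.coeff 1) h1
  have k2 := congrArg (fun φ => φ.coeff 2) h1
  simp only [map_smul, map_sub, cm0, cm1, cm2, E4c0, E6c0, E4c1, E6c1, E4c2, E6c2, smul_eq_mul,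
    qE26, qE14, Dc0, Dc1, Dc2] at k1 k2
  linear_combination k2 + 48 * k1

lemma rel38 (f : ModularForm 𝒮ℒ 38) (h0 : (qExpansion 1 f).coeff 0 = 0) :
    (qExpansion 1 f).coeff 3 + 72 * (qExpansion 1 f).coeff 2 + 2700 * (qExpansion 1 f).coeff 1 = 0 := by
  have h1 := qExpansion_eq_qExpansion_discriminant_mul f h0
  have r := rel26 (ModularForm.mcast (by decide) (CuspForm.discriminantEquiv (toCuspForm f h0)))
  rw [ModularForm.qExpansion_mcast] at r
  have hD : qExpansion 1 ModularForm.discriminant = qExpansion 1 CuspForm.discriminant := rfl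
  rw [hD] at h1
  rw [h1]
  simp only [cm1, cm2, cm3, Dc0, Dc1, Dc2, Dc3]
  linear_combination r
end LevelOneRel
end Th44
end

noncomputable section
namespace Th44
section RepSec
open UpperHalfPlane ModularForm ModularFormClass MatrixGroups PowerSeries Function Complex ModularGroup
open scoped Manifold Real

/-- `f` is represented by the power series `φ` in the variable `exp (π i τ)`. -/
def Rep (f : ℍ → ℂ) (φ : ℂ⟦X⟧) : Prop :=
  ∀ τ : ℍ, HasSum (fun n => φ.coeff n * Periodic.qParam 2 τ ^ n) (f τ)

variable {f g : ℍ → ℂ} {φ ψ : ℂ⟦X⟧}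

lemma Rep.add (hf : Rep f φ) (hg : Rep g ψ) : Rep (f + g) (φ + ψ) := fun τ => by
  simpa [add_mul] using (hf τ).add (hg τ)
lemma Rep.sub (hf : Rep f φ) (hg : Rep g ψ) : Rep (f - g) (φ - ψ) := fun τ => by
  simpa [sub_mul] using (hf τ).sub (hg τ)
lemma Rep.mul (hf : Rep f φ) (hg : Rep g ψ) : Rep (f * g) (φ * ψ) := fun τ => by
  have h1 := (hf τ).summable.norm
  have h2 := (hg τ).summable.norm
  have h3 := tsum_mul_tsum_eq_tsum_sum_antidiagonal_of_summable_norm h1 h2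
  have h4 := (summable_norm_sum_mul_antidiagonal_of_summable_norm h1 h2).of_norm.hasSum
  rw [← h3, (hf τ).tsum_eq, (hg τ).tsum_eq] at h4
  have h5 : (fun n => (φ * ψ).coeff n * Periodic.qParam 2 τ ^ n) = fun n =>
      ∑ kl ∈ Finset.HasAntidiagonal.antidiagonal n, φ.coeff kl.1 * Periodic.qParam 2 τ ^ kl.1 *
        (ψ.coeff kl.2 * Periodic.qParam 2 τ ^ kl.2) := ?_
  · rw [h5]; exact h4
  funext n
  rw [coeff_mul, Finset.sum_mul]
  refine Finset.sum_congr rfl fun p hp => ?_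
  rw [← Finset.HasAntidiagonal.mem_antidiagonal.mp hp, pow_add]; ring
lemma Rep.pow (hf : Rep f φ) (n : ℕ) (hn : 0 < n) : Rep (f ^ n) (φ ^ n) := by
  induction n with
  | zero => omega
  | succ n ih =>
    rcases Nat.eq_zero_or_pos n with rfl | h
    · simpa using hf
    · rw [pow_succ, pow_succ]; exact (ih h).mul hf

lemma qpT (τ : ℍ) : Periodic.qParam 2 (T • τ : ℍ) = - Periodic.qParam 2 τ := by
  rw [modular_T_smul]
  simp only [Periodic.qParam, coe_vadd]
  have h1 : ∀ z : ℂ, -cexp z = cexp (z + π * Complex.I) := fun z => by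
    rw [Complex.exp_add, Complex.exp_pi_mul_I]; ring
  rw [h1]
  congr 1; push_cast; ring

lemma Rep.shift (hf : Rep f φ) : Rep (fun τ => f (T • τ)) (rescale (-1) φ) := fun τ => by
  have := hf (T • τ)
  rw [qpT] at this
  convert this using 2 with n
  rw [coeff_rescale, neg_pow (Periodic.qParam 2 τ)]; ring

lemma rep_q : Rep (fun τ => Periodic.qParam 2 τ) X := fun τ => by
  convert hasSum_single 1 ?_ using 1
  · simp
  · intro n hn; simp [coeff_X, hn]

lemma exists_q (r : ℝ) (h0 : 0 < r) (h1 : r < 1) : ∃ τ : ℍ, Periodic.qParam 2 τ = r := by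
  refine ⟨⟨Complex.I * ((-Real.log r / π : ℝ) : ℂ), ?_⟩, ?_⟩
  · simp only [Complex.I_mul_im, Complex.ofReal_re]
    exact div_pos (neg_pos.mpr (Real.log_neg h0 h1)) Real.pi_pos
  · simp only [Periodic.qParam]
    rw [← Real.exp_log h0, Complex.ofReal_exp, Real.exp_log h0]
    congr 1
    have : (π : ℂ) ≠ 0 := by exact_mod_cast Real.pi_ne_zero
    push_cast
    field_simp
    rw [Complex.I_sq]; ring

lemma Rep.radius (hf : Rep f φ) :
    1 ≤ (FormalMultilinearSeries.ofScalars ℂ fun n => φ.coeff n).radius := by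
  refine le_of_forall_lt_imp_le_of_dense fun r hr ↦ ?_
  rcases eq_or_ne r 0 with rfl | hr'
  · simp
  lift r to NNReal using hr.ne_top
  apply FormalMultilinearSeries.le_radius_of_summable
  obtain ⟨τ, hτ⟩ := exists_q r (by
      have : r ≠ 0 := by exact_mod_cast hr'
      positivity) (by exact_mod_cast hr)
  have := (hf τ).summable.norm
  rw [hτ] at this
  simpa [FormalMultilinearSeries.ofScalars_norm_eq_mul] using this

lemma Rep.mdiff (hf : Rep f φ) : MDiff f := by
  have h1 := (FormalMultilinearSeries.ofScalars ℂ fun n => φ.coeff n).hasFPowerSeriesOnBall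
    (lt_of_lt_of_le one_pos hf.radius)
  have h2 := (h1.mono one_pos hf.radius).differentiableOn
  rw [UpperHalfPlane.mdifferentiable_iff]
  have h3 : DifferentiableOn ℂ (fun z => (FormalMultilinearSeries.ofScalars ℂ fun n => φ.coeff n).sum
      (Periodic.qParam 2 z)) {z | 0 < z.im} := by
    refine h2.comp (t := Metric.eball 0 1) ?_ ?_
    · exact (Periodic.differentiable_qParam (h := 2)).differentiableOn
    · intro z hz
      have : ‖Periodic.qParam 2 z‖ < 1 := Periodic.norm_qParam_lt_one two_pos hz
      simpa [← ofReal_norm] using this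
  refine h3.congr fun z hz => ?_
  simp only [comp_apply, ofComplex_apply_of_im_pos hz]
  rw [← (hf ⟨z, hz⟩).tsum_eq, FormalMultilinearSeries.sum]
  refine tsum_congr fun n => ?_
  rw [FormalMultilinearSeries.ofScalars_apply_eq, smul_eq_mul]

lemma Rep.bdd (hf : Rep f φ) : IsBoundedAtImInfty f :=
  isBoundedAtImInfty_of_hasSum_qExpansion (h := 2) (c := fun n => φ.coeff n) two_pos
    (by simpa [Rep] using hf)

lemma rep_count {ι : Type*} (k : ι → ℕ)
    (h : ∀ τ : ℍ, HasSum (fun i => Periodic.qParam 2 τ ^ k i) (f τ)) :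
    (∀ n, Finite {i // k i = n}) ∧ Rep f (PowerSeries.mk fun n => (Nat.card {i // k i = n} : ℂ)) := by
  have hfin : ∀ n, Finite {i // k i = n} := by
    intro n
    have h1 := (h UpperHalfPlane.I).summable
    have h2 : Summable fun i : {i // k i = n} => Periodic.qParam 2 UpperHalfPlane.I ^ n := by
      refine (h1.comp_injective (Subtype.val_injective (p := fun i => k i = n))).congr ?_
      rintro ⟨i, hi⟩
      simp [hi]
    by_contra hinf
    rw [not_finite_iff_infinite] at hinf
    have := (summable_const_iff _).mp h2
    exact pow_ne_zero n (Complex.exp_ne_zero _) this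
  refine ⟨hfin, fun τ => ?_⟩
  have h1 := (Equiv.sigmaFiberEquiv k).hasSum_iff.mpr (h τ)
  refine (h1.sigma fun n => ?_)
  have := hfin n
  have := Fintype.ofFinite {i // k i = n}
  convert hasSum_fintype _ using 1
  rw [coeff_mk, Nat.card_eq_fintype_card, ← nsmul_eq_mul, ← Finset.card_univ, ← Finset.sum_const]
  refine Finset.sum_congr rfl ?_
  rintro ⟨i, hi⟩ -
  simp [Equiv.sigmaFiberEquiv, hi]

/-- level one forms from S and T invariance -/
lemma exists_form (hf : Rep f φ) (k : ℕ) (hT : ∀ τ, f (T • τ) = f τ)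
    (hS : ∀ τ : ℍ, f (S • τ) = (τ : ℂ) ^ k * f τ) :
    ∃ F : ModularForm 𝒮ℒ k, ∀ n, (qExpansion 1 F).coeff n = φ.coeff (2 * n) := by
  have h1 : f ∣[(k : ℤ)] S = f := by
    ext τ
    rw [SL_slash_apply, hS, denom_S, zpow_neg, zpow_natCast, mul_right_comm,
      mul_inv_cancel₀ (pow_ne_zero _ τ.ne_zero), one_mul]
  have h2 : f ∣[(k : ℤ)] T = f := by
    ext τ
    rw [SL_slash_apply, hT]
    have : denom T τ = 1 := by
      rw [ModularGroup.denom_apply]; simp [ModularGroup.T]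
    rw [this]; simp
  let F : ModularForm 𝒮ℒ k :=
    { toFun := f
      slash_action_eq' := by
        rintro A ⟨A, rfl⟩
        exact SlashInvariantForm.slash_action_generators_SL2Z h1 h2 A
      holo' := hf.mdiff
      bdd_at_cusps' := by
        intro c hc
        rw [Subgroup.IsArithmetic.isCusp_iff_isCusp_SL2Z] at hc
        rw [OnePoint.isBoundedAt_iff_forall_SL2Z hc]
        intro γ _
        rw [SlashInvariantForm.slash_action_generators_SL2Z h1 h2]
        exact hf.bdd }
  refine ⟨F, fun n => ?_⟩
  have p2 : (2 : ℝ) ∈ (𝒮ℒ).strictPeriods := by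
    have := add_mem one_mem_strictPeriods_SL one_mem_strictPeriods_SL
    norm_num at this
    simpa using this
  have e1 : ∀ m, φ.coeff m = (qExpansion 2 F).coeff m :=
    ModularFormClass.qExpansion_coeff_unique two_pos p2 (f := F)
      (fun τ => hf τ)
  let c : ℕ → ℂ := fun m => if Even m then (qExpansion 1 F).coeff (m / 2) else 0
  have e2 : ∀ m, c m = (qExpansion 2 F).coeff m := by
    refine ModularFormClass.qExpansion_coeff_unique two_pos p2 (f := F) ?_
    intro τ
    have hq : Periodic.qParam 1 τ = Periodic.qParam 2 τ ^ 2 := by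
      simp only [Periodic.qParam]
      rw [← Complex.exp_nat_mul]; congr 1; push_cast; ring
    have h3 := ModularForm.hasSum_qExpansion F one_pos one_mem_strictPeriods_SL τ
    have hinj : Injective fun n : ℕ => 2 * n := fun a b h => by simpa using h
    refine (hinj.hasSum_iff ?_).mp (h3.congr_fun ?_)
    · intro x hx
      have : ¬ Even x := fun ⟨a, ha⟩ => hx ⟨a, by simp; omega⟩
      simp [c, this]
    · intro x
      simp [c, hq, pow_mul]
  rw [e1, ← e2]
  simp [c]
end RepSec
end Th44
end

noncomputable section
namespace Th44
section ThetaSec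
open UpperHalfPlane PowerSeries Function Complex ModularGroup
open scoped Real

def tx (τ : ℍ) : ℂ := jacobiTheta₂ 0 τ ^ 4
def ty (τ : ℍ) : ℂ := tx (T • τ)
def tw (τ : ℍ) : ℂ := Periodic.qParam 2 τ * jacobiTheta₂ (τ / 2) τ ^ 4

lemma coe_T (τ : ℍ) : ((T • τ : ℍ) : ℂ) = τ + 1 := by
  rw [modular_T_smul, coe_vadd]; push_cast; ring
lemma coe_S (τ : ℍ) : ((S • τ : ℍ) : ℂ) = -1 / τ := by
  rw [modular_S_smul]; simp [neg_div, inv_neg]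
lemma S_S (τ : ℍ) : S • S • τ = τ := by
  ext1; rw [coe_S, coe_S]; field_simp [τ.ne_zero]

lemma term_T (n : ℤ) (z τ : ℂ) :
    jacobiTheta₂_term n z (τ + 1) = jacobiTheta₂_term n (z + 1 / 2) τ := by
  simp only [jacobiTheta₂_term]
  rw [Complex.exp_eq_exp_iff_exists_int]
  obtain ⟨m, hm⟩ : Even (n * (n - 1)) := Int.even_mul_pred_self n
  refine ⟨m, ?_⟩
  have hm' : (n : ℂ) * (n - 1) = m + m := by exact_mod_cast hm
  linear_combination (π * Complex.I) * hm'

lemma ty_eq (τ : ℍ) : ty τ = jacobiTheta₂ (1 / 2) τ ^ 4 := by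
  rw [ty, tx, coe_T, jacobiTheta₂, jacobiTheta₂]
  congr 2; ext n; rw [term_T, zero_add]

lemma cpow4 (τ : ℍ) : ((-Complex.I * τ) ^ (1 / 2 : ℂ)) ^ 4 = -(τ : ℂ) ^ 2 := by
  rw [← Complex.cpow_nat_mul]
  norm_num
  rw [mul_pow, Complex.I_sq]; ring

lemma tx_S (τ : ℍ) : tx (S • τ) = - (τ : ℂ) ^ 2 * tx τ := by
  have h1 := jacobiTheta₂_functional_equation 0 τ
  have h2 := cpow4 τ
  have h0 : (-Complex.I * τ) ^ (1 / 2 : ℂ) ≠ 0 := by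
    intro h; rw [h] at h2; simp [τ.ne_zero] at h2
  rw [tx, tx, coe_S, h1, ← h2]
  generalize (-Complex.I * (τ : ℂ)) ^ (1 / 2 : ℂ) = r at *
  rw [zero_div, zero_pow two_ne_zero, mul_zero, zero_div, Complex.exp_zero]
  generalize jacobiTheta₂ 0 (-1 / τ) = J
  field_simp

lemma ty_S (τ : ℍ) : ty (S • τ) = - (τ : ℂ) ^ 2 * tw τ := by
  have h1 := jacobiTheta₂_functional_equation (τ / 2) τ
  have h2 := cpow4 τ
  have h0 : (-Complex.I * τ) ^ (1 / 2 : ℂ) ≠ 0 := by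
    intro h; rw [h] at h2; simp [τ.ne_zero] at h2
  rw [ty_eq, tw, coe_S, h1, ← h2]
  have h3 : (τ : ℂ) / 2 / τ = 1 / 2 := by field_simp [τ.ne_zero]
  have h4 : Periodic.qParam 2 τ * cexp (-π * Complex.I * (τ / 2) ^ 2 / τ) ^ 4 = 1 := by
    rw [Periodic.qParam, ← Complex.exp_nat_mul, ← Complex.exp_add, ← Complex.exp_zero]
    congr 1
    have := τ.ne_zero
    push_cast
    field_simp
    ring
  rw [h3]
  generalize (-Complex.I * (τ : ℂ)) ^ (1 / 2 : ℂ) = r at *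
  generalize jacobiTheta₂ (1 / 2) (-1 / τ) = J
  generalize cexp (-π * Complex.I * (τ / 2) ^ 2 / τ) = e at *
  field_simp
  linear_combination - J ^ 4 * h4

lemma tw_S (τ : ℍ) : tw (S • τ) = - (τ : ℂ) ^ 2 * ty τ := by
  have h := ty_S (S • τ)
  rw [S_S, coe_S] at h
  rw [h]
  field_simp [τ.ne_zero]

lemma ty_T (τ : ℍ) : ty (T • τ) = tx τ := by
  rw [ty, tx, tx, coe_T, coe_T, add_assoc, one_add_one_eq_two, jacobiTheta₂_add_right]

lemma tw_T (τ : ℍ) : tw (T • τ) = - tw τ := by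
  rw [tw, tw, qpT, coe_T]
  have : jacobiTheta₂ ((τ + 1) / 2) (τ + 1) = jacobiTheta₂ (τ / 2) τ := by
    rw [jacobiTheta₂, jacobiTheta₂]
    congr 1; ext n
    rw [term_T, show ((τ : ℂ) + 1) / 2 + 1 / 2 = τ / 2 + 1 by ring]
    simp only [jacobiTheta₂_term]
    rw [Complex.exp_eq_exp_iff_exists_int]
    exact ⟨n, by ring⟩
  rw [this]; ring

def k3 (n : ℤ) : ℕ := (n ^ 2).toNat
def k2 (n : ℤ) : ℕ := (n * (n + 1)).toNat

lemma rep_th3 : Rep (fun τ => jacobiTheta₂ 0 τ)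
    (PowerSeries.mk fun n => (Nat.card {i // k3 i = n} : ℂ)) := by
  refine (rep_count k3 fun τ => ?_).2
  refine (hasSum_jacobiTheta₂_term 0 τ.im_pos).congr_fun fun n => ?_
  rw [jacobiTheta₂_term, Periodic.qParam, ← Complex.exp_nat_mul]
  have : ((k3 n : ℕ) : ℂ) = n ^ 2 := by
    have : ((k3 n : ℕ) : ℤ) = n ^ 2 := Int.toNat_of_nonneg (sq_nonneg n)
    exact_mod_cast this
  rw [this]; congr 1; push_cast; ring

lemma rep_psi : Rep (fun τ => jacobiTheta₂ (τ / 2) τ)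
    (PowerSeries.mk fun n => (Nat.card {i // k2 i = n} : ℂ)) := by
  refine (rep_count k2 fun τ => ?_).2
  refine (hasSum_jacobiTheta₂_term (τ / 2) τ.im_pos).congr_fun fun n => ?_
  rw [jacobiTheta₂_term, Periodic.qParam, ← Complex.exp_nat_mul]
  have : ((k2 n : ℕ) : ℂ) = n * (n + 1) := by
    have : ((k2 n : ℕ) : ℤ) = n * (n + 1) := Int.toNat_of_nonneg (by
      rcases le_or_gt 0 n with h | h <;> nlinarith)
    exact_mod_cast this
  rw [this]; congr 1; push_cast; ring

/-- the first seven coefficients of a power series -/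
structure Co (φ : ℂ⟦X⟧) (a0 a1 a2 a3 a4 a5 a6 : ℂ) : Prop where
  c0 : φ.coeff 0 = a0
  c1 : φ.coeff 1 = a1
  c2 : φ.coeff 2 = a2
  c3 : φ.coeff 3 = a3
  c4 : φ.coeff 4 = a4
  c5 : φ.coeff 5 = a5
  c6 : φ.coeff 6 = a6

variable {φ ψ : ℂ⟦X⟧} {a0 a1 a2 a3 a4 a5 a6 b0 b1 b2 b3 b4 b5 b6 : ℂ}

lemma Co.mul (h : Co φ a0 a1 a2 a3 a4 a5 a6) (h' : Co ψ b0 b1 b2 b3 b4 b5 b6) :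
    Co (φ * ψ) (a0 * b0) (a0 * b1 + a1 * b0) (a0 * b2 + a1 * b1 + a2 * b0)
      (a0 * b3 + a1 * b2 + a2 * b1 + a3 * b0) (a0 * b4 + a1 * b3 + a2 * b2 + a3 * b1 + a4 * b0)
      (a0 * b5 + a1 * b4 + a2 * b3 + a3 * b2 + a4 * b1 + a5 * b0)
      (a0 * b6 + a1 * b5 + a2 * b4 + a3 * b3 + a4 * b2 + a5 * b1 + a6 * b0) := by
  obtain ⟨e0, e1, e2, e3, e4, e5, e6⟩ := h
  obtain ⟨f0, f1, f2, f3, f4, f5, f6⟩ := h'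
  constructor <;>
  simp [coeff_mul, Finset.Nat.antidiagonal_succ, -coeff_zero_eq_constantCoeff, *] <;> ring

lemma Co.add (h : Co φ a0 a1 a2 a3 a4 a5 a6) (h' : Co ψ b0 b1 b2 b3 b4 b5 b6) :
    Co (φ + ψ) (a0 + b0) (a1 + b1) (a2 + b2) (a3 + b3) (a4 + b4) (a5 + b5) (a6 + b6) := by
  obtain ⟨e0, e1, e2, e3, e4, e5, e6⟩ := h
  obtain ⟨f0, f1, f2, f3, f4, f5, f6⟩ := h'
  constructor <;> rw [map_add] <;> simp only [*]
lemma Co.sub (h : Co φ a0 a1 a2 a3 a4 a5 a6) (h' : Co ψ b0 b1 b2 b3 b4 b5 b6) :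
    Co (φ - ψ) (a0 - b0) (a1 - b1) (a2 - b2) (a3 - b3) (a4 - b4) (a5 - b5) (a6 - b6) := by
  obtain ⟨e0, e1, e2, e3, e4, e5, e6⟩ := h
  obtain ⟨f0, f1, f2, f3, f4, f5, f6⟩ := h'
  constructor <;> rw [map_sub] <;> simp only [*]
lemma Co.shift (h : Co φ a0 a1 a2 a3 a4 a5 a6) :
    Co (rescale (-1) φ) a0 (-a1) a2 (-a3) a4 (-a5) a6 := by
  obtain ⟨e0, e1, e2, e3, e4, e5, e6⟩ := h
  constructor <;> rw [coeff_rescale] <;> norm_num [*]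

lemma card_fib (k : ℤ → ℕ) (n : ℕ) (hb : ∀ i, k i = n → i ∈ Finset.Icc (-7 : ℤ) 7) :
    Nat.card {i // k i = n} = ((Finset.Icc (-7 : ℤ) 7).filter (k · = n)).card := by
  refine Nat.subtype_card _ fun i => ?_
  rw [Finset.mem_filter]
  exact ⟨fun h => h.2, fun h => ⟨hb i h, h⟩⟩

lemma co_th3 : Co (PowerSeries.mk fun n => (Nat.card {i // k3 i = n} : ℂ)) 1 2 0 0 2 0 0 := by
  have hb : ∀ n ≤ 6, ∀ i, k3 i = n → i ∈ Finset.Icc (-7 : ℤ) 7 := by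
    intro n hn i h
    have : i ^ 2 ≤ 6 := by simp only [k3] at h; omega
    rw [Finset.mem_Icc]; constructor <;> nlinarith
  constructor <;> rw [coeff_mk, card_fib _ _ (hb _ (by norm_num))] <;> 
  · norm_cast
lemma co_psi : Co (PowerSeries.mk fun n => (Nat.card {i // k2 i = n} : ℂ)) 2 0 2 0 0 0 2 := by
  have hb : ∀ n ≤ 6, ∀ i, k2 i = n → i ∈ Finset.Icc (-7 : ℤ) 7 := by
    intro n hn i h
    have : i * (i + 1) ≤ 6 := by simp only [k2] at h; omega
    rw [Finset.mem_Icc]; constructor <;> nlinarith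
  constructor <;> rw [coeff_mk, card_fib _ _ (hb _ (by norm_num))] <;> 
  · norm_cast

lemma co_X : Co (X : ℂ⟦X⟧) 0 1 0 0 0 0 0 := by
  constructor <;> simp [coeff_X]

lemma co_tx : ∃ φ, Rep tx φ ∧ Co φ 1 8 24 32 24 48 96 := by
  refine ⟨_, rep_th3.pow 4 (by norm_num), ?_⟩
  have h := co_th3.mul co_th3
  have h := h.mul h
  rw [← pow_two, ← pow_two, ← pow_mul] at h
  convert h using 1 <;> norm_num
lemma co_ty : ∃ φ, Rep ty φ ∧ Co φ 1 (-8) 24 (-32) 24 (-48) 96 := by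
  obtain ⟨φ, h1, h2⟩ := co_tx
  exact ⟨_, h1.shift, h2.shift⟩
lemma co_tw : ∃ φ, Rep tw φ ∧ Co φ 0 16 0 64 0 96 0 := by
  refine ⟨_, rep_q.mul (rep_psi.pow 4 (by norm_num)), ?_⟩
  have h := co_psi.mul co_psi
  have h := h.mul h
  rw [← pow_two, ← pow_two, ← pow_mul] at h
  have h := co_X.mul h
  convert h using 1 <;> norm_num
end ThetaSec
end Th44
end

noncomputable section
namespace Th44
section FinSec
open UpperHalfPlane PowerSeries Function Complex ModularGroup

theorem relations {A C : ℍ → ℂ} {φ ψ : ℂ⟦X⟧} (hA : Rep A φ) (hC : Rep C ψ)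
    (ATT : ∀ τ, A (T • T • τ) = A τ) (CT : ∀ τ, C (T • τ) = - C τ)
    (AS : ∀ τ : ℍ, A (S • τ) = - (τ : ℂ) ^ 22 * A τ)
    (CS : ∀ τ : ℍ, C (S • τ) = - (τ : ℂ) ^ 22 * A (T • τ))
    {n4 n5 n6 s1 s3 s5 : ℂ} (cA : Co φ 1 0 0 0 n4 n5 n6) (cC : Co ψ 0 s1 0 s3 0 s5 0) :
    2 * n4 - 32 * s3 - 2432 * s1 - 13200 = 0 ∧
    256 * n4 + 32 * n5 + 2097152 * s1 - 27641856 = 0 := by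
  obtain ⟨x, hx, cx⟩ := co_tx
  obtain ⟨y, hy, cy⟩ := co_ty
  obtain ⟨w, hw, cw⟩ := co_tw
  have BS : ∀ τ : ℍ, A (T • S • τ) = - (τ : ℂ) ^ 22 * C τ := by
    intro τ
    have h := CS (S • τ)
    rw [S_S, coe_S] at h
    rw [h, div_pow]
    field_simp [τ.ne_zero]
  have hB := hA.shift
  have cB := cA.shift
  constructor
  · have hF := (((hA.mul hx).mul (hy.sub hw)).add ((hB.mul hy).mul (hx.add hw))).sub
      ((hC.mul hw).mul (hx.add hy))
    have cF := (((cA.mul cx).mul (cy.sub cw)).add ((cB.mul cy).mul (cx.add cw))).sub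
      ((cC.mul cw).mul (cx.add cy))
    obtain ⟨F, h⟩ := exists_form hF 26 (by
      intro τ
      have e : ty (T • τ) = tx τ := ty_T τ
      have e' : tx (T • τ) = ty τ := rfl
      simp only [Pi.sub_apply, Pi.add_apply, Pi.mul_apply, ATT, CT, e, e', tw_T]
      ring) (by
      intro τ
      simp only [Pi.sub_apply, Pi.add_apply, Pi.mul_apply, AS, BS, CS, tx_S, ty_S, tw_S]
      ring)
    have r := rel26 F
    have h0 := h 0
    have h1 := h 1
    have h2 := h 2
    rw [show 2 * 0 = 0 from rfl, cF.c0] at h0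
    rw [show 2 * 1 = 2 from rfl, cF.c2] at h1
    rw [show 2 * 2 = 4 from rfl, cF.c4] at h2
    rw [h0, h1, h2] at r
    linear_combination r
  · have hF := (((((hA.mul (hx.pow 5 (by norm_num))).mul hy).mul hw).mul (hy.sub hw)).sub
      ((((hB.mul (hy.pow 5 (by norm_num))).mul hx).mul hw).mul (hx.add hw))).add
      ((((hC.mul (hw.pow 5 (by norm_num))).mul hx).mul hy).mul (hx.add hy))
    have p5 : ∀ u : ℂ⟦X⟧, u ^ 5 = u * u * (u * u) * u := fun u => by ring
    have cF := (((((cA.mul (((cx.mul cx).mul (cx.mul cx)).mul cx)).mul cy).mul cw).mul (cy.sub cw)).sub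
      ((((cB.mul (((cy.mul cy).mul (cy.mul cy)).mul cy)).mul cx).mul cw).mul (cx.add cw))).add
      ((((cC.mul (((cw.mul cw).mul (cw.mul cw)).mul cw)).mul cx).mul cy).mul (cx.add cy))
    rw [← p5, ← p5, ← p5] at cF
    obtain ⟨F, h⟩ := exists_form hF 38 (by
      intro τ
      have e : ty (T • τ) = tx τ := ty_T τ
      have e' : tx (T • τ) = ty τ := rfl
      simp only [Pi.sub_apply, Pi.add_apply, Pi.mul_apply, Pi.pow_apply, ATT, CT, e, e', tw_T]
      ring) (by
      intro τ
      simp only [Pi.sub_apply, Pi.add_apply, Pi.mul_apply, Pi.pow_apply, AS, BS, CS, tx_S, ty_S, tw_S]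
      ring)
    have h0 := h 0
    have h1 := h 1
    have h2 := h 2
    have h3 := h 3
    rw [show 2 * 0 = 0 from rfl, cF.c0] at h0
    rw [show 2 * 1 = 2 from rfl, cF.c2] at h1
    rw [show 2 * 2 = 4 from rfl, cF.c4] at h2
    rw [show 2 * 3 = 6 from rfl, cF.c6] at h3
    have r := rel38 F (by rw [h0]; ring)
    rw [h1, h2, h3] at r
    linear_combination r
end FinSec
end Th44
end

noncomputable section
namespace Th44
section PoissonSec
set_option linter.unusedSectionVars false
set_option linter.unusedVariables false
open MeasureTheory Complex Function
open scoped Real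

variable {d : Type*} [Fintype d]

/-- integer points of the real vector space `d → ℝ` -/
def zc (m : d → ℤ) : d → ℝ := fun i => m i

def box (m : d → ℤ) : Set (d → ℝ) := {x | ∀ i, x i ∈ Set.Ioc ((m i : ℝ)) (m i + 1)}

lemma mem_box {m : d → ℤ} {x : d → ℝ} : x ∈ box m ↔ ∀ i, ⌈x i⌉ = m i + 1 := by
  simp only [box, Set.mem_ofPred_eq, Set.mem_Ioc, Int.ceil_eq_iff]
  refine forall_congr' fun i => ?_
  push_cast
  constructor <;> rintro ⟨h1, h2⟩ <;> constructor <;> linarith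

lemma box_meas (m : d → ℤ) : MeasurableSet (box m) :=
  MeasurableSet.univ_pi' fun i => measurableSet_Ioc

lemma integral_box (f : (d → ℝ) → ℂ) (hf : Integrable f) :
    ∫ x, f x = ∑' m : d → ℤ, ∫ x in box 0, f (x + zc m) := by
  have h1 : (⋃ m : d → ℤ, box m) = Set.univ := by
    ext x
    simp only [Set.mem_iUnion, Set.mem_univ, iff_true]
    exact ⟨fun i => ⌈x i⌉ - 1, mem_box.mpr fun i => by ring⟩
  have h2 : Pairwise (Disjoint on fun m : d → ℤ => box m) := by
    intro m m' hmm
    refine Set.disjoint_left.mpr fun x hx hx' => hmm ?_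
    ext i
    have := mem_box.mp hx i
    have := mem_box.mp hx' i
    omega
  rw [← setIntegral_univ, ← h1, integral_iUnion box_meas h2 hf.integrableOn]
  refine tsum_congr fun m => ?_
  rw [← (measurePreserving_add_right volume (zc m)).setIntegral_preimage_emb
    (measurableEmbedding_addRight _)]
  congr 2
  ext x
  simp only [Set.mem_preimage, mem_box, zc, Pi.add_apply, Int.ceil_add_intCast, Pi.zero_apply]
  refine forall_congr' fun i => ?_
  omega

local instance : MeasureSpace UnitAddCircle := ⟨AddCircle.haarAddCircle⟩

def tor (x : d → ℝ) : UnitAddTorus d := fun i => (x i : UnitAddCircle)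

lemma tor_quot : IsOpenQuotientMap (tor : (d → ℝ) → UnitAddTorus d) :=
  IsOpenQuotientMap.piMap fun _ => QuotientAddGroup.isOpenQuotientMap_mk

lemma tor_eq {x y : d → ℝ} (h : tor x = tor y) : ∃ m : d → ℤ, y = x + zc m := by
  have : ∀ i, ∃ m : ℤ, y i = x i + m := by
    intro i
    have := congrFun h i
    simp only [tor] at this
    rw [← sub_eq_zero, ← AddCircle.coe_sub, AddCircle.coe_eq_zero_iff] at this
    obtain ⟨n, hn⟩ := this
    refine ⟨-n, ?_⟩
    simp at hn
    push_cast
    linarith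
  choose m hm using this
  exact ⟨m, funext hm⟩

lemma mF_tor (k : d → ℤ) (x : d → ℝ) :
    UnitAddTorus.mFourier k (tor x) = cexp (2 * π * Complex.I * ∑ i, (k i : ℂ) * x i) := by
  simp only [UnitAddTorus.mFourier, ContinuousMap.coe_mk, tor, fourier_coe_apply]
  rw [← Complex.exp_sum]
  congr 1
  rw [Finset.mul_sum]
  refine Finset.sum_congr rfl fun i _ => ?_
  simp; ring

theorem poisson (f : (d → ℝ) → ℂ) (hc : Continuous f) (hi : Integrable f)
    (hb : ∀ R : ℝ, ∃ u : (d → ℤ) → ℝ, Summable u ∧ ∀ m x, ‖x‖ ≤ R → ‖f (x + zc m)‖ ≤ u m)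
    (g : (d → ℤ) → ℂ) (hg : Summable g)
    (hgf : ∀ k : d → ℤ, ∫ x, f x * cexp (-2 * π * Complex.I * ∑ i, (k i : ℂ) * x i) = g k)
    (s : d → ℝ) :
    ∑' m : d → ℤ, f (s + zc m) = ∑' k : d → ℤ, g k * cexp (2 * π * Complex.I * ∑ i, (k i : ℂ) * s i) := by
  let G : (d → ℝ) → ℂ := fun x => ∑' m : d → ℤ, f (x + zc m)
  have Gc : Continuous G := by
    rw [continuous_iff_continuousAt]
    intro x
    obtain ⟨u, hu, hu'⟩ := hb (‖x‖ + 1)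
    have : ContinuousOn G (Metric.ball 0 (‖x‖ + 1)) :=
      continuousOn_tsum (fun m => (hc.comp (continuous_id.add continuous_const)).continuousOn) hu
        fun m y hy => hu' m y (by simpa using (mem_ball_zero_iff.mp hy).le)
    exact this.continuousAt (Metric.isOpen_ball.mem_nhds (by simp))
  have Gp : ∀ x m, G (x + zc m) = G x := by
    intro x m
    simp only [G]
    rw [← (Equiv.addLeft m).tsum_eq fun m' => f (x + zc m')]
    refine tsum_congr fun m' => ?_
    congr 1
    ext i; simp [zc, add_assoc]
  let F : UnitAddTorus d → ℂ := fun t => G (surjInv tor_quot.surjective t)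
  have FG : ∀ x, F (tor x) = G x := by
    intro x
    obtain ⟨m, hm⟩ := tor_eq (surjInv_eq tor_quot.surjective (tor x))
    simp only [F]
    rw [← Gp _ m, ← hm]
  have Fc : Continuous F := by
    rw [tor_quot.isQuotientMap.continuous_iff]
    exact Gc.congr fun x => (FG x).symm
  have key : ∀ k, UnitAddTorus.mFourierCoeff F k = g k := by
    intro k
    rw [UnitAddTorus.mFourierCoeff_eq_integral F k 0, ← hgf k]
    have e1 : {x : d → ℝ | ∀ i, x i ∈ Set.Ioc ((0 : d → ℝ) i) ((0 : d → ℝ) i + 1)} = box 0 := by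
      simp [box]
    rw [e1]
    have e2 : ∀ x : d → ℝ, ‖cexp (-2 * π * Complex.I * ∑ i, (k i : ℂ) * x i)‖ = 1 := by
      intro x
      rw [show (-2 * π * Complex.I * ∑ i, (k i : ℂ) * x i) = ((-2 * π * ∑ i, (k i : ℝ) * x i : ℝ) : ℂ) * Complex.I by push_cast; ring]
      exact Complex.norm_exp_ofReal_mul_I _
    have e3 : Continuous fun x : d → ℝ => cexp (-2 * π * Complex.I * ∑ i, (k i : ℂ) * x i) := by
      fun_prop
    rw [integral_box]
    · obtain ⟨u, hu, hu'⟩ := hb 1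
      have hx : ∀ x ∈ box (0 : d → ℤ), ‖x‖ ≤ 1 := by
        intro x hx
        refine (pi_norm_le_iff_of_nonneg zero_le_one).mpr fun i => ?_
        have := hx i
        simp at this
        rw [Real.norm_eq_abs, abs_le]; constructor <;> linarith
      have hvol : volume (box (0 : d → ℤ)) ≠ ⊤ := by
        refine (measure_mono (t := Metric.closedBall 0 1) fun x h => ?_).trans_lt
          measure_closedBall_lt_top |>.ne
        simpa using hx x h
      have : IsFiniteMeasure (volume.restrict (box (0 : d → ℤ))) := ⟨by
        simpa using hvol.lt_top⟩
      have hn : ∀ (m : d → ℤ), ∀ᵐ x ∂(volume.restrict (box (0 : d → ℤ))),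
          ‖f (x + zc m) * cexp (-2 * π * Complex.I * ∑ i, (k i : ℂ) * (x + zc m) i)‖ ≤ u m := by
        intro m
        filter_upwards [ae_restrict_mem (box_meas 0)] with x h
        rw [norm_mul, e2, mul_one]
        exact hu' m x (hx x h)
      have hm : ∀ (m : d → ℤ), Integrable (fun x =>
          f (x + zc m) * cexp (-2 * π * Complex.I * ∑ i, (k i : ℂ) * (x + zc m) i))
          (volume.restrict (box (0 : d → ℤ))) := by
        intro m
        refine (integrable_const (u m)).mono' ?_ (hn m)
        exact ((hc.mul e3).comp (continuous_id.add continuous_const)).aestronglyMeasurable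
      have hper : ∀ (m : d → ℤ) (x : d → ℝ), cexp (-2 * π * Complex.I * ∑ i, (k i : ℂ) * (x + zc m) i) =
          cexp (-2 * π * Complex.I * ∑ i, (k i : ℂ) * x i) := by
        intro m x
        rw [Complex.exp_eq_exp_iff_exists_int]
        refine ⟨- ∑ i, k i * m i, ?_⟩
        simp only [zc, Pi.add_apply]
        push_cast
        simp only [mul_add, Finset.sum_add_distrib]
        ring
      rw [integral_tsum_of_summable_integral_norm]
      · refine setIntegral_congr_fun (box_meas 0) fun x _ => ?_
        simp only [hper]
        rw [tsum_mul_right]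
        have e4 : UnitAddTorus.mFourier (-k) (tor x) =
            cexp (-2 * π * Complex.I * ∑ i, (k i : ℂ) * x i) := by
          rw [mF_tor]; congr 1; simp
        change UnitAddTorus.mFourier (-k) (tor x) • F (tor x) = _
        rw [FG, e4, smul_eq_mul, mul_comm]
      · exact hm
      · refine (hu.mul_right (volume.real (box (0 : d → ℤ)))).of_nonneg_of_le
          (fun m => integral_nonneg fun x => norm_nonneg _) fun m => ?_
        refine (integral_mono_ae (hm m).norm (integrable_const (u m)) (hn m)).trans ?_
        simp [mul_comm]
    · refine (hi.norm.mono' ?_ ?_)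
      · exact hi.1.mul e3.aestronglyMeasurable
      · filter_upwards with x
        rw [norm_mul, e2, mul_one]
  have := UnitAddTorus.hasSum_mFourier_series_apply_of_summable (f := ⟨F, Fc⟩) (by
    refine hg.congr fun k => ?_
    exact (key k).symm) (tor s)
  simp only [ContinuousMap.coe_mk, FG, mF_tor, smul_eq_mul, key] at this
  exact this.tsum_eq.symm
end PoissonSec
end Th44
end

noncomputable section
namespace Th44
section GaussSec
set_option linter.unusedSectionVars false
set_option linter.unusedVariables false
open MeasureTheory Complex Function UpperHalfPlane
open scoped Real RealInnerProductSpace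

lemma summable_pi (h : ℤ → ℝ) (h0 : ∀ m, 0 ≤ h m) (hs : Summable h) :
    ∀ n : ℕ, Summable fun m : Fin n → ℤ => ∏ i, h (m i) := by
  intro n
  induction n with
  | zero => exact Summable.of_finite
  | succ n ih =>
    rw [← (Fin.consEquiv (fun _ : Fin (n + 1) => ℤ)).summable_iff]
    refine (hs.mul_of_nonneg ih h0 fun m => Finset.prod_nonneg fun i _ => h0 _).congr ?_
    rintro ⟨a, m⟩
    simp [Fin.prod_univ_succ]

variable {n : ℕ} {V : Type*} [NormedAddCommGroup V] [InnerProductSpace ℝ V] [FiniteDimensional ℝ V]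
  [MeasurableSpace V] [BorelSpace V]

lemma gsum (Φ : (Fin n → ℝ) ≃L[ℝ] V) (B : ℝ) (hB : 0 < B) (R : ℝ) :
    ∃ u : (Fin n → ℤ) → ℝ, Summable u ∧ ∀ m x, ‖x‖ ≤ R →
      Real.exp (-B * ‖Φ (x + zc m)‖ ^ 2) ≤ u m := by
  obtain ⟨K, hK, hΦ⟩ : ∃ K : ℝ, 0 < K ∧ ∀ u, ‖u‖ ≤ K * ‖Φ u‖ := by
    refine ⟨‖(Φ.symm : V →L[ℝ] (Fin n → ℝ))‖ + 1, by positivity, fun u => ?_⟩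
    have := (Φ.symm : V →L[ℝ] (Fin n → ℝ)).le_opNorm (Φ u)
    simp at this
    nlinarith [norm_nonneg (Φ u)]
  let c : ℝ := B / (K ^ 2 * (n + 1))
  have hc : 0 < c := by positivity
  let h : ℤ → ℝ := fun m => Real.exp (c * R ^ 2) * Real.exp (-(c / 2) * |(m : ℝ)|)
  have hs : Summable h := by
    refine Summable.mul_left _ ?_
    refine Summable.of_nat_of_neg ?_ ?_ <;>
    · have := Real.summable_exp_nat_mul_iff.mpr (neg_lt_zero.mpr (half_pos hc))
      refine this.congr fun k => ?_
      simp [mul_comm]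
  refine ⟨_, summable_pi h (fun m => by positivity) hs n, fun m x hx => ?_⟩
  simp only [h]
  rw [← Finset.prod_congr rfl fun i _ => Real.exp_add _ _, ← Real.exp_sum, Real.exp_le_exp]
  have h1 : ∑ i, ((x + zc m) i) ^ 2 ≤ n * (K * ‖Φ (x + zc m)‖) ^ 2 := by
    have : ∀ i ∈ Finset.univ, ((x + zc m) i) ^ 2 ≤ (K * ‖Φ (x + zc m)‖) ^ 2 := by
      intro i _
      rw [← sq_abs]
      have := norm_le_pi_norm (x + zc m) i
      rw [Real.norm_eq_abs] at this
      have := hΦ (x + zc m)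
      gcongr
      linarith
    simpa using Finset.sum_le_card_nsmul _ _ _ this
  have h2 : ∀ i, |(m i : ℝ)| / 2 - R ^ 2 ≤ ((x + zc m) i) ^ 2 := by
    intro i
    have e1 := (norm_le_pi_norm x i).trans hx
    rw [Real.norm_eq_abs] at e1
    have e2 : x i ^ 2 ≤ R ^ 2 := sq_le_sq' (by linarith [neg_abs_le (x i)]) (by linarith [le_abs_self (x i)])
    have e3 : |(m i : ℝ)| ≤ (m i : ℝ) ^ 2 := by
      have : |m i| ≤ (m i) ^ 2 := by
        rw [← sq_abs]; nlinarith [abs_nonneg (m i), Int.le_self_sq |m i|]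
      exact_mod_cast this
    simp only [Pi.add_apply, zc]
    nlinarith [sq_nonneg (2 * x i + m i)]
  have h3 := Finset.sum_le_sum fun i (_ : i ∈ Finset.univ) => h2 i
  have h4 : c * (n * (K * ‖Φ (x + zc m)‖) ^ 2) ≤ B * ‖Φ (x + zc m)‖ ^ 2 := by
    have : c * (n * (K * ‖Φ (x + zc m)‖) ^ 2) = (n / (n + 1)) * (B * ‖Φ (x + zc m)‖ ^ 2) := by
      simp only [c]; field_simp
    rw [this]
    refine mul_le_of_le_one_left (by positivity) ?_
    rw [div_le_one (by positivity)]; linarith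
  have h5 := mul_le_mul_of_nonneg_left (h3.trans h1) hc.le
  rw [Finset.mul_sum] at h5
  have h6 : ∑ i, (c * R ^ 2 + -(c / 2) * |(m i : ℝ)|) = - ∑ i, c * (|(m i : ℝ)| / 2 - R ^ 2) := by
    rw [← Finset.sum_neg_distrib]
    refine Finset.sum_congr rfl fun i _ => by ring
  rw [h6]
  linarith

def gs (τ : ℍ) (v : V) : ℂ := cexp (π * Complex.I * τ * ‖v‖ ^ 2)

lemma norm_gs (τ : ℍ) (v : V) : ‖gs τ v‖ = Real.exp (-(π * τ.im) * ‖v‖ ^ 2) := by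
  rw [gs, Complex.norm_exp]
  congr 1
  rw [show (π * Complex.I * τ * ‖v‖ ^ 2 : ℂ) = ((π * ‖v‖ ^ 2 : ℝ) : ℂ) * (τ * Complex.I) by push_cast; ring,
    Complex.re_ofReal_mul, Complex.mul_I_re, UpperHalfPlane.coe_im]
  ring

lemma gs_bound (Φ : (Fin n → ℝ) ≃L[ℝ] V) (τ : ℍ) (R : ℝ) :
    ∃ u : (Fin n → ℤ) → ℝ, Summable u ∧ ∀ m x, ‖x‖ ≤ R → ‖gs τ (Φ (x + zc m))‖ ≤ u m := by
  simp only [norm_gs]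
  exact gsum Φ _ (mul_pos Real.pi_pos τ.im_pos) R

lemma gs_summable (Φ : (Fin n → ℝ) ≃L[ℝ] V) (τ : ℍ) (s : V) :
    Summable fun m : Fin n → ℤ => gs τ (s + Φ (zc m)) := by
  obtain ⟨u, hu, hu'⟩ := gs_bound Φ τ ‖Φ.symm s‖
  refine Summable.of_norm_bounded hu fun m => ?_
  simpa using hu' m _ le_rfl

theorem gauss_poisson (Φ Ψ : (Fin n → ℝ) ≃L[ℝ] V)
    (hd : ∀ k u, ⟪Ψ k, Φ u⟫ = ∑ i, k i * u i) :
    ∃ c : ℂ, ∀ (τ : ℍ) (s : V), ∑' m : Fin n → ℤ, gs (ModularGroup.S • τ) (s + Φ (zc m)) =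
      c * (-Complex.I * τ) ^ (n / 2 : ℂ) *
        ∑' k : Fin n → ℤ, gs τ (Ψ (zc k)) * cexp (2 * π * Complex.I * ⟪Ψ (zc k), s⟫) := by
  have hn : Module.finrank ℝ V = n := by
    rw [← Φ.toLinearEquiv.finrank_eq]; simp
  obtain ⟨c, hc⟩ : ∃ c : NNReal, (volume : Measure (Fin n → ℝ)).map Φ = c • (volume : Measure V) := by
    have : ((volume : Measure (Fin n → ℝ)).map Φ).IsAddHaarMeasure :=
      Φ.isAddHaarMeasure_map _
    exact ⟨_, Measure.isAddLeftInvariant_eq_smul _ _⟩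
  have me : MeasurableEmbedding Φ := Φ.toHomeomorph.measurableEmbedding
  refine ⟨(c : ℝ), fun τ s => ?_⟩
  have hτ := τ.ne_zero
  let b : ℂ := π * Complex.I / τ
  have hb : 0 < b.re := by
    have h1 : b = - (π * Complex.I * (ModularGroup.S • τ : ℍ)) := by
      rw [coe_S]; simp only [b]; field_simp
    rw [h1, show (-(π * Complex.I * (ModularGroup.S • τ : ℍ)) : ℂ) = (π : ℂ) * (-((ModularGroup.S • τ : ℍ) * Complex.I)) by ring,
      Complex.re_ofReal_mul]
    simp only [Complex.neg_re, Complex.mul_I_re, neg_neg, UpperHalfPlane.coe_im]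
    exact mul_pos Real.pi_pos (ModularGroup.S • τ).im_pos
  have hgs : ∀ v : V, gs (ModularGroup.S • τ) v = cexp (-b * ‖v‖ ^ 2) := by
    intro v
    rw [gs, coe_S]; congr 1; simp only [b]; field_simp
  have hint : ∀ k : Fin n → ℝ, ∫ u : Fin n → ℝ, gs (ModularGroup.S • τ) (Φ u) *
      cexp (-2 * π * Complex.I * ∑ i, (k i : ℂ) * u i) =
      (c : ℝ) * (-Complex.I * τ) ^ (n / 2 : ℂ) * gs τ (Ψ k) := by
    intro k
    have e1 : ∀ u, gs (ModularGroup.S • τ) (Φ u) * cexp (-2 * π * Complex.I * ∑ i, (k i : ℂ) * u i) =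
        cexp (-b * ‖Φ u‖ ^ 2 + (-2 * π * Complex.I) * ⟪Ψ k, Φ u⟫) := by
      intro u
      rw [hgs, ← Complex.exp_add, hd]; push_cast; rfl
    simp only [e1]
    rw [← me.integral_map (fun v => cexp (-b * ‖v‖ ^ 2 + (-2 * π * Complex.I) * ⟪Ψ k, v⟫)), hc,
      integral_smul_nnreal_measure, GaussianFourier.integral_cexp_neg_mul_sq_norm_add hb, hn]
    have e2 : (π : ℂ) / b = -Complex.I * τ := by
      have : (π : ℂ) ≠ 0 := by exact_mod_cast Real.pi_ne_zero
      simp only [b]; field_simp; rw [Complex.I_sq]; ring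
    have e3 : (-2 * π * Complex.I) ^ 2 * ‖Ψ k‖ ^ 2 / (4 * b) = π * Complex.I * τ * ‖Ψ k‖ ^ 2 := by
      have : (π : ℂ) ≠ 0 := by exact_mod_cast Real.pi_ne_zero
      simp only [b]; field_simp; ring
    rw [e2, e3, gs, NNReal.smul_def, Complex.real_smul]
    ring
  have hP := poisson (fun u => gs (ModularGroup.S • τ) (Φ u)) (by
      simp only [hgs]
      have := Φ.continuous
      fun_prop) (by
      have h1 := GaussianFourier.integrable_cexp_neg_mul_sq_norm_add hb 0 (0 : V)
      have h2 : Integrable (fun v : V => gs (ModularGroup.S • τ) v) ((volume : Measure (Fin n → ℝ)).map Φ) := by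
        rw [hc]
        refine Integrable.smul_measure_nnreal ?_
        simp only [hgs]
        simpa using h1
      exact (me.integrable_map_iff).mp h2)
    (gs_bound Φ _)
    (fun k => (c : ℝ) * (-Complex.I * τ) ^ (n / 2 : ℂ) * gs τ (Ψ (zc k))) (by
      have := gs_summable Ψ τ 0
      simp only [zero_add] at this
      exact this.mul_left _) (fun k => by simpa [zc] using hint (zc k)) (Φ.symm s)
  simp only [map_add, ContinuousLinearEquiv.apply_symm_apply] at hP
  rw [hP, ← tsum_mul_left]
  refine tsum_congr fun k => ?_
  have : ∑ i, (k i : ℂ) * (Φ.symm s i) = ⟪Ψ (zc k), s⟫ := by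
    have := hd (zc k) (Φ.symm s)
    rw [ContinuousLinearEquiv.apply_symm_apply] at this
    rw [this]; simp [zc]
  rw [this, mul_assoc]
end GaussSec
end Th44
end

open scoped RealInnerProductSpace
noncomputable section
namespace Th44
section LatSec
set_option linter.unusedSectionVars false
set_option linter.unusedVariables false
open Function

abbrev V44 := EuclideanSpace ℝ (Fin 44)

variable {L : Set V44}

lemma mem_L (huni : IsUnimodularLattice L) {v : V44} : v ∈ L ↔ ∀ y ∈ L, ∃ m : ℤ, ⟪v, y⟫ = (m : ℝ) := by
  conv_lhs => rw [huni]
  rfl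

def lat (huni : IsUnimodularLattice L) : Submodule ℤ V44 where
  carrier := L
  zero_mem' := (mem_L huni).mpr fun y _ => ⟨0, by simp⟩
  add_mem' := by
    intro a b ha hb
    refine (mem_L huni).mpr fun y hy => ?_
    obtain ⟨m, hm⟩ := (mem_L huni).mp ha y hy
    obtain ⟨k, hk⟩ := (mem_L huni).mp hb y hy
    exact ⟨m + k, by rw [inner_add_left, hm, hk]; push_cast; ring⟩
  smul_mem' := by
    intro c a ha
    refine (mem_L huni).mpr fun y hy => ?_
    obtain ⟨m, hm⟩ := (mem_L huni).mp ha y hy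
    exact ⟨c * m, by rw [← Int.cast_smul_eq_zsmul ℝ, inner_smul_left, hm]; simp⟩

lemma min4 (hmin : HasMinNorm L 4) {x : V44} (hx : x ∈ L) (h0 : x ≠ 0) : 4 ≤ ‖x‖ ^ 2 := by
  rw [← real_inner_self_eq_norm_sq]
  exact hmin.2 ⟨x, hx, h0, rfl⟩

lemma lat_discrete (huni : IsUnimodularLattice L) (hmin : HasMinNorm L 4) :
    DiscreteTopology (lat huni) := by
  refine DiscreteTopology.of_forall_le_dist (r := 1) one_pos ?_
  intro x y hxy
  have h1 : (x : V44) - y ∈ lat huni := sub_mem x.2 y.2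
  have h2 := min4 hmin h1 (sub_ne_zero.mpr fun h => hxy (Subtype.ext h))
  rw [Subtype.dist_eq, dist_eq_norm]
  nlinarith [norm_nonneg ((x : V44) - y)]

lemma lat_span (huni : IsUnimodularLattice L) (hmin : HasMinNorm L 4) :
    Submodule.span ℝ (lat huni : Set V44) = ⊤ := by
  rw [← Submodule.orthogonal_eq_bot_iff, Submodule.eq_bot_iff]
  intro v hv
  by_contra h0
  have h1 : ‖v‖⁻¹ • v ∈ L := by
    refine (mem_L huni).mpr fun y hy => ⟨0, ?_⟩
    have := (Submodule.mem_orthogonal' _ _).mp hv y (Submodule.subset_span hy)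
    rw [inner_smul_left, this]; simp
  have h2 := min4 hmin h1 (smul_ne_zero (inv_ne_zero (norm_ne_zero_iff.mpr h0)) h0)
  rw [norm_smul, norm_inv, norm_norm, inv_mul_cancel₀ (norm_ne_zero_iff.mpr h0)] at h2
  norm_num at h2

lemma basis_ortho {d : ℕ} {W : Type*} [NormedAddCommGroup W] [InnerProductSpace ℝ W]
    (b : Module.Basis (Fin d) ℝ W) (v : W) (h0 : ∀ i, ⟪v, b i⟫ = 0) : v = 0 := by
  have h3 : ⟪v, ∑ i, b.equivFun v i • b i⟫ = 0 := by
    rw [inner_sum]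
    refine Finset.sum_eq_zero fun i _ => ?_
    rw [inner_smul_right, h0, mul_zero]
  rw [b.sum_equivFun v] at h3
  exact inner_self_eq_zero.mp h3

theorem lat_bases (huni : IsUnimodularLattice L) (hmin : HasMinNorm L 4) :
    ∃ Φ Ψ : (Fin 44 → ℝ) ≃L[ℝ] V44, (∀ k u, ⟪Ψ k, Φ u⟫ = ∑ i, k i * u i) ∧
      (∀ v, v ∈ L ↔ ∃ m, Φ (zc m) = v) ∧ (∀ v, v ∈ L ↔ ∃ m, Ψ (zc m) = v) := by
  have := lat_discrete huni hmin
  have : IsZLattice ℝ (lat huni) := ⟨lat_span huni hmin⟩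
  have := ZLattice.module_free ℝ (lat huni)
  have := ZLattice.module_finite ℝ (lat huni)
  have hr : Module.finrank ℤ (lat huni) = 44 := by
    rw [ZLattice.rank ℝ]; simp
  let b₀ : Module.Basis (Fin 44) ℤ (lat huni) := Module.finBasisOfFinrankEq ℤ _ hr
  let b : Module.Basis (Fin 44) ℝ V44 := b₀.ofZLatticeBasis ℝ (lat huni)
  have hb : Submodule.span ℤ (Set.range b) = lat huni := b₀.ofZLatticeBasis_span ℝ
  have hbL : ∀ i, b i ∈ L := fun i => by
    have : b i ∈ lat huni := hb ▸ Submodule.subset_span ⟨i, rfl⟩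
    exact this
  have hm : ∀ v, v ∈ L ↔ ∃ m : Fin 44 → ℤ, b.equivFun.symm (zc m) = v := by
    intro v
    change v ∈ lat huni ↔ _
    rw [← hb, b.mem_span_iff_repr_mem ℤ]
    constructor
    · intro h
      choose m hm using h
      refine ⟨m, ?_⟩
      rw [LinearEquiv.symm_apply_eq]
      ext i
      simpa [zc] using hm i
    · rintro ⟨m, rfl⟩ i
      refine ⟨m i, ?_⟩
      have h3 := congrFun (b.equivFun.apply_symm_apply (zc m)) i
      rw [Module.Basis.equivFun_apply] at h3
      rw [h3]; simp [zc]
  let D : V44 →ₗ[ℝ] (Fin 44 → ℝ) := LinearMap.pi fun i => innerₗ V44 (b i)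
  have hD : ∀ v i, D v i = ⟪v, b i⟫ := fun v i => by
    simp [D, real_inner_comm]
  have hDi : Injective D := by
    rw [← LinearMap.ker_eq_bot, LinearMap.ker_eq_bot']
    intro v hv
    have h0 : ∀ i, ⟪v, b i⟫ = 0 := fun i => by rw [← hD, hv]; simp
    exact basis_ortho b v h0
  let De : V44 ≃ₗ[ℝ] (Fin 44 → ℝ) := LinearEquiv.ofInjectiveOfFinrankEq D hDi (by simp)
  have hDe : ∀ v i, De v i = ⟪v, b i⟫ := fun v i => by rw [← hD]; rfl
  have hd : ∀ k u, ⟪De.symm k, b.equivFun.symm u⟫ = ∑ i, k i * u i := by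
    intro k u
    rw [Module.Basis.equivFun_symm_apply, inner_sum]
    refine Finset.sum_congr rfl fun i _ => ?_
    rw [inner_smul_right, ← hDe]; simp [mul_comm]
  refine ⟨b.equivFun.symm.toContinuousLinearEquiv, De.symm.toContinuousLinearEquiv, hd, hm, ?_⟩
  intro v
  constructor
  · intro hv
    choose m hm' using fun i => (mem_L huni).mp hv (b i) (hbL i)
    refine ⟨m, ?_⟩
    change De.symm (zc m) = v
    rw [LinearEquiv.symm_apply_eq]
    ext i
    rw [hDe, hm']; rfl
  · rintro ⟨k, rfl⟩
    refine (mem_L huni).mpr fun y hy => ?_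
    obtain ⟨m, rfl⟩ := (hm y).mp hy
    refine ⟨∑ i, k i * m i, ?_⟩
    refine (hd _ _).trans ?_
    simp [zc]

lemma norm_int (huni : IsUnimodularLattice L) {x : V44} (hx : x ∈ L) : ∃ m : ℤ, ⟪x, x⟫ = (m : ℝ) :=
  (mem_L huni).mp hx x hx

/-- a characteristic vector (halved) -/
theorem exists_char (huni : IsUnimodularLattice L) (hmin : HasMinNorm L 4) :
    ∃ s : V44, ∀ x ∈ L, ∃ j : ℤ, ⟪x, x⟫ = 2 * ⟪x, s⟫ + 2 * (j : ℝ) := by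
  obtain ⟨Φ, Ψ, hd, hΦ, hΨ⟩ := lat_bases huni hmin
  let e : Fin 44 → V44 := fun i => Φ (Pi.single i 1)
  have heL : ∀ i, e i ∈ L := fun i => (hΦ _).mpr ⟨Pi.single i 1, by
    congr 1; ext j; simp [zc, Pi.single_apply]⟩
  let s := Ψ fun i => ⟪e i, e i⟫ / 2
  have hs : ∀ i, 2 * ⟪e i, s⟫ = ⟪e i, e i⟫ := by
    intro i
    rw [real_inner_comm, hd]
    simp [Pi.single_apply]
    ring
  refine ⟨s, fun x hx => ?_⟩
  have hsp : x ∈ Submodule.span ℤ (Set.range e) := by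
    obtain ⟨m, rfl⟩ := (hΦ x).mp hx
    have : Φ (zc m) = ∑ i, m i • e i := by
      have : zc m = ∑ i, m i • (Pi.single i (1 : ℝ) : Fin 44 → ℝ) := by
        ext j; simp [zc, Pi.single_apply]
      rw [this, map_sum]
      refine Finset.sum_congr rfl fun i _ => ?_
      rw [map_zsmul]
    rw [this]
    exact Submodule.sum_mem _ fun i _ => Submodule.smul_mem _ _ (Submodule.subset_span ⟨i, rfl⟩)
  have hle : Submodule.span ℤ (Set.range e) ≤ lat huni := by
    rw [Submodule.span_le]; rintro _ ⟨i, rfl⟩; exact heL i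
  clear hx
  induction hsp using Submodule.span_induction with
  | mem x h =>
    obtain ⟨i, rfl⟩ := h
    exact ⟨0, by rw [hs]; simp⟩
  | zero => exact ⟨0, by simp⟩
  | add x y hx hy h1 h2 =>
    obtain ⟨j, hj⟩ := h1
    obtain ⟨k, hk⟩ := h2
    obtain ⟨m, hm⟩ := (mem_L huni).mp (hle hx) y (hle hy)
    refine ⟨j + k + m, ?_⟩
    rw [real_inner_add_add_self, inner_add_left, hj, hk, hm]
    push_cast; ring
  | smul c x hx h1 =>
    obtain ⟨j, hj⟩ := h1
    obtain ⟨m, hm⟩ := norm_int huni (hle hx)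
    obtain ⟨r, hr⟩ : Even (c * (c - 1)) := Int.even_mul_pred_self c
    have hr' : (c : ℝ) * (c - 1) = r + r := by exact_mod_cast hr
    refine ⟨r * m + c * j, ?_⟩
    rw [← Int.cast_smul_eq_zsmul ℝ, inner_smul_left, inner_smul_right, inner_smul_left]
    simp only [conj_trivial]
    push_cast
    rw [← hm]
    linear_combination ⟪x, x⟫ * hr' + c * hj

theorem shadow_iff (huni : IsUnimodularLattice L) (hodd : IsOddLattice L) {s : V44}
    (hs : ∀ x ∈ L, ∃ j : ℤ, ⟪x, x⟫ = 2 * ⟪x, s⟫ + 2 * (j : ℝ)) (v : V44) :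
    v ∈ shadow L ↔ v - s ∈ L := by
  obtain ⟨x₀, hx₀, m₀, ⟨r₀, rfl⟩, hm₀⟩ := hodd
  have hm₀ : ⟪x₀, x₀⟫ = ((2 * r₀ + 1 : ℤ) : ℝ) := hm₀
  constructor
  · rintro ⟨h1, h2⟩
    have h1 : ∀ y ∈ L, (∃ m : ℤ, ⟪y, y⟫ = 2 * (m : ℝ)) → ∃ m : ℤ, ⟪v, y⟫ = (m : ℝ) :=
      fun y hy hm => h1 y ⟨hy, hm⟩
    -- odd vectors
    have h3 : ∀ y ∈ L, (∃ m : ℤ, ⟪y, y⟫ = 2 * (m : ℝ) + 1) → ∃ m : ℤ, ⟪v, y⟫ = ⟪v, x₀⟫ + (m : ℝ) := by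
      rintro y hy ⟨m, hm⟩
      obtain ⟨k, hk⟩ := (mem_L huni).mp hy x₀ hx₀
      have hsub : y - x₀ ∈ lat huni := sub_mem (show y ∈ lat huni from hy) hx₀
      obtain ⟨t, ht⟩ := h1 (y - x₀) hsub ⟨m + r₀ + 1 - k, by
        rw [real_inner_sub_sub_self, hm, hk, hm₀]; push_cast; ring⟩
      exact ⟨t, by rw [← ht, inner_sub_right]; ring⟩
    have h4 : ∃ t : ℤ, 2 * ⟪v, x₀⟫ = (t : ℝ) := by
      have hsub : x₀ + x₀ ∈ lat huni := add_mem (show x₀ ∈ lat huni from hx₀) hx₀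
      obtain ⟨t, ht⟩ := h1 (x₀ + x₀) hsub ⟨2 * (2 * r₀ + 1), by
        rw [real_inner_add_add_self, hm₀]; push_cast; ring⟩
      exact ⟨t, by rw [← ht, inner_add_right]; ring⟩
    obtain ⟨t, ht⟩ := h4
    have par : ∀ y ∈ L, (∃ m : ℤ, ⟪y, y⟫ = 2 * (m : ℝ)) ∨ (∃ m : ℤ, ⟪y, y⟫ = 2 * (m : ℝ) + 1) := by
      intro y hy
      obtain ⟨m, hm⟩ := norm_int huni hy
      rcases Int.even_or_odd' m with ⟨k, rfl | rfl⟩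
      · left; exact ⟨k, by rw [hm]; push_cast; ring⟩
      · right; exact ⟨k, by rw [hm]; push_cast; ring⟩
    have h5 : ∃ u : ℤ, ⟪v, x₀⟫ = (u : ℝ) + 1 / 2 := by
      rcases Int.even_or_odd' t with ⟨k, rfl | rfl⟩
      · exfalso
        refine h2 ((mem_L huni).mpr fun y hy => ?_)
        rcases par y hy with h | h
        · exact h1 y hy h
        · obtain ⟨m, hm⟩ := h3 y hy h
          refine ⟨k + m, ?_⟩
          rw [hm]; push_cast at ht ⊢; linarith
      · refine ⟨k, ?_⟩
        push_cast at ht; linarith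
    obtain ⟨u, hu⟩ := h5
    refine (mem_L huni).mpr fun y hy => ?_
    obtain ⟨j, hj⟩ := hs y hy
    rw [real_inner_comm s y] at hj
    rcases par y hy with h | h
    · obtain ⟨a, ha⟩ := h1 y hy h
      obtain ⟨m, hm⟩ := h
      refine ⟨a - m + j, ?_⟩
      rw [inner_sub_left, ha]; push_cast; linarith
    · obtain ⟨a, ha⟩ := h3 y hy h
      obtain ⟨m, hm⟩ := h
      refine ⟨u + a - m + j, ?_⟩
      rw [inner_sub_left, ha, hu]; push_cast; linarith
  · intro h
    refine ⟨?_, fun hv => ?_⟩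
    · rintro y ⟨hy, m, hm⟩
      have hm : ⟪y, y⟫ = 2 * (m : ℝ) := hm
      obtain ⟨j, hj⟩ := hs y hy
      obtain ⟨k, hk⟩ := (mem_L huni).mp h y hy
      rw [real_inner_comm s y] at hj
      rw [inner_sub_left] at hk
      exact ⟨k + m - j, by push_cast; linarith⟩
    · have hsL : v - (v - s) ∈ lat huni := sub_mem (show v ∈ lat huni from hv) h
      rw [sub_sub_cancel] at hsL
      obtain ⟨k, hk⟩ := (mem_L huni).mp hsL x₀ hx₀
      obtain ⟨j, hj⟩ := hs x₀ hx₀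
      rw [real_inner_comm s x₀, hm₀, hk] at hj
      have : 2 * r₀ + 1 = 2 * k + 2 * j := by exact_mod_cast hj
      omega

lemma shadow_norm (huni : IsUnimodularLattice L) (hodd : IsOddLattice L) {v : V44}
    (hv : v ∈ shadow L) : ∃ M : ℤ, 4 * ‖v‖ ^ 2 = (M : ℝ) := by
  have h2 : v + v ∈ L := by
    refine (mem_L huni).mpr fun y hy => ?_
    obtain ⟨m, hm⟩ := norm_int huni hy
    have hsub : y + y ∈ lat huni := add_mem (show y ∈ lat huni from hy) hy
    obtain ⟨t, ht⟩ := hv.1 (y + y) ⟨hsub, 2 * m, by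
      rw [normOf, real_inner_add_add_self, hm]; push_cast; ring⟩
    refine ⟨t, ?_⟩
    rw [← ht, inner_add_left, inner_add_right]
  obtain ⟨M, hM⟩ := norm_int huni h2
  refine ⟨M, ?_⟩
  rw [← hM, real_inner_add_add_self, real_inner_self_eq_norm_sq]; ring
end LatSec
end Th44
end

open scoped RealInnerProductSpace
noncomputable section
namespace Th44
section FinSec
set_option linter.unusedSectionVars false
set_option linter.unusedVariables false
open Function UpperHalfPlane ModularGroup Complex
open scoped Real MatrixGroups

variable {L : Set V44}

lemma zc_inj {d : Type*} : Injective (zc : (d → ℤ) → d → ℝ) := fun a b h => by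
  ext i
  have := congrFun h i
  simpa [zc] using this

def latEquiv (Φ : (Fin 44 → ℝ) ≃L[ℝ] V44) (h : ∀ v, v ∈ L ↔ ∃ m, Φ (zc m) = v) :
    (Fin 44 → ℤ) ≃ L :=
  Equiv.ofBijective (fun m => ⟨Φ (zc m), (h _).mpr ⟨m, rfl⟩⟩) ⟨fun a b hab =>
    zc_inj (Φ.injective (Subtype.ext_iff.mp hab)), fun v => by
      obtain ⟨m, hm⟩ := (h v).mp v.2
      exact ⟨m, Subtype.ext hm⟩⟩

lemma cpow44 (τ : ℍ) : (-Complex.I * τ) ^ (((44 : ℕ) : ℂ) / 2) = -(τ : ℂ) ^ 22 := by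
  have : (((44 : ℕ) : ℂ) / 2) = ((22 : ℕ) : ℂ) := by norm_num
  rw [this, cpow_natCast, mul_pow, neg_pow]
  have : Complex.I ^ 22 = -1 := by
    rw [show 22 = 2 * 11 from rfl, pow_mul, I_sq]; norm_num
  rw [this]; norm_num

lemma S_I : (S • UpperHalfPlane.I : ℍ) = UpperHalfPlane.I := by
  ext1
  rw [coe_S]
  simp

theorem theta_trans (huni : IsUnimodularLattice L) (hmin : HasMinNorm L 4) :
    (∀ (τ : ℍ) (s : V44), Summable fun x : L => gs τ (s + x)) ∧
    ∀ (τ : ℍ) (s : V44), ∑' x : L, gs (S • τ) (s + x) =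
      -(τ : ℂ) ^ 22 * ∑' x : L, gs τ (x : V44) * cexp (2 * π * Complex.I * ⟪(x : V44), s⟫) := by
  obtain ⟨Φ, Ψ, hd, hΦ, hΨ⟩ := lat_bases huni hmin
  have hsum : ∀ (τ : ℍ) (s : V44), Summable fun x : L => gs τ (s + x) := fun τ s =>
    (latEquiv Φ hΦ).summable_iff.mp (gs_summable Φ τ s)
  refine ⟨hsum, ?_⟩
  obtain ⟨c, hc⟩ := gauss_poisson Φ Ψ hd
  have key : ∀ (τ : ℍ) (s : V44), ∑' x : L, gs (S • τ) (s + x) =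
      c * (-(τ : ℂ) ^ 22) *
        ∑' x : L, gs τ (x : V44) * cexp (2 * π * Complex.I * ⟪(x : V44), s⟫) := by
    intro τ s
    have := hc τ s
    rw [cpow44] at this
    rw [← (latEquiv Φ hΦ).tsum_eq, ← (latEquiv Ψ hΨ).tsum_eq]
    exact this
  have hc1 : c = 1 := by
    have h := key UpperHalfPlane.I 0
    rw [S_I] at h
    simp only [zero_add, inner_zero_right, ofReal_zero, mul_zero, Complex.exp_zero, mul_one] at h
    have hI : -((UpperHalfPlane.I : ℍ) : ℂ) ^ 22 = 1 := by
      rw [UpperHalfPlane.coe_I, show 22 = 2 * 11 from rfl, pow_mul, I_sq]; norm_num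
    rw [hI, mul_one] at h
    have hg : ∀ x : L, gs UpperHalfPlane.I (x : V44) = ((Real.exp (-π * ‖(x : V44)‖ ^ 2) : ℝ) : ℂ) := by
      intro x
      rw [gs, UpperHalfPlane.coe_I]
      push_cast
      congr 1
      linear_combination (π * ‖(x : V44)‖ ^ 2 : ℂ) * I_mul_I
    have hs0 := hsum UpperHalfPlane.I 0
    simp only [zero_add, hg] at hs0 h
    have hs1 : Summable fun x : L => Real.exp (-π * ‖(x : V44)‖ ^ 2) := by exact_mod_cast hs0
    have hpos : 0 < ∑' x : L, Real.exp (-π * ‖(x : V44)‖ ^ 2) :=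
      hs1.tsum_pos (fun x => (Real.exp_pos _).le) ⟨0, (lat huni).zero_mem⟩ (Real.exp_pos _)
    rw [← Complex.ofReal_tsum] at h
    have hne : ((∑' x : L, Real.exp (-π * ‖(x : V44)‖ ^ 2) : ℝ) : ℂ) ≠ 0 :=
      ofReal_ne_zero.mpr hpos.ne'
    exact (mul_right_cancel₀ hne (by rw [one_mul]; exact h)).symm
  intro τ s
  rw [key, hc1, one_mul]

def wt (v : V44) : ℂ := cexp (π * Complex.I * ‖v‖ ^ 2)

lemma gs_T (τ : ℍ) (v : V44) : gs (T • τ) v = gs τ v * wt v := by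
  rw [gs, gs, wt, coe_T, ← Complex.exp_add]
  congr 1; ring

lemma gs_q (τ : ℍ) (v : V44) (k : ℕ) (h : ‖v‖ ^ 2 = k) : gs τ v = Periodic.qParam 2 τ ^ k := by
  have h' : (‖v‖ : ℂ) ^ 2 = k := by exact_mod_cast congrArg (fun r : ℝ => (r : ℂ)) h
  rw [gs, h', Periodic.qParam, ← Complex.exp_nat_mul]
  congr 1
  push_cast; ring

lemma rep_set (M : Set V44) (hM : ∀ v ∈ M, ∃ k : ℕ, ‖v‖ ^ 2 = k) (f : ℍ → ℂ)
    (h : ∀ τ, HasSum (fun v : M => gs τ (v : V44)) (f τ)) :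
    Rep f (PowerSeries.mk fun n => (numVecsOfNorm M n : ℂ)) := by
  choose k hk using fun v : M => hM v v.2
  obtain ⟨-, h2⟩ := rep_count (f := f) k (fun τ => by
    refine (h τ).congr_fun ?_
    intro v
    exact (gs_q τ v _ (hk v)).symm)
  convert h2 using 4 with n
  rw [numVecsOfNorm, ← Nat.card_coe_set_eq]
  refine Nat.card_congr ⟨fun x => ⟨⟨x.1, x.2.1⟩, ?_⟩, fun i => ⟨i.1, i.1.2, ?_⟩, fun _ => rfl, fun _ => rfl⟩
  · have := x.2.2
    rw [normOf, real_inner_self_eq_norm_sq, hk ⟨x.1, x.2.1⟩] at this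
    exact_mod_cast this
  · rw [normOf, real_inner_self_eq_norm_sq, hk i.1, i.2]

lemma C_anti {A C : ℍ → ℂ} (ATT : ∀ τ, A (T • T • τ) = A τ)
    (AS : ∀ τ : ℍ, A (S • τ) = -(τ : ℂ) ^ 22 * A τ)
    (CS : ∀ τ : ℍ, C (S • τ) = -(τ : ℂ) ^ 22 * A (T • τ)) (τ : ℍ) : C (T • τ) = - C τ := by
  have h1 := CS (S • T • τ)
  rw [S_S] at h1
  have h2 := AS (S • T • S • T • τ)
  rw [S_S, ← ATT (S • T • S • T • τ)] at h2
  have hτ : (τ : ℂ) ≠ 0 := τ.ne_zero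
  have hτ1 : (τ : ℂ) + 1 ≠ 0 := by
    have := (T • τ).ne_zero
    rwa [coe_T] at this
  have hτ2 : -1 / ((τ : ℂ) + 1) + 1 = τ / (τ + 1) := by field_simp; ring
  have h3 : T • T • S • T • S • T • τ = T • S • τ := by
    ext1
    simp only [coe_T, coe_S]
    rw [hτ2]
    field_simp; ring
  have h4 := CS (S • τ)
  rw [S_S] at h4
  rw [h1, h2, h3, h4]
  simp only [coe_T, coe_S]
  rw [hτ2]
  field_simp

end FinSec
end Th44
end

open scoped RealInnerProductSpace
noncomputable section
namespace Th44
section MainSec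
set_option linter.unusedSectionVars false
set_option linter.unusedVariables false
open Function UpperHalfPlane ModularGroup Complex
open scoped Real MatrixGroups

variable {L : Set V44}

lemma geom8 (w : ℂ) (hw : w ^ 8 = 1) :
    1 - w + w ^ 2 - w ^ 3 + w ^ 4 - w ^ 5 + w ^ 6 - w ^ 7 = if w = -1 then 8 else 0 := by
  split_ifs with h
  · rw [h]; norm_num
  · have h1 : w + 1 ≠ 0 := fun h' => h (by linear_combination h')
    refine mul_left_cancel₀ h1 ?_
    linear_combination -hw

lemma wt_odd {v : V44} (h : wt v = -1) : ∃ k : ℕ, ‖v‖ ^ 2 = (2 * k + 1 : ℕ) := by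
  rw [wt, ← exp_pi_mul_I, Complex.exp_eq_exp_iff_exists_int] at h
  obtain ⟨n, hn⟩ := h
  have h1 : (‖v‖ : ℂ) ^ 2 = 1 + 2 * n := by
    have : (π * Complex.I : ℂ) ≠ 0 := mul_ne_zero (ofReal_ne_zero.mpr Real.pi_ne_zero) I_ne_zero
    refine mul_left_cancel₀ this ?_
    linear_combination hn
  have h2 : ‖v‖ ^ 2 = 1 + 2 * (n : ℝ) := by exact_mod_cast h1
  have h3 : 0 ≤ n := by
    have : (0 : ℝ) ≤ 1 + 2 * n := h2 ▸ sq_nonneg _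
    have : (0 : ℤ) ≤ 1 + 2 * n := by exact_mod_cast this
    omega
  lift n to ℕ using h3
  exact ⟨n, by rw [h2]; push_cast; ring⟩

lemma odd_wt {v : V44} (k : ℕ) (h : ‖v‖ ^ 2 = (2 * k + 1 : ℕ)) : wt v = -1 := by
  have h' : (‖v‖ : ℂ) ^ 2 = 2 * k + 1 := by exact_mod_cast congrArg (fun r : ℝ => (r : ℂ)) h
  rw [wt, h', ← exp_pi_mul_I, Complex.exp_eq_exp_iff_exists_int]
  exact ⟨k, by push_cast; ring⟩

/-- projection onto odd norms -/
lemma rep_odd (M : Set V44) (hM : ∀ v ∈ M, wt v ^ 8 = 1) (C : ℍ → ℂ)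
    (hC : ∀ τ, HasSum (fun v : M => gs τ (v : V44)) (C τ)) (CT : ∀ τ, C (T • τ) = - C τ) :
    ∃ ψ, Rep C ψ ∧ Co ψ 0 (numVecsOfNorm M 1) 0 (numVecsOfNorm M 3) 0 (numVecsOfNorm M 5) 0 := by
  have hF : ∀ τ, HasSum (M.indicator fun v => gs τ v) (C τ) := fun τ =>
    hasSum_subtype_iff_indicator.mp (hC τ)
  have hj : ∀ (j : ℕ) τ, HasSum (M.indicator fun v => gs τ v * wt v ^ j) ((-1) ^ j * C τ) := by
    intro j
    induction j with
    | zero => intro τ; simpa using hF τ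
    | succ j ih =>
      intro τ
      have := ih (T • τ)
      rw [CT] at this
      convert this using 1
      · ext v
        by_cases hv : v ∈ M
        · simp only [Set.indicator_of_mem hv, gs_T]; ring
        · simp only [Set.indicator_of_notMem hv]
      · ring
  have hO : ∀ τ, HasSum (fun v : {v | v ∈ M ∧ wt v = -1} => gs τ (v : V44)) (C τ) := by
    intro τ
    refine (hasSum_subtype_iff_indicator (f := fun v : V44 => gs τ v)).mpr ?_
    have h8 := ((((((((hj 0 τ).sub (hj 1 τ)).add (hj 2 τ)).sub (hj 3 τ)).add (hj 4 τ)).sub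
      (hj 5 τ)).add (hj 6 τ)).sub (hj 7 τ)).mul_left (1 / 8)
    refine (congrArg₂ (fun (F : V44 → ℂ) (a : ℂ) => HasSum F a) (funext fun v => ?_) ?_).mpr h8
    · by_cases hv : v ∈ M
      · have g := geom8 _ (hM v hv)
        simp only [Set.indicator_of_mem hv]
        split_ifs at g with hw
        · rw [Set.indicator_of_mem (show v ∈ {v | v ∈ M ∧ wt v = -1} from ⟨hv, hw⟩)]
          linear_combination (-1 / 8) * gs τ v * g
        · rw [Set.indicator_of_notMem (fun h => hw h.2)]
          linear_combination (-1 / 8) * gs τ v * g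
      · simp only [Set.indicator_of_notMem hv]
        rw [Set.indicator_of_notMem (fun h => hv h.1)]
        norm_num
    · ring
  refine ⟨_, rep_set _ (fun v hv => ?_) C hO, ?_⟩
  · obtain ⟨k, hk⟩ := wt_odd hv.2
    exact ⟨_, hk⟩
  have ev : ∀ n : ℕ, Even n → numVecsOfNorm {v | v ∈ M ∧ wt v = -1} n = 0 := by
    intro n hn
    refine (congrArg Set.ncard (Set.eq_empty_iff_forall_notMem.mpr ?_)).trans (Set.ncard_empty _)
    rintro v ⟨hv, hv2⟩
    obtain ⟨k, hk⟩ := wt_odd hv.2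
    rw [normOf, real_inner_self_eq_norm_sq, hk] at hv2
    have : 2 * k + 1 = n := by exact_mod_cast hv2
    obtain ⟨r, hr⟩ := hn
    omega
  have od : ∀ n : ℕ, Odd n → numVecsOfNorm {v | v ∈ M ∧ wt v = -1} n = numVecsOfNorm M n := by
    rintro n ⟨k, rfl⟩
    rw [numVecsOfNorm, numVecsOfNorm]
    congr 1
    ext v
    constructor
    · rintro ⟨h1, h2⟩
      exact ⟨h1.1, h2⟩
    · rintro ⟨h1, h2⟩
      refine ⟨⟨h1, odd_wt k ?_⟩, h2⟩
      rwa [normOf, real_inner_self_eq_norm_sq] at h2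
  have e0 := ev 0 (by decide)
  have e2 := ev 2 (by decide)
  have e4 := ev 4 (by decide)
  have e6 := ev 6 (by decide)
  have o1 := od 1 (by decide)
  have o3 := od 3 (by decide)
  have o5 := od 5 (by decide)
  push_cast at e0 e2 e4 e6 o1 o3 o5
  constructor <;> simp [e0, e2, e4, e6, o1, o3, o5]

theorem main_rel (huni : IsUnimodularLattice L) (hodd : IsOddLattice L) (hmin : HasMinNorm L 4) :
    (2 * (numVecsOfNorm L 4 : ℂ) - 32 * (numVecsOfNorm (shadow L) 3 : ℂ)
      - 2432 * (numVecsOfNorm (shadow L) 1 : ℂ) - 13200 = 0) ∧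
    (256 * (numVecsOfNorm L 4 : ℂ) + 32 * (numVecsOfNorm L 5 : ℂ)
      + 2097152 * (numVecsOfNorm (shadow L) 1 : ℂ) - 27641856 = 0) := by
  obtain ⟨hs, ht⟩ := theta_trans huni hmin
  obtain ⟨s, hch⟩ := exists_char huni hmin
  have hsh := shadow_iff huni hodd hch
  let A : ℍ → ℂ := fun τ => ∑' x : L, gs τ (x : V44)
  let C : ℍ → ℂ := fun τ => ∑' x : L, gs τ (s + (x : V44))
  have hA : ∀ τ, HasSum (fun x : L => gs τ (x : V44)) (A τ) := fun τ => by
    have := hs τ 0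
    simp only [zero_add] at this
    exact this.hasSum
  have hC0 : ∀ τ, HasSum (fun x : L => gs τ (s + (x : V44))) (C τ) := fun τ => (hs τ s).hasSum
  let e : L ≃ shadow L :=
    { toFun := fun x => ⟨s + x, (hsh _).mpr (by rw [add_sub_cancel_left]; exact x.2)⟩
      invFun := fun v => ⟨v - s, (hsh _).mp v.2⟩
      left_inv := fun x => Subtype.ext (add_sub_cancel_left _ _)
      right_inv := fun v => Subtype.ext (add_sub_cancel _ _) }
  have hC : ∀ τ, HasSum (fun v : shadow L => gs τ (v : V44)) (C τ) := fun τ =>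
    e.hasSum_iff.mp (hC0 τ)
  have hwt : ∀ x : L, wt (x : V44) = cexp (2 * π * Complex.I * ⟪(x : V44), s⟫) := by
    intro x
    obtain ⟨j, hj⟩ := hch x x.2
    rw [real_inner_self_eq_norm_sq] at hj
    have hj' : (‖(x : V44)‖ : ℂ) ^ 2 = 2 * (⟪(x : V44), s⟫ : ℝ) + 2 * j := by
      exact_mod_cast congrArg (fun r : ℝ => (r : ℂ)) hj
    rw [wt, hj', Complex.exp_eq_exp_iff_exists_int]
    exact ⟨j, by ring⟩
  have hnat : ∀ v ∈ L, ∃ k : ℕ, ‖v‖ ^ 2 = k := by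
    intro v hv
    obtain ⟨m, hm⟩ := norm_int huni hv
    rw [real_inner_self_eq_norm_sq] at hm
    have h0 : 0 ≤ m := by
      have : (0 : ℝ) ≤ m := hm ▸ sq_nonneg _
      exact_mod_cast this
    lift m to ℕ using h0
    exact ⟨m, by rw [hm]; simp⟩
  have hw2 : ∀ x : L, wt (x : V44) * wt (x : V44) = 1 := by
    intro x
    obtain ⟨k, hk⟩ := hnat x x.2
    have h' : (‖(x : V44)‖ : ℂ) ^ 2 = k := by
      exact_mod_cast congrArg (fun r : ℝ => (r : ℂ)) hk
    rw [wt, h', ← Complex.exp_add, Complex.exp_eq_one_iff]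
    exact ⟨k, by push_cast; ring⟩
  have ATT : ∀ τ, A (T • T • τ) = A τ := by
    intro τ
    refine tsum_congr fun x => ?_
    rw [gs_T, gs_T, mul_assoc, hw2, mul_one]
  have AS : ∀ τ : ℍ, A (S • τ) = -(τ : ℂ) ^ 22 * A τ := by
    intro τ
    have := ht τ 0
    simpa using this
  have CS : ∀ τ : ℍ, C (S • τ) = -(τ : ℂ) ^ 22 * A (T • τ) := by
    intro τ
    refine (ht τ s).trans ?_
    congr 1
    refine tsum_congr fun x => ?_
    rw [gs_T, hwt]
  have CT := C_anti ATT AS CS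
  have h8 : ∀ v ∈ shadow L, wt v ^ 8 = 1 := by
    intro v hv
    obtain ⟨M, hM⟩ := shadow_norm huni hodd hv
    have h' : 4 * (‖v‖ : ℂ) ^ 2 = M := by
      exact_mod_cast congrArg (fun r : ℝ => (r : ℂ)) hM
    rw [wt, ← Complex.exp_nat_mul, Complex.exp_eq_one_iff]
    exact ⟨M, by push_cast; linear_combination 2 * π * Complex.I * h'⟩
  obtain ⟨ψ, hψ, cψ⟩ := rep_odd _ h8 C hC CT
  have hφ := rep_set L hnat A hA
  have z : ∀ n : ℕ, 0 < n → n < 4 → numVecsOfNorm L n = 0 := by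
    intro n h0 h4
    refine (congrArg Set.ncard (Set.eq_empty_iff_forall_notMem.mpr ?_)).trans (Set.ncard_empty _)
    rintro v ⟨hv, hv2⟩
    rw [normOf, real_inner_self_eq_norm_sq] at hv2
    have hv0 : v ≠ 0 := by
      rintro rfl
      rw [norm_zero] at hv2
      have : n = 0 := by
        have : (n : ℝ) = 0 := by rw [← hv2]; norm_num
        exact_mod_cast this
      omega
    have := min4 hmin hv hv0
    rw [hv2] at this
    have : 4 ≤ n := by exact_mod_cast this
    omega
  have z0 : numVecsOfNorm L 0 = 1 := by
    rw [numVecsOfNorm, Set.ncard_eq_one]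
    refine ⟨0, ?_⟩
    ext v
    simp only [Set.mem_ofPred_eq, Set.mem_singleton_iff, normOf, inner_self_eq_zero]
    constructor
    · exact fun h => h.2
    · rintro rfl
      exact ⟨(lat huni).zero_mem, rfl⟩
  have z1 := z 1 (by norm_num) (by norm_num)
  have z2 := z 2 (by norm_num) (by norm_num)
  have z3 := z 3 (by norm_num) (by norm_num)
  push_cast at z1 z2 z3
  refine relations hφ hψ ATT CT AS CS (n6 := numVecsOfNorm L 6) ?_ cψ
  constructor <;> simp [z0, z1, z2, z3]

end MainSec
end Th44
end

theorem theta_series_dim44 {L : Set (EuclideanSpace ℝ (Fin 44))}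
    (huni : IsUnimodularLattice L) (hodd : IsOddLattice L) (hmin : HasMinNorm L 4) :
    ∃ α β : ℕ,
      (numVecsOfNorm L 4 : ℤ) = 6600 + 16 * (α : ℤ) ∧
      (numVecsOfNorm L 5 : ℤ) = 811008 - 128 * (α : ℤ) - 65536 * (β : ℤ) ∧
      numVecsOfNorm (shadow L) 1 = β ∧
      (numVecsOfNorm (shadow L) 3 : ℤ) = (α : ℤ) - 76 * (β : ℤ) := by
  obtain ⟨h1, h2⟩ := Th44.main_rel huni hodd hmin
  have h1' : 2 * (numVecsOfNorm L 4 : ℤ) - 32 * (numVecsOfNorm (shadow L) 3 : ℤ)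
      - 2432 * (numVecsOfNorm (shadow L) 1 : ℤ) - 13200 = 0 := by exact_mod_cast h1
  have h2' : 256 * (numVecsOfNorm L 4 : ℤ) + 32 * (numVecsOfNorm L 5 : ℤ)
      + 2097152 * (numVecsOfNorm (shadow L) 1 : ℤ) - 27641856 = 0 := by exact_mod_cast h2
  refine ⟨numVecsOfNorm (shadow L) 3 + 76 * numVecsOfNorm (shadow L) 1,
    numVecsOfNorm (shadow L) 1, ?_, ?_, rfl, ?_⟩
  · push_cast; omega
  · push_cast; omega
  · push_cast; omega
end
end
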